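/- For every integer k ≥ 1 and every d > 0 there exist constants ε₁ = ε₁(k) > 0 and C = C(k,d) such that the following holds. Let h : S² → S² be a rational map with |deg(h)| ≤ k, and suppose there is a nonempty finite collection of geodesic balls (B_{Rᵢ}(zᵢ))_{i∈J₁} and a further (possibly empty) collection (B_{Rᵢ}(zᵢ))_{i∈J₂}, with |J₁|+|J₂| ≤ k in total, such that: (a) E(h, S²∖⋃_{i∈J₁∪J₂} B_{Rᵢ}(zᵢ)) ≤ 2ε₁; (b) E(h, B_{2Rᵢ}(zᵢ)∖B_{Rᵢ}(zᵢ)) ≤ 2ε₁ for every i ∈ J₂; and (c) for every x ∈ ⋃_{i∈J₁} B_{4Rᵢ}(zᵢ) there exists j ∈ J₁ with x ∈ B_{d⁻¹R_j}(z_j) and E(h, B_{dR_j}(x)∖⋃_{i∈J₂} B_{Rᵢ}(zᵢ)) ≤ 2ε₁. Then the energy density of h satisfies |∇h|² ≤ C·∑_{i∈J₁∪J₂} ρ_{zᵢ,Rᵢ}² pointwise on S²∖⋃_{i∈J₂} B_{4Rᵢ}(zᵢ). -/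

import Mathlib

open MeasureTheory Metric Real Set Filter
open scoped RealInnerProductSpace

noncomputable section

abbrev E3 : Type := EuclideanSpace ℝ (Fin 3)

/-- The unit sphere `S² ⊂ ℝ³`. -/
def S2 : Set E3 := Metric.sphere (0 : E3) 1

/-- Surface measure on `S²`: 2-dimensional Hausdorff measure restricted to the sphere. -/
def sphVol : Measure E3 := (μH[2] : Measure E3).restrict S2

/-- The 0-homogeneous extension of a map defined on the sphere. -/
def homExt (u : E3 → E3) : E3 → E3 := fun y => u (‖y‖⁻¹ • y)

def e3 (i : Fin 3) : E3 := EuclideanSpace.single i (1 : ℝ)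

/-- Energy density `|∇u|²` of `u|_{S²}` at `x ∈ S²` (squared Hilbert-Schmidt norm of the
differential, computed via the 0-homogeneous extension). -/
def enDensity (u : E3 → E3) (x : E3) : ℝ :=
  ∑ i, ‖fderiv ℝ (homExt u) x (e3 i)‖ ^ 2

/-- Dirichlet energy `E(u,Ω) = (1/2)∫_Ω |∇u|²`. -/
def energyOn (u : E3 → E3) (Ω : Set E3) : ℝ :=
  (1 / 2) * ∫ x in Ω, enDensity u x ∂sphVol

def energy (u : E3 → E3) : ℝ := energyOn u S2

def det3 (a b c : E3) : ℝ :=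
  a 0 * (b 1 * c 2 - b 2 * c 1) - a 1 * (b 0 * c 2 - b 2 * c 0)
    + a 2 * (b 0 * c 1 - b 1 * c 0)

/-- The signed Jacobian of a sphere map. -/
def jacobian (u : E3 → E3) (x : E3) : ℝ :=
  (1 / 2) * ∑ i, ∑ j, det3 x (e3 i) (e3 j) *
      det3 (u x) (fderiv ℝ (homExt u) x (e3 i)) (fderiv ℝ (homExt u) x (e3 j))

/-- The (Brouwer) degree, `deg u = (1/4π) ∫ Jac(u)`. -/
def sphDeg (u : E3 → E3) : ℝ := (4 * π)⁻¹ * ∫ x, jacobian u x ∂sphVol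

/-- The energy defect `δ_u = E(u) - 4π|deg u|`. -/
def defect (u : E3 → E3) : ℝ := energy u - 4 * π * |sphDeg u|

def IsSphereMap (u : E3 → E3) : Prop :=
  ContDiff ℝ (⊤ : ℕ∞) u ∧ ∀ x ∈ S2, u x ∈ S2

/-- Laplace-Beltrami operator of the round sphere applied to `u`. -/
def sphLap (u : E3 → E3) (x : E3) : E3 :=
  ∑ i, fderiv ℝ (fun y => fderiv ℝ (homExt u) y (e3 i)) x (e3 i)

/-- Tension field `τ(u) = Δu + |∇u|² u`. -/
def tension (u : E3 → E3) (x : E3) : E3 :=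
  sphLap u x + enDensity u x • u x

/-- Harmonic (= rational, up to orientation) maps of the round sphere. -/
def IsHarmonicSphereMap (u : E3 → E3) : Prop :=
  IsSphereMap u ∧ ∀ x ∈ S2, tension u x = 0

/-- Geodesic distance on `S²`. -/
def gdist (x y : E3) : ℝ := Real.arccos ⟪x, y⟫

/-- Geodesic ball in `S²`. -/
def gBall (x : E3) (r : ℝ) : Set E3 := {y ∈ S2 | gdist x y < r}

/-- Oscillation of `u` over `U`. -/
def oscOn (u : E3 → E3) (U : Set E3) : ℝ := ⨆ x ∈ U, ⨆ y ∈ U, ‖u x - u y‖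

/-- The Möbius dilation of the sphere with centre `p` and dilation factor `μ`. -/
def mobius (p : E3) (μ : ℝ) (y : E3) : E3 :=
  ((1 + ⟪y, p⟫) + μ ^ 2 * (1 - ⟪y, p⟫))⁻¹ •
    (((1 + ⟪y, p⟫) - μ ^ 2 * (1 - ⟪y, p⟫)) • p + (2 * μ) • (y - ⟪y, p⟫ • p))

/-- The Möbius dilation `M_{p,r}` centred at `p` scaling `B_r(p)` to a hemisphere. -/
def mobiusDil (p : E3) (r : ℝ) : E3 → E3 := mobius p (Real.tan (r / 2))⁻¹

/-- `ρ_{p,r}² = (1/2)|∇M_{p,r}|²`, the conformal factor squared of `M_{p,r}`. -/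
def confSq (p : E3) (r : ℝ) (x : E3) : ℝ := (1 / 2) * enDensity (mobiusDil p r) x

/-- Möbius transformations (conformal diffeomorphisms) of the round sphere:
compositions of an isometry with a Möbius dilation. -/
def IsMobiusTransform (M : E3 → E3) : Prop :=
  ∃ (R : E3 ≃ₗᵢ[ℝ] E3) (p : E3) (μ : ℝ),
    p ∈ S2 ∧ 0 < μ ∧ ∀ x ∈ S2, M x = R (mobius p μ x)

/-- A set obtained from a geodesic ball by removing a finite collection of smaller balls. -/
def IsBallMinusBalls (Ω : Set E3) : Prop :=
  ∃ (c : E3) (R : ℝ) (m : ℕ) (cs : Fin m → E3) (rs : Fin m → ℝ),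
    c ∈ S2 ∧ 0 < R ∧ (∀ j, cs j ∈ S2 ∧ rs j < R) ∧
    Ω = gBall c R \ ⋃ j, gBall (cs j) (rs j)

/-- `ρ_{z,R}²` with the convention that `ρ_{z,R} ≡ 1` for `R ≥ π/2`. -/
def rhoSq (z : E3) (R : ℝ) (x : E3) : ℝ := if R < π / 2 then confSq z R x else 1

/-!
The Hopf differential of a harmonic sphere map, read in a stereographic chart, is an entire function
tending to zero at infinity. Hence the map is conformal, and read in stereographic charts on both
sides it is holomorphic or antiholomorphic on every connected open set that avoids the pole of the
target.

Let `K` be the sphere without all the balls or, for `x` near the first collection, the ball about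
`x` from (c) without the balls of the second collection. The energy of `h` on `K` is a small
fraction of the area of `S²`, so by the area inequality `h '' K` misses half of the sphere. For a
missed point `p`, the stereographic coordinate of `h` with pole `p`, multiplied by a cutoff `χ`
supported in `K`, is defined everywhere, and the Cauchy-Pompeiu formula bounds `|∇h|` at `x` by
the integral of `|∂̄χ(w)| / (|h(w) - p| |w|²)`. The pole is harmless on average, since
`∫ |u - p|⁻¹ dp` is bounded uniformly in `u`: averaging over `p` leaves the integral of
`|∂̄χ(w)| / |w|²`. Cutting off a ball `B_R(z)` contributes to it at most a multiple of `ρ_{z,R}(x)`,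
and cutting off the complement of the ball from (c) at most a multiple of `ρ_{z_j,R_j}(x)`.
-/

/-! ### Derivatives determined by distances -/

section NormedSpaces

variable {E F : Type*} [NormedAddCommGroup E] [NormedSpace ℝ E]
  [NormedAddCommGroup F] [NormedSpace ℝ F]

lemma norm_fderiv_apply_of_norm_sub_eq {f : E → F} {c : E → ℝ} {x : E}
    (hf : DifferentiableAt ℝ f x) (hc : ContinuousAt c x)
    (hfc : ∀ y, ‖f y - f x‖ = c y * ‖y - x‖) (v : E) :
    ‖fderiv ℝ f x v‖ = c x * ‖v‖ := by
  have hslope := (hf.hasFDerivAt.hasLineDerivAt v).tendsto_slope_zero.norm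
  have hline : Tendsto (fun t : ℝ => x + t • v) (nhds 0) (nhds x) :=
    Continuous.tendsto' (by fun_prop) _ _ (by simp)
  have hlim : Tendsto (fun t : ℝ => c (x + t • v) * ‖v‖) (nhdsWithin 0 {0}ᶜ)
      (nhds (c x * ‖v‖)) :=
    ((hc.tendsto.comp hline).mul_const _).mono_left nhdsWithin_le_nhds
  refine tendsto_nhds_unique (hslope.congr' ?_) hlim
  filter_upwards [self_mem_nhdsWithin] with t ht
  have : |t| ≠ 0 := abs_ne_zero.2 ht
  rw [norm_smul, hfc, add_sub_cancel_left, norm_smul, norm_inv, Real.norm_eq_abs]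
  field_simp

lemma inner_map_map_of_norm_map_eq {E F : Type*} [NormedAddCommGroup E] [InnerProductSpace ℝ E]
    [NormedAddCommGroup F] [InnerProductSpace ℝ F] {L : E →ₗ[ℝ] F} {c : ℝ}
    (hL : ∀ v, ‖L v‖ = c * ‖v‖) (u v : E) : ⟪L u, L v⟫ = c ^ 2 * ⟪u, v⟫ := by
  simp only [real_inner_eq_norm_add_mul_self_sub_norm_mul_self_sub_norm_mul_self_div_two,
    ← map_add, hL]
  ring

end NormedSpaces

/-! ### Stereographic coordinates -/

/-- Orthonormal frames of `ℝ³`. The last vector is the centre of a stereographic chart, the first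
two span its coordinate plane. -/
abbrev Frame : Type := OrthonormalBasis (Fin 3) ℝ E3

lemma mem_S2_iff {x : E3} : x ∈ S2 ↔ ‖x‖ = 1 := by simp [S2]

lemma isCompact_S2 : IsCompact S2 := isCompact_sphere _ _

lemma measurableSet_S2 : MeasurableSet S2 := isClosed_sphere.measurableSet

lemma norm_sub_sq_of_mem_S2 {x y : E3} (hx : x ∈ S2) (hy : y ∈ S2) :
    ‖x - y‖ ^ 2 = 2 - 2 * ⟪x, y⟫ := by
  rw [norm_sub_sq_real, mem_S2_iff.1 hx, mem_S2_iff.1 hy]; ring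

lemma norm_add_sq_of_mem_S2 {x y : E3} (hx : x ∈ S2) (hy : y ∈ S2) :
    ‖x + y‖ ^ 2 = 2 + 2 * ⟪x, y⟫ := by
  rw [norm_add_sq_real, mem_S2_iff.1 hx, mem_S2_iff.1 hy]; ring

namespace Frame

lemma exists_apply_two_eq {x : E3} (hx : x ∈ S2) : ∃ B : Frame, B 2 = x := by
  have hox : Orthonormal ℝ (({2} : Set (Fin 3)).domRestrict (fun _ : Fin 3 => x)) :=
    ⟨fun _ => mem_S2_iff.1 hx, fun i j hij => absurd (Subsingleton.elim i j) hij⟩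
  obtain ⟨B, hB⟩ := hox.exists_orthonormalBasis_extension_of_card_eq (by simp)
  exact ⟨B, hB 2 (mem_singleton 2)⟩

variable (B : Frame)

lemma mem_S2 (i : Fin 3) : B i ∈ S2 := mem_S2_iff.2 (B.norm_eq_one i)

lemma eq_sum_inner_smul (y : E3) :
    y = ⟪B 0, y⟫ • B 0 + ⟪B 1, y⟫ • B 1 + ⟪B 2, y⟫ • B 2 := by
  simpa only [Fin.sum_univ_three] using (B.sum_repr' y).symm

lemma inner_smul_add_smul_add_smul (a b c a' b' c' : ℝ) :
    ⟪a • B 0 + b • B 1 + c • B 2, a' • B 0 + b' • B 1 + c' • B 2⟫ = a * a' + b * b' + c * c' := by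
  simp [inner_add_left, inner_add_right, real_inner_smul_left, real_inner_smul_right,
    B.inner_eq_ite, mul_comm]

end Frame

/-- The inverse of stereographic projection from `-B 2`, sending `0` to `B 2`. -/
def invStereo (B : Frame) (w : ℂ) : E3 :=
  (1 + ‖w‖ ^ 2)⁻¹ • ((2 * w.re) • B 0 + (2 * w.im) • B 1 + (1 - ‖w‖ ^ 2) • B 2)

/-- The conformal factor of `invStereo`. -/
def stereoFactor (w : ℂ) : ℝ := 2 / (1 + ‖w‖ ^ 2)

lemma stereoFactor_pos (w : ℂ) : 0 < stereoFactor w := by unfold stereoFactor; positivity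

lemma stereoFactor_le_two (w : ℂ) : stereoFactor w ≤ 2 :=
  div_le_self zero_le_two (by simp)

@[simp] lemma stereoFactor_zero : stereoFactor 0 = 2 := by simp [stereoFactor]

lemma continuous_stereoFactor : Continuous stereoFactor :=
  continuous_const.div (by fun_prop) fun w => by positivity

section InvStereo

variable (B : Frame)

@[simp] lemma invStereo_zero : invStereo B 0 = B 2 := by simp [invStereo]

lemma inner_invStereo_invStereo (w v : ℂ) :
    ⟪invStereo B w, invStereo B v⟫ = (1 + ‖w‖ ^ 2)⁻¹ * (1 + ‖v‖ ^ 2)⁻¹ *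
      (4 * (w.re * v.re + w.im * v.im) + (1 - ‖w‖ ^ 2) * (1 - ‖v‖ ^ 2)) := by
  unfold invStereo
  rw [real_inner_smul_left, real_inner_smul_right, B.inner_smul_add_smul_add_smul]; ring

lemma invStereo_mem_S2 (w : ℂ) : invStereo B w ∈ S2 := by
  have hsq : ‖invStereo B w‖ ^ 2 = 1 := by
    rw [← real_inner_self_eq_norm_sq, inner_invStereo_invStereo]
    field_simp
    rw [Complex.sq_norm, Complex.normSq_apply]; ring
  exact mem_S2_iff.2 ((pow_eq_one_iff_of_nonneg (norm_nonneg _) two_ne_zero).1 hsq)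

lemma norm_invStereo (w : ℂ) : ‖invStereo B w‖ = 1 := mem_S2_iff.1 (invStereo_mem_S2 B w)

lemma norm_invStereo_sub_sq (w v : ℂ) :
    ‖invStereo B w - invStereo B v‖ ^ 2 = stereoFactor w * stereoFactor v * ‖w - v‖ ^ 2 := by
  rw [norm_sub_sq_of_mem_S2 (invStereo_mem_S2 B w) (invStereo_mem_S2 B v),
    inner_invStereo_invStereo, stereoFactor, stereoFactor]
  field_simp
  simp only [Complex.sq_norm, Complex.normSq_apply, Complex.sub_re, Complex.sub_im]; ring

lemma norm_invStereo_sub_apply_two_sq (w : ℂ) :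
    ‖invStereo B w - B 2‖ ^ 2 = 2 * stereoFactor w * ‖w‖ ^ 2 := by
  rw [← invStereo_zero B, norm_invStereo_sub_sq, stereoFactor_zero, sub_zero]; ring

lemma norm_invStereo_add_apply_two_sq (w : ℂ) :
    ‖invStereo B w + B 2‖ ^ 2 = 2 * stereoFactor w := by
  have hpar := parallelogram_law_with_norm ℝ (invStereo B w) (B 2)
  have hsub := norm_invStereo_sub_apply_two_sq B w
  have hfac : stereoFactor w * (1 + ‖w‖ ^ 2) = 2 := div_mul_cancel₀ _ (by positivity)
  rw [norm_invStereo, B.norm_eq_one] at hpar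
  linarith

/-- The stereographic chart inverse to `invStereo B`, with pole `-B 2` (where division by zero
makes it `0`). -/
def stereoProj (B : Frame) (y : E3) : ℂ :=
  ⟨⟪B 0, y⟫ / (1 + ⟪B 2, y⟫), ⟪B 1, y⟫ / (1 + ⟪B 2, y⟫)⟩

variable {B} in
lemma one_add_inner_apply_two_ne_zero {y : E3} (hy : y ∈ S2) (hne : y ≠ -B 2) :
    1 + ⟪B 2, y⟫ ≠ 0 := by
  have hsq := norm_add_sq_of_mem_S2 (B.mem_S2 2) hy
  have hpos : 0 < ‖B 2 + y‖ ^ 2 := by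
    have : B 2 + y ≠ 0 := fun h => hne (eq_neg_of_add_eq_zero_right h)
    positivity
  intro h
  linarith

lemma invStereo_stereoProj {y : E3} (hy : y ∈ S2) (hne : y ≠ -B 2) :
    invStereo B (stereoProj B y) = y := by
  have hc := one_add_inner_apply_two_ne_zero hy hne
  have hexp := B.eq_sum_inner_smul y
  unfold invStereo stereoProj
  set a := ⟪B 0, y⟫
  set b := ⟪B 1, y⟫
  set c := ⟪B 2, y⟫
  have hsq : a * a + b * b + c * c = 1 := by
    rw [← B.inner_smul_add_smul_add_smul, ← hexp, real_inner_self_eq_norm_sq, mem_S2_iff.1 hy,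
      one_pow]
  have hnorm : ‖(⟨a / (1 + c), b / (1 + c)⟩ : ℂ)‖ ^ 2 = (1 - c) / (1 + c) := by
    rw [Complex.sq_norm, Complex.normSq_mk]; field_simp; linarith
  have hplus : (1 : ℝ) + (1 - c) / (1 + c) = 2 / (1 + c) := by field_simp; ring
  have hminus : (1 : ℝ) - (1 - c) / (1 + c) = 2 * c / (1 + c) := by field_simp; ring
  rw [hnorm, hplus, hminus, hexp]
  simp only [smul_add, smul_smul]
  congr! 3 <;> field_simp

variable {B} in
lemma contDiffAt_stereoProj {y : E3} (hne : 1 + ⟪B 2, y⟫ ≠ 0) :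
    ContDiffAt ℝ (⊤ : ℕ∞) (stereoProj B) y := by
  have hinner : ∀ i, ContDiffAt ℝ (⊤ : ℕ∞) (fun y => ⟪B i, y⟫) y := fun i =>
    (innerSL ℝ (B i)).contDiff.contDiffAt
  have hden := contDiffAt_const (c := (1 : ℝ)) |>.add (hinner 2)
  exact Complex.equivRealProdCLM.symm.contDiff.contDiffAt.comp y
    (((hinner 0).div hden hne).prodMk ((hinner 1).div hden hne))

lemma contDiff_invStereo : ContDiff ℝ (⊤ : ℕ∞) (invStereo B) := by
  have hre : ContDiff ℝ (⊤ : ℕ∞) Complex.re := Complex.reCLM.contDiff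
  have him : ContDiff ℝ (⊤ : ℕ∞) Complex.im := Complex.imCLM.contDiff
  have hsq : ContDiff ℝ (⊤ : ℕ∞) fun w : ℂ => ‖w‖ ^ 2 := contDiff_norm_sq ℝ
  exact ((contDiff_const.add hsq).inv fun w => by positivity).fun_smul
    ((((contDiff_const.mul hre).fun_smul contDiff_const).add
      ((contDiff_const.mul him).fun_smul contDiff_const)).add
      ((contDiff_const.sub hsq).fun_smul contDiff_const))

lemma norm_fderiv_invStereo_apply (w v : ℂ) :
    ‖fderiv ℝ (invStereo B) w v‖ = stereoFactor w * ‖v‖ := by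
  have hchord : ∀ y, ‖invStereo B y - invStereo B w‖ =
      √(stereoFactor y * stereoFactor w) * ‖y - w‖ := fun y => by
    rw [← sqrt_sq (norm_nonneg (invStereo B y - invStereo B w)), norm_invStereo_sub_sq,
      sqrt_mul' _ (sq_nonneg _), sqrt_sq (norm_nonneg _)]
  have hcont : Continuous fun y => √(stereoFactor y * stereoFactor w) :=
    (continuous_stereoFactor.mul continuous_const).sqrt
  rw [norm_fderiv_apply_of_norm_sub_eq ((contDiff_invStereo B).differentiable (by simp) w)
    hcont.continuousAt hchord, sqrt_mul_self (stereoFactor_pos w).le]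

lemma inner_fderiv_invStereo_apply (w u v : ℂ) :
    ⟪fderiv ℝ (invStereo B) w u, fderiv ℝ (invStereo B) w v⟫ = stereoFactor w ^ 2 * ⟪u, v⟫ :=
  inner_map_map_of_norm_map_eq (L := (fderiv ℝ (invStereo B) w).toLinearMap)
    (norm_fderiv_invStereo_apply B w) u v

lemma lipschitzWith_invStereo : LipschitzWith 2 (invStereo B) := by
  refine LipschitzWith.of_dist_le_mul fun w v => ?_
  rw [dist_eq_norm, dist_eq_norm, NNReal.coe_ofNat]
  refine abs_le_of_sq_le_sq' ?_ (by positivity) |>.2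
  rw [norm_invStereo_sub_sq, mul_pow]
  have := mul_le_mul (stereoFactor_le_two w) (stereoFactor_le_two v) (stereoFactor_pos v).le
    zero_le_two
  gcongr
  linarith

end InvStereo

/-! ### The area of the sphere and of its caps -/

lemma hausdorffMeasure_two_le_two_mul_volume (s : Set ℂ) :
    (μH[2] : Measure ℂ) s ≤ 2 * volume s := by
  have hlip : LipschitzWith (NNReal.sqrt 2) Complex.equivRealProd.symm :=
    Complex.antilipschitz_equivRealProd.to_rightInverse Complex.equivRealProd.apply_symm_apply
  have hconst : ((NNReal.sqrt 2 : NNReal) : ENNReal) ^ (2 : ℝ) = 2 := by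
    rw [ENNReal.rpow_two, ← ENNReal.coe_pow, NNReal.sq_sqrt, ENNReal.coe_ofNat]
  have himage := hlip.hausdorffMeasure_image_le zero_le_two (Complex.equivRealProd '' s)
  rw [Equiv.symm_image_image, hconst, hausdorffMeasure_prod_real,
    Equiv.image_eq_preimage_symm] at himage
  exact himage.trans_eq (congrArg (2 * ·)
    (Complex.volume_preserving_equiv_real_prod.symm.measure_preimage_equiv s))

lemma hausdorffMeasure_image_invStereo_le (B : Frame) (s : Set ℂ) :
    (μH[2] : Measure E3) (invStereo B '' s) ≤ 8 * volume s :=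
  calc (μH[2] : Measure E3) (invStereo B '' s)
    _ ≤ ((2 : NNReal) : ENNReal) ^ (2 : ℝ) * μH[2] s :=
        (lipschitzWith_invStereo B).hausdorffMeasure_image_le zero_le_two s
    _ ≤ ((2 : NNReal) : ENNReal) ^ (2 : ℝ) * (2 * volume s) := by
        gcongr; exact hausdorffMeasure_two_le_two_mul_volume s
    _ = 8 * volume s := by
        rw [ENNReal.rpow_two, ENNReal.coe_ofNat, ← mul_assoc]; norm_num

lemma S2_inter_closedBall_subset (B : Frame) {r : ℝ} (hr0 : 0 ≤ r) (hr : r ^ 2 ≤ 2) :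
    S2 ∩ closedBall (B 2) r ⊆ invStereo B '' closedBall 0 r := by
  rintro y ⟨hy, hyr⟩
  rw [mem_closedBall, dist_eq_norm] at hyr
  have hyr2 : ‖y - B 2‖ ^ 2 ≤ r ^ 2 := by gcongr
  have hne : y ≠ -B 2 := by
    rintro rfl
    rw [← neg_add', norm_neg, ← two_smul ℝ, norm_smul, B.norm_eq_one] at hyr2
    norm_num at hyr2
    linarith
  obtain ⟨w, rfl⟩ : ∃ w, invStereo B w = y := ⟨_, invStereo_stereoProj B hy hne⟩
  refine ⟨w, ?_, rfl⟩
  rw [norm_invStereo_sub_apply_two_sq, stereoFactor] at hyr2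
  field_simp at hyr2
  rw [mem_closedBall_zero_iff]
  exact abs_le_of_sq_le_sq' (by nlinarith [sq_nonneg ‖w‖]) hr0 |>.2

lemma hausdorffMeasure_S2_inter_closedBall_le_of_sq_le_two {y : E3} (hy : y ∈ S2) {r : ℝ}
    (hr0 : 0 ≤ r) (hr : r ^ 2 ≤ 2) :
    (μH[2] : Measure E3) (S2 ∩ closedBall y r) ≤ ENNReal.ofReal (32 * r ^ 2) := by
  obtain ⟨B, rfl⟩ := Frame.exists_apply_two_eq hy
  calc (μH[2] : Measure E3) (S2 ∩ closedBall (B 2) r)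
    _ ≤ 8 * volume (closedBall (0 : ℂ) r) :=
        (measure_mono (S2_inter_closedBall_subset B hr0 hr)).trans
          (hausdorffMeasure_image_invStereo_le B _)
    _ = ENNReal.ofReal (8 * π * r ^ 2) := by
        rw [Complex.volume_closedBall, ← ENNReal.ofReal_pow hr0,
          show (NNReal.pi : ENNReal) = ENNReal.ofReal π from
            (ENNReal.ofReal_eq_coe_nnreal pi_pos.le).symm,
          ← ENNReal.ofReal_ofNat 8, ← ENNReal.ofReal_mul (by positivity),
          ← ENNReal.ofReal_mul (by positivity)]
        congr 1; ring
    _ ≤ ENNReal.ofReal (32 * r ^ 2) := by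
        gcongr; linarith [pi_le_four]

lemma hausdorffMeasure_S2_le : (μH[2] : Measure E3) S2 ≤ ENNReal.ofReal 128 := by
  have hz : e3 0 ∈ S2 := by simp [S2, e3]
  have hz' : -e3 0 ∈ S2 := by simpa [S2] using hz
  have hsq : √2 ^ 2 = (2 : ℝ) := sq_sqrt zero_le_two
  have hsub : S2 ⊆ (S2 ∩ closedBall (e3 0) √2) ∪ (S2 ∩ closedBall (-e3 0) √2) := by
    intro y hy
    rcases le_total 0 ⟪y, e3 0⟫ with h | h
    · refine Or.inl ⟨hy, ?_⟩
      rw [mem_closedBall, dist_eq_norm]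
      exact le_sqrt_of_sq_le (by rw [norm_sub_sq_of_mem_S2 hy hz]; linarith)
    · refine Or.inr ⟨hy, ?_⟩
      rw [mem_closedBall, dist_eq_norm, sub_neg_eq_add]
      exact le_sqrt_of_sq_le (by rw [norm_add_sq_of_mem_S2 hy hz]; linarith)
  calc (μH[2] : Measure E3) S2
    _ ≤ ENNReal.ofReal (32 * √2 ^ 2) + ENNReal.ofReal (32 * √2 ^ 2) := by
        refine (measure_mono hsub).trans ((measure_union_le _ _).trans (add_le_add ?_ ?_))
        · exact hausdorffMeasure_S2_inter_closedBall_le_of_sq_le_two hz (sqrt_nonneg 2) hsq.le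
        · exact hausdorffMeasure_S2_inter_closedBall_le_of_sq_le_two hz' (sqrt_nonneg 2) hsq.le
    _ = ENNReal.ofReal 128 := by
        rw [hsq, ← ENNReal.ofReal_add (by norm_num) (by norm_num)]; norm_num

lemma hausdorffMeasure_S2_ne_top : (μH[2] : Measure E3) S2 ≠ ⊤ :=
  (hausdorffMeasure_S2_le.trans_lt ENNReal.ofReal_lt_top).ne

lemma hausdorffMeasure_S2_inter_closedBall_le {y : E3} (hy : y ∈ S2) {r : ℝ} (hr : 0 ≤ r) :
    (μH[2] : Measure E3) (S2 ∩ closedBall y r) ≤ ENNReal.ofReal (64 * r ^ 2) := by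
  rcases le_total (r ^ 2) 2 with hr2 | hr2
  · exact (hausdorffMeasure_S2_inter_closedBall_le_of_sq_le_two hy hr hr2).trans
      (ENNReal.ofReal_le_ofReal (by nlinarith))
  · exact (measure_mono inter_subset_left).trans
      (hausdorffMeasure_S2_le.trans (ENNReal.ofReal_le_ofReal (by linarith)))

lemma one_le_hausdorffMeasure_S2 : 1 ≤ (μH[2] : Measure E3) S2 := by
  have hlip : LipschitzWith 1 fun y : E3 => (y 0, y 1) := by
    refine LipschitzWith.of_dist_le_mul fun y z => ?_
    rw [NNReal.coe_one, one_mul, Prod.dist_eq, dist_eq_norm y z]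
    exact max_le (PiLp.norm_apply_le (y - z) 0) (PiLp.norm_apply_le (y - z) 1)
  have hsub : Icc (-1 / 2 : ℝ) (1 / 2) ×ˢ Icc (-1 / 2 : ℝ) (1 / 2) ⊆
      (fun y : E3 => (y 0, y 1)) '' S2 := by
    rintro ⟨a, b⟩ ⟨⟨ha, ha'⟩, hb, hb'⟩
    have hnonneg : 0 ≤ 1 - a ^ 2 - b ^ 2 := by simp only at ha ha' hb hb'; nlinarith
    refine ⟨!₂[a, b, √(1 - a ^ 2 - b ^ 2)], mem_S2_iff.2 ?_, by simp⟩
    rw [EuclideanSpace.norm_eq, Fin.sum_univ_three]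
    simp [sq_sqrt hnonneg]
  calc (1 : ENNReal)
    _ = μH[2] (Icc (-1 / 2 : ℝ) (1 / 2) ×ˢ Icc (-1 / 2 : ℝ) (1 / 2)) := by
        rw [hausdorffMeasure_prod_real, Measure.volume_eq_prod, Measure.prod_prod, volume_Icc]
        norm_num
    _ ≤ μH[2] ((fun y : E3 => (y 0, y 1)) '' S2) := measure_mono hsub
    _ ≤ μH[2] S2 := by simpa using hlip.hausdorffMeasure_image_le zero_le_two S2

instance isFiniteMeasure_sphVol : IsFiniteMeasure sphVol :=
  ⟨by rw [sphVol, Measure.restrict_apply_univ]; exact hausdorffMeasure_S2_ne_top.lt_top⟩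

lemma sphVol_closedBall_le {y : E3} (hy : y ∈ S2) {r : ℝ} (hr : 0 ≤ r) :
    sphVol (closedBall y r) ≤ ENNReal.ofReal (64 * r ^ 2) := by
  rw [sphVol, Measure.restrict_apply isClosed_closedBall.measurableSet, inter_comm]
  exact hausdorffMeasure_S2_inter_closedBall_le hy hr

/-! ### The potential of a measure with quadratic growth -/

section Potential

variable {X : Type*} [PseudoMetricSpace X]

lemma ofReal_inv_dist_le_tsum_indicator {x y : X} {D : ℝ} (hD : dist x y ≤ D) :
    ENNReal.ofReal (dist x y)⁻¹ ≤ ∑' n : ℕ, (closedBall x (D * (1 / 2) ^ n)).indicator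
      (fun _ => ENNReal.ofReal (2 / D * 2 ^ n)) y := by
  rcases (dist_nonneg (x := x) (y := y)).eq_or_lt with h0 | hpos
  · simp [← h0]
  have hD0 : 0 < D := hpos.trans_le hD
  obtain ⟨n, hlow, hupp⟩ := exists_nat_pow_near_of_lt_one (x := dist x y / D) (y := (1 / 2 : ℝ))
    (by positivity) ((div_le_one hD0).2 hD) (by norm_num) (by norm_num)
  refine le_trans ?_ (ENNReal.le_tsum n)
  rw [indicator_of_mem (by rw [mem_closedBall, dist_comm]; rwa [div_le_iff₀' hD0] at hupp)]
  refine ENNReal.ofReal_le_ofReal ((inv_le_comm₀ hpos (by positivity)).2 ?_)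
  rw [lt_div_iff₀ hD0] at hlow
  refine (le_of_eq ?_).trans hlow.le
  rw [pow_succ, one_div, inv_pow]
  field_simp

lemma lintegral_inv_dist_le [MeasurableSpace X] [OpensMeasurableSpace X] {μ : Measure X} {x : X}
    {A D : ℝ} (hD0 : 0 < D) (hA : ∀ r, 0 ≤ r → μ (closedBall x r) ≤ ENNReal.ofReal (A * r ^ 2))
    (hD : ∀ᵐ y ∂μ, dist x y ≤ D) :
    ∫⁻ y, ENNReal.ofReal (dist x y)⁻¹ ∂μ ≤ ENNReal.ofReal (4 * A * D) := by
  have hterm : ∀ n : ℕ, ENNReal.ofReal (2 / D * 2 ^ n) * μ (closedBall x (D * (1 / 2) ^ n)) ≤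
      ENNReal.ofReal (2 * A * D) * 2⁻¹ ^ n := fun n => by
    refine (mul_le_mul_right (hA _ (by positivity)) _).trans (le_of_eq ?_)
    rw [show (2⁻¹ : ENNReal) = ENNReal.ofReal 2⁻¹ by simp [ENNReal.ofReal_inv_of_pos],
      ← ENNReal.ofReal_pow (by norm_num), ← ENNReal.ofReal_mul (by positivity),
      ← ENNReal.ofReal_mul' (by positivity), one_div, inv_pow]
    congr 1; field_simp
  calc ∫⁻ y, ENNReal.ofReal (dist x y)⁻¹ ∂μ
    _ ≤ ∫⁻ y, ∑' n : ℕ, (closedBall x (D * (1 / 2) ^ n)).indicator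
          (fun _ => ENNReal.ofReal (2 / D * 2 ^ n)) y ∂μ :=
        lintegral_mono_ae (hD.mono fun y hy => ofReal_inv_dist_le_tsum_indicator hy)
    _ = ∑' n : ℕ, ENNReal.ofReal (2 / D * 2 ^ n) * μ (closedBall x (D * (1 / 2) ^ n)) := by
        rw [lintegral_tsum fun n =>
          (measurable_const.indicator isClosed_closedBall.measurableSet).aemeasurable]
        simp only [lintegral_indicator isClosed_closedBall.measurableSet, setLIntegral_const]
    _ ≤ ∑' n : ℕ, ENNReal.ofReal (2 * A * D) * 2⁻¹ ^ n := ENNReal.tsum_le_tsum hterm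
    _ = ENNReal.ofReal (4 * A * D) := by
        rw [ENNReal.tsum_mul_left, ENNReal.tsum_geometric_two, ← ENNReal.ofReal_ofNat 2,
          ← ENNReal.ofReal_mul' zero_le_two]
        congr 1; ring

end Potential

lemma lintegral_inv_norm_sub_sphVol_le {y : E3} (hy : y ∈ S2) :
    ∫⁻ p, ENNReal.ofReal ‖y - p‖⁻¹ ∂sphVol ≤ ENNReal.ofReal 512 := by
  have hD : ∀ᵐ p ∂sphVol, dist y p ≤ 2 := by
    refine (ae_restrict_mem measurableSet_S2).mono fun p hp => ?_
    rw [dist_eq_norm]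
    linarith [norm_sub_le y p, mem_S2_iff.1 hy, mem_S2_iff.1 hp]
  simp only [← dist_eq_norm]
  exact (lintegral_inv_dist_le two_pos (fun r hr => sphVol_closedBall_le hy hr) hD).trans_eq
    (by norm_num)

/-! ### The area inequality -/

section AreaInequality

variable {E F : Type*} [NormedAddCommGroup E] [NormedSpace ℝ E] [MeasurableSpace E] [BorelSpace E]
  [NormedAddCommGroup F] [NormedSpace ℝ F] [MeasurableSpace F] [BorelSpace F]
  {f : E → F} {d : ℝ} {S : Set E}

lemma exists_isOpen_hausdorffMeasure_image_le {x : E} (hf : ContDiffAt ℝ 1 f x)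
    (hd : 0 ≤ d) {c : NNReal} (hc : 0 < c) :
    ∃ U, IsOpen U ∧ x ∈ U ∧ ∀ A ⊆ U, MeasurableSet A →
      μH[d] (f '' A) ≤ ∫⁻ y in A, (‖fderiv ℝ f y‖ₑ + c) ^ d ∂μH[d] := by
  obtain ⟨t, ht, hlip⟩ := hf.exists_lipschitzOnWith_of_nnnorm_lt (‖fderiv ℝ f x‖₊ + c / 2)
    (lt_add_of_pos_right _ (half_pos hc))
  have hnear : ∀ᶠ y in nhds x, ‖fderiv ℝ f x‖₊ < ‖fderiv ℝ f y‖₊ + c / 2 :=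
    ((hf.continuousAt_fderiv one_ne_zero).nnnorm.add_const _).eventually_const_lt
      (lt_add_of_pos_right _ (half_pos hc))
  obtain ⟨U, hU, hUo, hxU⟩ := _root_.mem_nhds_iff.1 (inter_mem ht hnear)
  refine ⟨U, hUo, hxU, fun A hA hAm => ?_⟩
  refine ((hlip.mono fun y hy => (hU (hA hy)).1).hausdorffMeasure_image_le hd).trans ?_
  rw [← setLIntegral_const]
  refine setLIntegral_mono' hAm fun y hy => ?_
  gcongr
  have hxy : ‖fderiv ℝ f x‖₊ + c / 2 ≤ ‖fderiv ℝ f y‖₊ + c := by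
    rw [← add_halves c, ← add_assoc]
    simpa only [add_halves] using add_le_add_left (hU (hA hy)).2.le (c / 2)
  simpa only [enorm_eq_nnnorm, ← ENNReal.coe_add] using ENNReal.coe_le_coe.2 hxy

lemma hausdorffMeasure_image_le_lintegral_enorm_fderiv_add (hS : IsCompact S)
    (hf : ∀ x ∈ S, ContDiffAt ℝ 1 f x) (hd : 0 ≤ d) {c : NNReal} (hc : 0 < c) {K : Set E}
    (hK : MeasurableSet K) (hKS : K ⊆ S) :
    μH[d] (f '' K) ≤ ∫⁻ y in K, (‖fderiv ℝ f y‖ₑ + c) ^ d ∂μH[d] := by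
  obtain ⟨U, -, hSU, hU⟩ : ∃ U, IsOpen U ∧ S ⊆ U ∧ ∀ A ⊆ U, MeasurableSet A →
      μH[d] (f '' A) ≤ ∫⁻ y in A, (‖fderiv ℝ f y‖ₑ + c) ^ d ∂μH[d] := by
    refine hS.induction_on ⟨∅, isOpen_empty, subset_rfl, fun A hA _ => ?_⟩
      (fun s t hst ⟨U, hUo, htU, hU⟩ => ⟨U, hUo, hst.trans htU, hU⟩) ?_ fun x hx => ?_
    · simp [subset_empty_iff.1 hA]
    · rintro s t ⟨U, hUo, hsU, hU⟩ ⟨V, hVo, htV, hV⟩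
      refine ⟨U ∪ V, hUo.union hVo, union_subset_union hsU htV, fun A hA hAm => ?_⟩
      rw [← lintegral_inter_add_sdiff _ A hUo.measurableSet, ← inter_union_sdiff A U, image_union]
      refine (measure_union_le _ _).trans (add_le_add ?_ ?_)
      · simpa only [inter_union_sdiff] using
          hU _ inter_subset_right (hAm.inter hUo.measurableSet)
      · simpa only [inter_union_sdiff] using
          hV _ (fun y hy => (hA hy.1).resolve_left hy.2) (hAm.diff hUo.measurableSet)
    · obtain ⟨U, hUo, hxU, hU⟩ := exists_isOpen_hausdorffMeasure_image_le (hf x hx) hd hc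
      exact ⟨U, mem_nhdsWithin_of_mem_nhds (hUo.mem_nhds hxU), U, hUo, subset_rfl, hU⟩
  exact hU K (hKS.trans hSU) hK

lemma hausdorffMeasure_image_le_lintegral_enorm_fderiv [CompleteSpace F] (hS : IsCompact S)
    (hf : ∀ x ∈ S, ContDiffAt ℝ 1 f x) (hd : 0 ≤ d) (hSfin : (μH[d] : Measure E) S ≠ ⊤)
    {K : Set E} (hK : MeasurableSet K) (hKS : K ⊆ S) :
    μH[d] (f '' K) ≤ ∫⁻ y in K, ‖fderiv ℝ f y‖ₑ ^ d ∂μH[d] := by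
  obtain ⟨M, hM⟩ := hS.bddAbove_image (f := fun y => ‖fderiv ℝ f y‖₊) fun x hx =>
    ((hf x hx).continuousAt_fderiv one_ne_zero).nnnorm.continuousWithinAt
  have hlim : Tendsto (fun c : NNReal => ∫⁻ y in K, (‖fderiv ℝ f y‖ₑ + c) ^ d ∂μH[d])
      (nhdsWithin 0 (Ioi 0)) (nhds (∫⁻ y in K, ‖fderiv ℝ f y‖ₑ ^ d ∂μH[d])) := by
    refine tendsto_lintegral_filter_of_dominated_convergence (fun _ => ((M : ENNReal) + 1) ^ d)
      (.of_forall fun c => by fun_prop) ?_ ?_ (.of_forall fun y => ?_)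
    · filter_upwards [mem_nhdsWithin_of_mem_nhds (Iic_mem_nhds zero_lt_one)] with c hc
      refine (ae_restrict_mem hK).mono fun y hy => ?_
      gcongr
      · exact_mod_cast hM (mem_image_of_mem _ (hKS hy))
      · exact_mod_cast hc
    · rw [setLIntegral_const]
      exact ENNReal.mul_ne_top (by finiteness) (measure_ne_top_of_subset hKS hSfin)
    · have hcont : Continuous fun c : NNReal => (‖fderiv ℝ f y‖ₑ + c) ^ d :=
        ENNReal.continuous_rpow_const.comp (by fun_prop)
      simpa only [ENNReal.coe_zero, add_zero] using
        (hcont.tendsto 0).mono_left nhdsWithin_le_nhds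
  exact ge_of_tendsto hlim (by
    filter_upwards [self_mem_nhdsWithin] with c hc
    exact hausdorffMeasure_image_le_lintegral_enorm_fderiv_add hS hf hd hc hK hKS)

end AreaInequality

/-! ### Energy density of sphere maps -/

lemma ne_zero_of_mem_S2 {y : E3} (hy : y ∈ S2) : y ≠ 0 := by
  rintro rfl
  simp [mem_S2_iff] at hy

lemma homExt_eq_of_mem_S2 (h : E3 → E3) {y : E3} (hy : y ∈ S2) : homExt h y = h y := by
  simp [homExt, mem_S2_iff.1 hy]

lemma enDensity_nonneg (h : E3 → E3) (x : E3) : 0 ≤ enDensity h x := by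
  unfold enDensity; positivity

lemma sq_norm_apply_le_sum_sq_mul (L : E3 →L[ℝ] E3) (v : E3) :
    ‖L v‖ ^ 2 ≤ (∑ i, ‖L (e3 i)‖ ^ 2) * ‖v‖ ^ 2 := by
  have hv : v = ∑ i, v i • e3 i := by
    simpa [e3] using ((EuclideanSpace.basisFun (Fin 3) ℝ).sum_repr v).symm
  have hnorm : ‖L v‖ ≤ ∑ i, ‖L (e3 i)‖ * ‖v i‖ := by
    conv_lhs => rw [hv, map_sum]
    refine (norm_sum_le _ _).trans_eq (Finset.sum_congr rfl fun i _ => ?_)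
    rw [map_smul, norm_smul, mul_comm]
  calc ‖L v‖ ^ 2
    _ ≤ (∑ i, ‖L (e3 i)‖ * ‖v i‖) ^ 2 := by gcongr
    _ ≤ (∑ i, ‖L (e3 i)‖ ^ 2) * ∑ i, ‖v i‖ ^ 2 := Finset.sum_mul_sq_le_sq_mul_sq _ _ _
    _ = (∑ i, ‖L (e3 i)‖ ^ 2) * ‖v‖ ^ 2 := by rw [EuclideanSpace.norm_sq_eq]

lemma sq_norm_fderiv_homExt_apply_le (h : E3 → E3) (x v : E3) :
    ‖fderiv ℝ (homExt h) x v‖ ^ 2 ≤ enDensity h x * ‖v‖ ^ 2 :=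
  sq_norm_apply_le_sum_sq_mul _ v

lemma norm_fderiv_homExt_le (h : E3 → E3) (x : E3) :
    ‖fderiv ℝ (homExt h) x‖ ≤ √(enDensity h x) := by
  refine ContinuousLinearMap.opNorm_le_bound _ (sqrt_nonneg _) fun v => ?_
  rw [← sqrt_sq (norm_nonneg v), ← sqrt_mul (enDensity_nonneg h x)]
  exact le_sqrt_of_sq_le (sq_norm_fderiv_homExt_apply_le h x v)

section SmoothMaps

variable {h : E3 → E3} (hh : ContDiff ℝ (⊤ : ℕ∞) h)

include hh

lemma contDiffAt_homExt {y : E3} (hy : y ≠ 0) : ContDiffAt ℝ (⊤ : ℕ∞) (homExt h) y :=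
  hh.contDiffAt.comp y
    (((contDiffAt_norm ℝ hy).inv (norm_ne_zero_iff.2 hy)).smul contDiffAt_id)

lemma continuousOn_enDensity : ContinuousOn (enDensity h) S2 :=
  continuousOn_finsetSum _ fun i _ y hy =>
    ((((contDiffAt_homExt hh (ne_zero_of_mem_S2 hy)).continuousAt_fderiv (by simp)).clm_apply
      continuousAt_const).norm.pow 2).continuousWithinAt

lemma hausdorffMeasure_image_le_lintegral_enDensity {K : Set E3} (hK : MeasurableSet K)
    (hKS : K ⊆ S2) :
    (μH[2] : Measure E3) (h '' K) ≤ ∫⁻ y in K, ENNReal.ofReal (enDensity h y) ∂μH[2] := by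
  rw [image_congr fun y hy => (homExt_eq_of_mem_S2 h (hKS hy)).symm]
  refine (hausdorffMeasure_image_le_lintegral_enorm_fderiv isCompact_S2
    (fun x hx => (contDiffAt_homExt hh (ne_zero_of_mem_S2 hx)).of_le (by simp)) zero_le_two
    hausdorffMeasure_S2_ne_top hK hKS).trans (lintegral_mono fun y => ?_)
  rw [← ofReal_norm, ENNReal.rpow_two, ← ENNReal.ofReal_pow (norm_nonneg _)]
  refine ENNReal.ofReal_le_ofReal ?_
  rw [← sq_sqrt (enDensity_nonneg h y)]
  gcongr
  exact norm_fderiv_homExt_le h y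

lemma integrable_enDensity : Integrable (enDensity h) sphVol := by
  obtain ⟨M, hM⟩ := isCompact_S2.bddAbove_image (continuousOn_enDensity hh)
  refine Integrable.of_bound
    ((continuousOn_enDensity hh).aestronglyMeasurable measurableSet_S2) M ?_
  refine (ae_restrict_mem measurableSet_S2).mono fun y hy => ?_
  rw [Real.norm_of_nonneg (enDensity_nonneg h y)]
  exact hM (mem_image_of_mem _ hy)

lemma hausdorffMeasure_image_le_of_energyOn_le {K : Set E3} (hK : MeasurableSet K)
    (hKS : K ⊆ S2) {ε : ℝ} (hE : energyOn h K ≤ ε) :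
    (μH[2] : Measure E3) (h '' K) ≤ ENNReal.ofReal (2 * ε) := by
  have hrestrict : sphVol.restrict K = (μH[2] : Measure E3).restrict K := by
    rw [sphVol, Measure.restrict_restrict hK, inter_eq_self_of_subset_left hKS]
  refine (hausdorffMeasure_image_le_lintegral_enDensity hh hK hKS).trans ?_
  rw [← hrestrict, ← ofReal_integral_eq_lintegral_ofReal (integrable_enDensity hh).restrict
    (Eventually.of_forall fun y => enDensity_nonneg h y)]
  refine ENNReal.ofReal_le_ofReal ?_
  rw [energyOn] at hE
  linarith

end SmoothMaps

/-! ### The Hopf differential of a map of the plane -/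

section DirectionalDerivatives

open Laplacian

variable {F : Type*} [NormedAddCommGroup F] [NormedSpace ℝ F]

/-- The derivative of a map of the plane in the direction of a fixed vector, as a function of the
base point. -/
def dirDeriv (v : ℂ) (f : ℂ → F) : ℂ → F := fun w => fderiv ℝ f w v

variable {f : ℂ → F} {w : ℂ}

lemma contDiffAt_dirDeriv {m n : WithTop ℕ∞} (hf : ContDiffAt ℝ n f w) (hmn : m + 1 ≤ n) (v : ℂ) :
    ContDiffAt ℝ m (dirDeriv v f) w :=
  (hf.fderiv_right hmn).clm_apply contDiffAt_const

lemma differentiableAt_dirDeriv (hf : ContDiffAt ℝ 2 f w) (v : ℂ) :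
    DifferentiableAt ℝ (dirDeriv v f) w :=
  (contDiffAt_dirDeriv hf (m := 1) (by norm_num) v).differentiableAt one_ne_zero

lemma dirDeriv_dirDeriv (hf : ContDiffAt ℝ 2 f w) (v v' : ℂ) :
    dirDeriv v (dirDeriv v' f) w = fderiv ℝ (fderiv ℝ f) w v v' := by
  have hdiff : DifferentiableAt ℝ (fderiv ℝ f) w :=
    (hf.fderiv_right (m := 1) (by norm_num)).differentiableAt one_ne_zero
  unfold dirDeriv
  simp [fderiv_clm_apply hdiff (differentiableAt_const v')]

lemma dirDeriv_comm (hf : ContDiffAt ℝ 2 f w) (v v' : ℂ) :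
    dirDeriv v (dirDeriv v' f) w = dirDeriv v' (dirDeriv v f) w := by
  rw [dirDeriv_dirDeriv hf, dirDeriv_dirDeriv hf]
  exact hf.isSymmSndFDerivAt (by simp) v v'

lemma laplacian_eq_dirDeriv (hf : ContDiffAt ℝ 2 f w) :
    Δ f w =
      dirDeriv 1 (dirDeriv 1 f) w + dirDeriv Complex.I (dirDeriv Complex.I f) w := by
  rw [InnerProductSpace.laplacian_eq_iteratedFDeriv_complexPlane, dirDeriv_dirDeriv hf,
    dirDeriv_dirDeriv hf]
  simp [iteratedFDeriv_two_apply]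

lemma dirDeriv_continuousLinearMap_apply {G : Type*} [NormedAddCommGroup G] [NormedSpace ℝ G]
    (L : F →L[ℝ] G) (hf : DifferentiableAt ℝ f w) (v : ℂ) :
    dirDeriv v (fun w => L (f w)) w = L (dirDeriv v f w) := by
  unfold dirDeriv
  rw [fderiv_fun_comp w L.differentiableAt hf, L.fderiv]
  rfl

lemma dirDeriv_comp {E : Type*} [NormedAddCommGroup E] [NormedSpace ℝ E] {g : E → F} {f : ℂ → E}
    (hg : DifferentiableAt ℝ g (f w)) (hf : DifferentiableAt ℝ f w) (v : ℂ) :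
    dirDeriv v (fun w => g (f w)) w = fderiv ℝ g (f w) (dirDeriv v f w) := by
  unfold dirDeriv
  rw [fderiv_fun_comp w hg hf]
  rfl

lemma laplacian_comp {E : Type*} [NormedAddCommGroup E] [NormedSpace ℝ E] {g : E → F} {f : ℂ → E}
    (hg : ContDiffAt ℝ 2 g (f w)) (hf : ContDiffAt ℝ 2 f w) :
    Δ (fun w => g (f w)) w =
      fderiv ℝ (fderiv ℝ g) (f w) (dirDeriv 1 f w) (dirDeriv 1 f w)
        + fderiv ℝ (fderiv ℝ g) (f w) (dirDeriv Complex.I f w) (dirDeriv Complex.I f w)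
        + fderiv ℝ g (f w) (Δ f w) := by
  have hsnd : ∀ v, dirDeriv v (dirDeriv v fun w => g (f w)) w =
      fderiv ℝ (fderiv ℝ g) (f w) (dirDeriv v f w) (dirDeriv v f w)
        + fderiv ℝ g (f w) (dirDeriv v (dirDeriv v f) w) := fun v => by
    have hfst : dirDeriv v (fun w => g (f w)) =ᶠ[nhds w]
        fun w => fderiv ℝ g (f w) (dirDeriv v f w) := by
      filter_upwards [hf.eventually (by simp), hf.continuousAt.eventually (hg.eventually (by simp))]
        with z hfz hgz
      exact dirDeriv_comp (hgz.differentiableAt two_ne_zero) (hfz.differentiableAt two_ne_zero) v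
    have hf1 := hf.differentiableAt two_ne_zero
    have hg' : DifferentiableAt ℝ (fderiv ℝ g) (f w) :=
      (hg.fderiv_right (m := 1) (by norm_num)).differentiableAt one_ne_zero
    have hcomp : DifferentiableAt ℝ (fun w => fderiv ℝ g (f w)) w :=
      DifferentiableAt.comp w hg' hf1
    rw [dirDeriv, hfst.fderiv_eq,
      fderiv_clm_apply hcomp (differentiableAt_dirDeriv hf v),
      fderiv_fun_comp w hg' hf1]
    exact add_comm _ _
  rw [laplacian_eq_dirDeriv (hg.fun_comp w hf), laplacian_eq_dirDeriv hf, map_add, hsnd, hsnd]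
  abel

end DirectionalDerivatives

section HopfDifferential

open Laplacian

variable {E : Type*} [NormedAddCommGroup E] [InnerProductSpace ℝ E] {f g : ℂ → E} {w : ℂ}

lemma dirDeriv_inner (hf : DifferentiableAt ℝ f w) (hg : DifferentiableAt ℝ g w) (v : ℂ) :
    dirDeriv v (fun w => ⟪f w, g w⟫) w = ⟪dirDeriv v f w, g w⟫ + ⟪f w, dirDeriv v g w⟫ := by
  unfold dirDeriv
  rw [fderiv_inner_apply ℝ hf hg, add_comm]

lemma inner_dirDeriv_eq_zero_of_norm_eq {c : ℝ} (hf : DifferentiableAt ℝ f w)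
    (hc : ∀ w, ‖f w‖ = c) (v : ℂ) : ⟪dirDeriv v f w, f w⟫ = 0 := by
  have hinner := dirDeriv_inner hf hf v
  have hconst : (fun w => ⟪f w, f w⟫) = fun _ => c ^ 2 := by
    ext w; rw [real_inner_self_eq_norm_sq, hc]
  have hzero : dirDeriv v (fun w => ⟪f w, f w⟫) w = 0 := by
    rw [hconst, dirDeriv, fderiv_fun_const]; rfl
  rw [hzero, real_inner_comm (dirDeriv v f w)] at hinner
  linarith

/-- The coefficient of `dz²` in the Hopf differential of a map `f` of the plane. It vanishes exactly
where `f` is weakly conformal. -/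
def hopfDifferential (f : ℂ → E) (w : ℂ) : ℂ :=
  ((‖dirDeriv 1 f w‖ ^ 2 - ‖dirDeriv Complex.I f w‖ ^ 2 : ℝ) : ℂ)
    - 2 * (⟪dirDeriv 1 f w, dirDeriv Complex.I f w⟫ : ℝ) * Complex.I

lemma hopfDifferential_eq_zero_iff : hopfDifferential f w = 0 ↔
    ‖dirDeriv 1 f w‖ = ‖dirDeriv Complex.I f w‖ ∧
      ⟪dirDeriv 1 f w, dirDeriv Complex.I f w⟫ = 0 := by
  rw [← sq_eq_sq₀ (norm_nonneg _) (norm_nonneg _)]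
  simp [Complex.ext_iff, hopfDifferential, sub_eq_zero, -Complex.ofReal_sub]

lemma norm_hopfDifferential_le : ‖hopfDifferential f w‖ ≤
    2 * (‖dirDeriv 1 f w‖ ^ 2 + ‖dirDeriv Complex.I f w‖ ^ 2) := by
  have hinner := abs_real_inner_le_norm (dirDeriv 1 f w) (dirDeriv Complex.I f w)
  have hamgm := two_mul_le_add_sq ‖dirDeriv 1 f w‖ ‖dirDeriv Complex.I f w‖
  have habs : |‖dirDeriv 1 f w‖ ^ 2 - ‖dirDeriv Complex.I f w‖ ^ 2| ≤
      ‖dirDeriv 1 f w‖ ^ 2 + ‖dirDeriv Complex.I f w‖ ^ 2 :=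
    abs_sub_le_of_nonneg_of_le (by positivity) (by simp) (by positivity) (by simp)
  refine (norm_sub_le _ _).trans ?_
  simp only [norm_mul, Complex.norm_I, Complex.norm_real, Complex.norm_ofNat, Real.norm_eq_abs]
  linarith

section SecondOrder

variable (hf : ContDiffAt ℝ 2 f w)

include hf

lemma differentiableAt_hopfDifferential : DifferentiableAt ℝ (hopfDifferential f) w := by
  have h₁ := differentiableAt_dirDeriv hf 1
  have hI := differentiableAt_dirDeriv hf Complex.I
  have hofReal : Differentiable ℝ ((↑) : ℝ → ℂ) := Complex.ofRealCLM.differentiable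
  exact (hofReal.differentiableAt.comp w ((h₁.norm_sq ℝ).sub (hI.norm_sq ℝ))).sub
    (((hofReal.differentiableAt.comp w (h₁.inner ℝ hI)).const_mul 2).mul_const _)

lemma re_dirDeriv_hopfDifferential (v : ℂ) : (dirDeriv v (hopfDifferential f) w).re =
    2 * (⟪dirDeriv v (dirDeriv 1 f) w, dirDeriv 1 f w⟫
      - ⟪dirDeriv v (dirDeriv Complex.I f) w, dirDeriv Complex.I f w⟫) := by
  have h₁ := differentiableAt_dirDeriv hf 1
  have hI := differentiableAt_dirDeriv hf Complex.I
  have hre : (fun z => Complex.reCLM (hopfDifferential f z)) = fun z =>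
      ⟪dirDeriv 1 f z, dirDeriv 1 f z⟫ - ⟪dirDeriv Complex.I f z, dirDeriv Complex.I f z⟫ := by
    ext z
    simp [hopfDifferential, -Complex.ofReal_sub]
  have hsub := fderiv_fun_sub (h₁.inner ℝ h₁) (hI.inner ℝ hI)
  have hd₁ := dirDeriv_inner h₁ h₁ v
  have hdI := dirDeriv_inner hI hI v
  have hclm := dirDeriv_continuousLinearMap_apply Complex.reCLM
    (differentiableAt_hopfDifferential hf) v
  rw [hre, dirDeriv, hsub] at hclm
  rw [real_inner_comm (dirDeriv v _ w)] at hd₁ hdI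
  exact hclm.symm.trans ((congrArg₂ (· - ·) hd₁ hdI).trans (by ring))

lemma im_dirDeriv_hopfDifferential (v : ℂ) : (dirDeriv v (hopfDifferential f) w).im =
    -2 * (⟪dirDeriv v (dirDeriv 1 f) w, dirDeriv Complex.I f w⟫
      + ⟪dirDeriv v (dirDeriv Complex.I f) w, dirDeriv 1 f w⟫) := by
  have h₁ := differentiableAt_dirDeriv hf 1
  have hI := differentiableAt_dirDeriv hf Complex.I
  have him : (fun z => Complex.imCLM (hopfDifferential f z)) = fun z =>
      -2 * ⟪dirDeriv 1 f z, dirDeriv Complex.I f z⟫ := by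
    ext z
    simp [hopfDifferential, -Complex.ofReal_sub]
  have hclm := dirDeriv_continuousLinearMap_apply Complex.imCLM
    (differentiableAt_hopfDifferential hf) v
  rw [him, dirDeriv, fderiv_const_mul (h₁.inner ℝ hI)] at hclm
  rw [real_inner_comm (dirDeriv 1 f w)]
  exact hclm.symm.trans (congrArg (-2 * ·) (dirDeriv_inner h₁ hI v))

/- The Cauchy–Riemann operator applied to the Hopf differential is the inner product of the
Laplacian with the differential. -/
lemma dirDeriv_one_add_I_mul_hopfDifferential :
    dirDeriv 1 (hopfDifferential f) w + Complex.I * dirDeriv Complex.I (hopfDifferential f) w =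
      2 * (⟪Δ f w, dirDeriv 1 f w⟫ : ℝ)
        - 2 * (⟪Δ f w, dirDeriv Complex.I f w⟫ : ℝ) * Complex.I := by
  rw [laplacian_eq_dirDeriv hf, inner_add_left, inner_add_left]
  apply Complex.ext
  · simp [re_dirDeriv_hopfDifferential hf, im_dirDeriv_hopfDifferential hf,
      dirDeriv_comm hf Complex.I 1]
    ring
  · simp [re_dirDeriv_hopfDifferential hf, im_dirDeriv_hopfDifferential hf,
      dirDeriv_comm hf Complex.I 1]
    ring

lemma inner_laplacian_dirDeriv_eq_zero_of_hopfDifferential_eq_zero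
    (hhopf : hopfDifferential f =ᶠ[nhds w] 0) :
    ⟪Δ f w, dirDeriv 1 f w⟫ = 0 ∧ ⟪Δ f w, dirDeriv Complex.I f w⟫ = 0 := by
  have hzero : ∀ v, dirDeriv v (hopfDifferential f) w = 0 := fun v => by
    rw [dirDeriv, hhopf.fderiv_eq, fderiv_zero]; rfl
  have hsum := dirDeriv_one_add_I_mul_hopfDifferential hf
  simpa [hzero, Complex.ext_iff] using hsum.symm

lemma differentiableAt_complex_hopfDifferential (h₁ : ⟪Δ f w, dirDeriv 1 f w⟫ = 0)
    (hI : ⟪Δ f w, dirDeriv Complex.I f w⟫ = 0) : DifferentiableAt ℂ (hopfDifferential f) w := by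
  refine differentiableAt_complex_iff_differentiableAt_real.2
    ⟨differentiableAt_hopfDifferential hf, ?_⟩
  have hsum := dirDeriv_one_add_I_mul_hopfDifferential hf
  rw [h₁, hI] at hsum
  simp only [dirDeriv, Complex.ofReal_zero, mul_zero, zero_mul, sub_zero] at hsum
  rw [smul_eq_mul]
  linear_combination
    -Complex.I * hsum + fderiv ℝ (hopfDifferential f) w Complex.I * Complex.I_sq

end SecondOrder

end HopfDifferential

/-! ### Harmonic maps in stereographic coordinates -/

lemma sum_apply_apply_orthonormalBasis_eq {E F ι ι' : Type*} [NormedAddCommGroup E]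
    [InnerProductSpace ℝ E] [FiniteDimensional ℝ E] [AddCommGroup F] [Module ℝ F] [Fintype ι]
    [Fintype ι'] (Q : E →ₗ[ℝ] E →ₗ[ℝ] F) (b : OrthonormalBasis ι ℝ E)
    (b' : OrthonormalBasis ι' ℝ E) : ∑ i, Q (b i) (b i) = ∑ j, Q (b' j) (b' j) := by
  have htensor := (InnerProductSpace.canonicalCovariantTensor_eq_sum E b).symm.trans
    (InnerProductSpace.canonicalCovariantTensor_eq_sum E b')
  simpa only [map_sum, TensorProduct.lift.tmul] using congrArg (TensorProduct.lift Q) htensor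

lemma Frame.exists_norm_smul_eq {a b c : E3} (hab : ‖a‖ = ‖b‖) (hc : c ∈ S2) (hinner : ⟪a, b⟫ = 0)
    (hac : ⟪a, c⟫ = 0) (hbc : ⟪b, c⟫ = 0) :
    ∃ B : Frame, ‖a‖ • B 0 = a ∧ ‖a‖ • B 1 = b ∧ B 2 = c := by
  rcases (norm_nonneg a).eq_or_lt with ha | ha
  · obtain ⟨B, hB⟩ := Frame.exists_apply_two_eq hc
    refine ⟨B, ?_, ?_, hB⟩
    · rw [norm_eq_zero.1 ha.symm, norm_zero, zero_smul]
    · rw [norm_eq_zero.1 (hab.symm.trans ha.symm), ← ha, zero_smul]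
  have horth : Orthonormal ℝ ((univ : Set (Fin 3)).domRestrict ![‖a‖⁻¹ • a, ‖a‖⁻¹ • b, c]) := by
    have haa : ⟪a, a⟫ = ‖a‖ ^ 2 := real_inner_self_eq_norm_sq a
    have hbb : ⟪b, b⟫ = ‖a‖ ^ 2 := by rw [hab, real_inner_self_eq_norm_sq]
    have hcc : ⟪c, c⟫ = 1 := by rw [real_inner_self_eq_norm_sq, mem_S2_iff.1 hc, one_pow]
    have hba := (real_inner_comm a b).trans hinner
    have hca := (real_inner_comm a c).trans hac
    have hcb := (real_inner_comm b c).trans hbc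
    rw [orthonormal_iff_ite]
    rintro ⟨i, -⟩ ⟨j, -⟩
    fin_cases i <;> fin_cases j <;>
      simp [Set.domRestrict, real_inner_smul_left, real_inner_smul_right, hinner, hac, hbc, haa,
        hbb, hcc, hba, hca, hcb, -inner_self_eq_norm_sq_to_K, sq, ha.ne']
  obtain ⟨B, hB⟩ := horth.exists_orthonormalBasis_extension_of_card_eq (by simp)
  refine ⟨B, ?_, ?_, by simpa using hB 2 (mem_univ _)⟩
  · simp [hB 0 (mem_univ _), smul_smul, ha.ne']
  · simp [hB 1 (mem_univ _), smul_smul, ha.ne']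

section HomogeneousExtension

variable {h : E3 → E3} (hh : ContDiff ℝ (⊤ : ℕ∞) h) {y : E3} (hy : y ≠ 0)

include hh hy

lemma differentiableAt_fderiv_homExt : DifferentiableAt ℝ (fderiv ℝ (homExt h)) y :=
  ((contDiffAt_homExt hh hy).fderiv_right (m := 1) (by norm_cast)).differentiableAt one_ne_zero

lemma fderiv_homExt_self : fderiv ℝ (homExt h) y y = 0 := by
  have hdiff : DifferentiableAt ℝ (homExt h) y :=
    (contDiffAt_homExt hh hy).differentiableAt (by simp)
  have hconst : (fun t : ℝ => homExt h (y + t • y)) =ᶠ[nhds 0] fun _ => homExt h y := by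
    filter_upwards [lt_mem_nhds (show (-1 : ℝ) < 0 by norm_num)] with t ht
    have hpos : 0 < 1 + t := by linarith
    rw [show y + t • y = (1 + t) • y by rw [add_smul, one_smul]]
    simp only [homExt, norm_smul, Real.norm_of_nonneg hpos.le, smul_smul]
    congr 2
    field_simp
  rw [← hdiff.lineDeriv_eq_fderiv, lineDeriv, hconst.deriv_eq, deriv_const]

lemma fderiv_fderiv_homExt_self : fderiv ℝ (fderiv ℝ (homExt h)) y y y = 0 := by
  have hzero : (fun y => fderiv ℝ (homExt h) y y) =ᶠ[nhds y] fun _ => 0 := by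
    filter_upwards [isOpen_ne.mem_nhds hy] with z hz using fderiv_homExt_self hh hz
  have hfderiv := hzero.fderiv_eq (𝕜 := ℝ)
  rw [fderiv_clm_apply (differentiableAt_fderiv_homExt hh hy) differentiableAt_fun_id] at hfderiv
  simpa [fderiv_homExt_self hh hy] using congrArg (fun L : E3 →L[ℝ] E3 => L y) hfderiv

lemma sphLap_eq_sum : sphLap h y = ∑ i, fderiv ℝ (fderiv ℝ (homExt h)) y (e3 i) (e3 i) := by
  refine Finset.sum_congr rfl fun i _ => ?_
  simp [fderiv_clm_apply (differentiableAt_fderiv_homExt hh hy) (differentiableAt_const _)]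

end HomogeneousExtension

section StereoRep

open Laplacian

variable (B : Frame) (w : ℂ)

lemma contDiffAt_invStereo {n : ℕ∞} : ContDiffAt ℝ n (invStereo B) w :=
  (contDiff_invStereo B).contDiffAt.of_le (by simp)

lemma norm_dirDeriv_invStereo (v : ℂ) :
    ‖dirDeriv v (invStereo B) w‖ = stereoFactor w * ‖v‖ :=
  norm_fderiv_invStereo_apply B w v

lemma inner_dirDeriv_invStereo_self (v : ℂ) : ⟪dirDeriv v (invStereo B) w, invStereo B w⟫ = 0 :=
  inner_dirDeriv_eq_zero_of_norm_eq ((contDiffAt_invStereo B w (n := 1)).differentiableAt (by simp))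
    (norm_invStereo B) v

lemma hopfDifferential_invStereo : hopfDifferential (invStereo B) w = 0 := by
  rw [hopfDifferential_eq_zero_iff, norm_dirDeriv_invStereo, norm_dirDeriv_invStereo]
  exact ⟨by simp, by simp [dirDeriv, inner_fderiv_invStereo_apply]⟩

lemma exists_frame_dirDeriv_invStereo : ∃ B' : Frame,
    stereoFactor w • B' 0 = dirDeriv 1 (invStereo B) w ∧
      stereoFactor w • B' 1 = dirDeriv Complex.I (invStereo B) w ∧ B' 2 = invStereo B w := by
  obtain ⟨hnorm, hinner⟩ := hopfDifferential_eq_zero_iff.1 (hopfDifferential_invStereo B w)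
  have hframe := Frame.exists_norm_smul_eq hnorm (invStereo_mem_S2 B w) hinner
    (inner_dirDeriv_invStereo_self B w 1) (inner_dirDeriv_invStereo_self B w Complex.I)
  simpa only [norm_dirDeriv_invStereo, norm_one, mul_one] using hframe

lemma stereoFactor_sq_smul_sum_e3 {F : Type*} [AddCommGroup F] [Module ℝ F]
    (Q : E3 →ₗ[ℝ] E3 →ₗ[ℝ] F) (hQ : Q (invStereo B w) (invStereo B w) = 0) :
    stereoFactor w ^ 2 • ∑ i, Q (e3 i) (e3 i) =
      Q (dirDeriv 1 (invStereo B) w) (dirDeriv 1 (invStereo B) w)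
        + Q (dirDeriv Complex.I (invStereo B) w) (dirDeriv Complex.I (invStereo B) w) := by
  obtain ⟨B', h₀, h₁, h₂⟩ := exists_frame_dirDeriv_invStereo B w
  have he3 : ∀ i, e3 i = EuclideanSpace.basisFun (Fin 3) ℝ i := fun i => by simp [e3]
  simp only [he3]
  rw [sum_apply_apply_orthonormalBasis_eq Q _ B', Fin.sum_univ_three, ← h₀, ← h₁, h₂, hQ]
  simp only [map_smul, LinearMap.smul_apply, smul_smul, add_zero, smul_add, sq]

lemma exists_laplacian_invStereo_eq_smul : ∃ c : ℝ, Δ (invStereo B) w = c • invStereo B w := by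
  obtain ⟨h₁, hI⟩ := inner_laplacian_dirDeriv_eq_zero_of_hopfDifferential_eq_zero
    (contDiffAt_invStereo B w) (Eventually.of_forall (hopfDifferential_invStereo B))
  obtain ⟨B', h₀', h₁', h₂'⟩ := exists_frame_dirDeriv_invStereo B w
  rw [← h₀', real_inner_comm, real_inner_smul_left, mul_eq_zero_iff_left (stereoFactor_pos w).ne']
    at h₁
  rw [← h₁', real_inner_comm, real_inner_smul_left, mul_eq_zero_iff_left (stereoFactor_pos w).ne']
    at hI
  have hsum := B'.eq_sum_inner_smul (Δ (invStereo B) w)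
  rw [h₁, hI, zero_smul, zero_smul, zero_add, zero_add, h₂'] at hsum
  exact ⟨_, hsum⟩

/-- A map of the sphere read in the stereographic chart of its domain. -/
def stereoRep (h : E3 → E3) (B : Frame) : ℂ → E3 := fun w => h (invStereo B w)

variable {h : E3 → E3}

lemma stereoRep_eq_homExt : stereoRep h B = fun w => homExt h (invStereo B w) :=
  funext fun w => (homExt_eq_of_mem_S2 h (invStereo_mem_S2 B w)).symm

section Smooth

variable (hh : ContDiff ℝ (⊤ : ℕ∞) h)

include hh

lemma contDiff_stereoRep : ContDiff ℝ (⊤ : ℕ∞) (stereoRep h B) := hh.comp (contDiff_invStereo B)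

lemma dirDeriv_stereoRep (v : ℂ) : dirDeriv v (stereoRep h B) w =
    fderiv ℝ (homExt h) (invStereo B w) (dirDeriv v (invStereo B) w) := by
  rw [stereoRep_eq_homExt]
  exact dirDeriv_comp
    ((contDiffAt_homExt hh (ne_zero_of_mem_S2 (invStereo_mem_S2 B w))).differentiableAt (by simp))
    ((contDiffAt_invStereo B w (n := 1)).differentiableAt (by simp)) v

lemma norm_dirDeriv_stereoRep_sq_add :
    ‖dirDeriv 1 (stereoRep h B) w‖ ^ 2 + ‖dirDeriv Complex.I (stereoRep h B) w‖ ^ 2 =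
      stereoFactor w ^ 2 * enDensity h (invStereo B w) := by
  have hy := ne_zero_of_mem_S2 (invStereo_mem_S2 B w)
  set L := (fderiv ℝ (homExt h) (invStereo B w)).toLinearMap with hL
  have hQ : ∀ a b, (innerₗ E3).compl₁₂ L L a b = ⟪L a, L b⟫ := fun a b => rfl
  have htrace := stereoFactor_sq_smul_sum_e3 B w ((innerₗ E3).compl₁₂ L L)
    (by simp [hL, fderiv_homExt_self hh hy])
  simp only [hQ, real_inner_self_eq_norm_sq] at htrace
  rw [dirDeriv_stereoRep B w hh, dirDeriv_stereoRep B w hh]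
  exact htrace.symm

lemma laplacian_stereoRep :
    Δ (stereoRep h B) w = stereoFactor w ^ 2 • sphLap h (invStereo B w) := by
  have hy := ne_zero_of_mem_S2 (invStereo_mem_S2 B w)
  obtain ⟨c, hc⟩ := exists_laplacian_invStereo_eq_smul B w
  have htrace := stereoFactor_sq_smul_sum_e3 B w
    ((ContinuousLinearMap.coeLM ℝ).comp
      (fderiv ℝ (fderiv ℝ (homExt h)) (invStereo B w)).toLinearMap)
    (fderiv_fderiv_homExt_self hh hy)
  have hh₂ := (contDiffAt_homExt hh hy).of_le (m := 2) (WithTop.coe_le_coe.2 le_top)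
  rw [stereoRep_eq_homExt, laplacian_comp hh₂ (contDiffAt_invStereo B w), hc, map_smul,
    fderiv_homExt_self hh hy, smul_zero, add_zero, sphLap_eq_sum hh hy]
  exact htrace.symm

end Smooth

section Harmonic

variable (hh : IsHarmonicSphereMap h)

include hh

lemma norm_stereoRep : ‖stereoRep h B w‖ = 1 := mem_S2_iff.1 (hh.1.2 _ (invStereo_mem_S2 B w))

lemma inner_dirDeriv_stereoRep_self (v : ℂ) :
    ⟪dirDeriv v (stereoRep h B) w, stereoRep h B w⟫ = 0 :=
  inner_dirDeriv_eq_zero_of_norm_eq ((contDiff_stereoRep B hh.1.1).differentiable (by simp) w)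
    (fun w => norm_stereoRep B w hh) v

lemma inner_laplacian_dirDeriv_stereoRep (v : ℂ) :
    ⟪Δ (stereoRep h B) w, dirDeriv v (stereoRep h B) w⟫ = 0 := by
  have hharm := eq_neg_of_add_eq_zero_left (hh.2 _ (invStereo_mem_S2 B w))
  have hinner := inner_dirDeriv_stereoRep_self B w hh v
  rw [real_inner_comm] at hinner
  rw [laplacian_stereoRep B w hh.1.1, hharm, smul_neg, inner_neg_left, real_inner_smul_left,
    real_inner_smul_left]
  simp only [stereoRep] at hinner ⊢
  rw [hinner, mul_zero, mul_zero, neg_zero]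

lemma differentiable_hopfDifferential_stereoRep :
    Differentiable ℂ (hopfDifferential (stereoRep h B)) := fun w =>
  differentiableAt_complex_hopfDifferential
    ((contDiff_stereoRep B hh.1.1).contDiffAt.of_le (WithTop.coe_le_coe.2 le_top))
    (inner_laplacian_dirDeriv_stereoRep B w hh 1)
    (inner_laplacian_dirDeriv_stereoRep B w hh Complex.I)

omit hh in
lemma tendsto_stereoFactor_cocompact : Tendsto stereoFactor (cocompact ℂ) (nhds 0) := by
  have hsq : Tendsto (fun w : ℂ => 1 + ‖w‖ ^ 2) (cocompact ℂ) atTop :=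
    tendsto_atTop_add_const_left _ _
      ((tendsto_pow_atTop two_ne_zero).comp (tendsto_norm_cocompact_atTop (E := ℂ)))
  exact hsq.const_div_atTop 2

lemma hopfDifferential_stereoRep : hopfDifferential (stereoRep h B) w = 0 := by
  obtain ⟨M, hM⟩ := isCompact_S2.exists_bound_of_continuousOn (continuousOn_enDensity hh.1.1)
  -- Liouville: since `stereoFactor w → 0`, the entire Hopf differential tends to zero at infinity.
  refine (differentiable_hopfDifferential_stereoRep B hh).apply_eq_of_tendsto_cocompact w
    (squeeze_zero_norm (a := fun w => 2 * (stereoFactor w ^ 2 * M)) (fun w => ?_) ?_)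
  · refine norm_hopfDifferential_le.trans ?_
    rw [norm_dirDeriv_stereoRep_sq_add B w hh.1.1]
    gcongr
    exact (le_abs_self _).trans (hM _ (invStereo_mem_S2 B w))
  · simpa using ((tendsto_stereoFactor_cocompact.pow 2).mul_const M).const_mul 2

lemma norm_dirDeriv_one_stereoRep_eq :
    ‖dirDeriv 1 (stereoRep h B) w‖ = ‖dirDeriv Complex.I (stereoRep h B) w‖ :=
  (hopfDifferential_eq_zero_iff.1 (hopfDifferential_stereoRep B w hh)).1

lemma two_mul_norm_dirDeriv_stereoRep_sq :
    2 * ‖dirDeriv 1 (stereoRep h B) w‖ ^ 2 = stereoFactor w ^ 2 * enDensity h (invStereo B w) := by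
  rw [← norm_dirDeriv_stereoRep_sq_add B w hh.1.1, ← norm_dirDeriv_one_stereoRep_eq B w hh, two_mul]

end Harmonic

end StereoRep

/-! ### Harmonic maps are holomorphic or antiholomorphic -/

section Dbar

open Laplacian ComplexConjugate

/-- The Cauchy-Riemann operator `∂₁ + i ∂₂ = 2 ∂/∂z̄`. -/
def dbar (f : ℂ → ℂ) (w : ℂ) : ℂ := dirDeriv 1 f w + Complex.I * dirDeriv Complex.I f w

variable {f : ℂ → ℂ} {w : ℂ}

lemma dirDeriv_conj (hf : DifferentiableAt ℝ f w) (v : ℂ) :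
    dirDeriv v (fun z => conj (f z)) w = conj (dirDeriv v f w) :=
  dirDeriv_continuousLinearMap_apply (Complex.conjCLE : ℂ →L[ℝ] ℂ) hf v

lemma contDiffAt_conj {n : WithTop ℕ∞} (hf : ContDiffAt ℝ n f w) :
    ContDiffAt ℝ n (fun z => conj (f z)) w :=
  (Complex.conjCLE : ℂ →L[ℝ] ℂ).contDiff.contDiffAt.comp w hf

lemma laplacian_conj (hf : ContDiffAt ℝ 2 f w) :
    Δ (fun z => conj (f z)) w = conj (Δ f w) :=
  hf.laplacian_CLM_comp_left (l := (Complex.conjCLE : ℂ →L[ℝ] ℂ))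

lemma differentiableAt_conj_dbar (hf : ContDiffAt ℝ 2 f w) (hΔ : Δ f w = 0) :
    DifferentiableAt ℂ (fun z => conj (dbar f z)) w := by
  have hdiff := differentiableAt_dirDeriv hf
  have hdbar : DifferentiableAt ℝ (dbar f) w := (hdiff 1).add ((hdiff Complex.I).const_mul _)
  have hderiv : ∀ v, dirDeriv v (dbar f) w =
      dirDeriv v (dirDeriv 1 f) w + Complex.I * dirDeriv v (dirDeriv Complex.I f) w := fun v => by
    unfold dbar
    rw [dirDeriv, fderiv_fun_add (hdiff 1) ((hdiff Complex.I).const_mul _),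
      fderiv_const_mul (hdiff Complex.I)]
    rfl
  rw [laplacian_eq_dirDeriv hf] at hΔ
  rw [differentiableAt_complex_iff_differentiableAt_real]
  refine ⟨(Complex.conjCLE : ℂ →L[ℝ] ℂ).differentiableAt.comp w hdbar, ?_⟩
  change dirDeriv Complex.I (fun z => conj (dbar f z)) w =
    Complex.I * dirDeriv 1 (fun z => conj (dbar f z)) w
  rw [dirDeriv_conj hdbar, dirDeriv_conj hdbar, hderiv, hderiv, dirDeriv_comm hf 1 Complex.I]
  have hconj := congrArg conj hΔ
  simp only [map_add, map_mul, Complex.conj_I, map_zero] at hconj ⊢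
  linear_combination (-Complex.I) * hconj
    + conj (dirDeriv Complex.I (dirDeriv 1 f) w) * Complex.I_sq

lemma dirDeriv_one_sq_add_dirDeriv_I_sq_eq_zero (hconf : hopfDifferential f w = 0) :
    dirDeriv 1 f w ^ 2 + dirDeriv Complex.I f w ^ 2 = 0 := by
  obtain ⟨hnorm, hinner⟩ := hopfDifferential_eq_zero_iff.1 hconf
  have hnorm_sq : Complex.normSq (dirDeriv 1 f w) = Complex.normSq (dirDeriv Complex.I f w) := by
    rw [Complex.normSq_eq_norm_sq, hnorm, Complex.normSq_eq_norm_sq]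
  rw [Complex.normSq_apply, Complex.normSq_apply] at hnorm_sq
  simp only [Complex.inner, Complex.mul_re, Complex.conj_re, Complex.conj_im] at hinner
  rw [← Complex.normSq_eq_zero, sq, sq]
  simp only [Complex.normSq_apply, Complex.add_re, Complex.add_im, Complex.mul_re, Complex.mul_im]
  set a := dirDeriv 1 f w
  set b := dirDeriv Complex.I f w
  linear_combination (a.re * a.re + a.im * a.im - (b.re * b.re + b.im * b.im)) * hnorm_sq
    + 4 * (a.re * b.re + a.im * b.im) * hinner

lemma dbar_mul_conj_dbar_conj (hf : DifferentiableAt ℝ f w) (hconf : hopfDifferential f w = 0) :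
    dbar f w * conj (dbar (fun z => conj (f z)) w) = 0 := by
  simp only [dbar, dirDeriv_conj hf, map_add, map_mul, Complex.conj_conj, Complex.conj_I]
  linear_combination dirDeriv_one_sq_add_dirDeriv_I_sq_eq_zero hconf
    - dirDeriv Complex.I f w ^ 2 * Complex.I_sq

lemma dbar_eq_zero_or_dbar_conj_eq_zero {V : Set ℂ} (hVo : IsOpen V) (hVc : IsPreconnected V)
    (hf : ∀ w ∈ V, ContDiffAt ℝ 2 f w) (hconf : ∀ w ∈ V, hopfDifferential f w = 0)
    (hΔ : ∀ w ∈ V, Δ f w = 0) :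
    (∀ w ∈ V, dbar f w = 0) ∨ ∀ w ∈ V, dbar (fun z => conj (f z)) w = 0 := by
  have hf_an : AnalyticOnNhd ℂ (fun z => conj (dbar f z)) V :=
    DifferentiableOn.analyticOnNhd (fun w hw =>
      (differentiableAt_conj_dbar (hf w hw) (hΔ w hw)).differentiableWithinAt) hVo
  have hconj_an : AnalyticOnNhd ℂ (fun z => conj (dbar (fun z => conj (f z)) z)) V :=
    DifferentiableOn.analyticOnNhd (fun w hw =>
      (differentiableAt_conj_dbar (contDiffAt_conj (hf w hw))
        (by rw [laplacian_conj (hf w hw), hΔ w hw, map_zero])).differentiableWithinAt) hVo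
  have hmul : ∀ w ∈ V, conj (dbar f w) * conj (dbar (fun z => conj (f z)) w) = 0 := fun w hw => by
    rcases mul_eq_zero.1 (dbar_mul_conj_dbar_conj
      ((hf w hw).differentiableAt two_ne_zero) (hconf w hw)) with h | h <;> simp [h]
  simpa only [map_eq_zero] using hf_an.eq_zero_or_eq_zero_of_mul_eq_zero hconj_an hmul hVc

lemma mem_connectedComponentIn_of_mem_closure {X : Type*} [TopologicalSpace X] {U : Set X}
    {x y : X} (hx : x ∈ U) (hy : y ∈ U) (hcl : y ∈ closure (connectedComponentIn U x)) :
    y ∈ connectedComponentIn U x := by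
  have hpre : IsPreconnected (insert y (connectedComponentIn U x)) :=
    isPreconnected_connectedComponentIn.subset_closure (subset_insert _ _)
      (insert_subset hcl subset_closure)
  exact hpre.subset_connectedComponentIn (mem_insert_of_mem _ (mem_connectedComponentIn hx))
    (insert_subset hy (connectedComponentIn_subset U x)) (mem_insert _ _)

end Dbar

section StereoCoord

open Laplacian ComplexConjugate

section InvStereoComp

variable {T : Frame} {f : ℂ → ℂ} {w : ℂ}

lemma hopfDifferential_invStereo_comp (hf : DifferentiableAt ℝ f w) :
    hopfDifferential (fun z => invStereo T (f z)) w =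
      stereoFactor (f w) ^ 2 * hopfDifferential f w := by
  have hψ : DifferentiableAt ℝ (invStereo T) (f w) :=
    (contDiff_invStereo T).differentiable (by simp) _
  simp only [hopfDifferential, dirDeriv_comp hψ hf, norm_fderiv_invStereo_apply,
    inner_fderiv_invStereo_apply]
  push_cast
  ring

omit T f w in
lemma apply_self_add_apply_I_mul_self {F : Type*} [AddCommGroup F] [Module ℝ F]
    (Q : ℂ →ₗ[ℝ] ℂ →ₗ[ℝ] F) (a : ℂ) :
    Q a a + Q (Complex.I * a) (Complex.I * a) =
      Complex.normSq a • (Q 1 1 + Q Complex.I Complex.I) := by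
  obtain ⟨p, q⟩ := a
  have ha : (⟨p, q⟩ : ℂ) = p • 1 + q • Complex.I := by rw [Complex.ext_iff]; simp
  have hIa : Complex.I * ⟨p, q⟩ = p • Complex.I - q • 1 := by rw [Complex.ext_iff]; simp
  rw [hIa, Complex.normSq_mk, ha]
  simp only [map_add, map_sub, map_smul, LinearMap.add_apply, LinearMap.sub_apply,
    LinearMap.smul_apply]
  module

omit T in
lemma apply_self_add_apply_self_of_hopfDifferential_eq_zero {F : Type*} [AddCommGroup F]
    [Module ℝ F] (Q : ℂ →ₗ[ℝ] ℂ →ₗ[ℝ] F) (hconf : hopfDifferential f w = 0) :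
    Q (dirDeriv 1 f w) (dirDeriv 1 f w) + Q (dirDeriv Complex.I f w) (dirDeriv Complex.I f w) =
      Complex.normSq (dirDeriv 1 f w) • (Q 1 1 + Q Complex.I Complex.I) := by
  rw [← apply_self_add_apply_I_mul_self]
  have hmul : (dirDeriv Complex.I f w - Complex.I * dirDeriv 1 f w) *
      (dirDeriv Complex.I f w + Complex.I * dirDeriv 1 f w) = 0 := by
    linear_combination dirDeriv_one_sq_add_dirDeriv_I_sq_eq_zero hconf
      - dirDeriv 1 f w ^ 2 * Complex.I_sq
  rcases mul_eq_zero.1 hmul with h | h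
  · rw [sub_eq_zero.1 h]
  · rw [eq_neg_of_add_eq_zero_left h, map_neg, map_neg, LinearMap.neg_apply, neg_neg]

lemma laplacian_eq_zero_of_laplacian_invStereo_comp (hf : ContDiffAt ℝ 2 f w)
    (hconf : hopfDifferential f w = 0) {c : ℝ}
    (hΔ : Δ (fun z => invStereo T (f z)) w = c • invStereo T (f w)) : Δ f w = 0 := by
  obtain ⟨c', hc'⟩ := exists_laplacian_invStereo_eq_smul T (f w)
  have htrace := apply_self_add_apply_self_of_hopfDifferential_eq_zero
    ((ContinuousLinearMap.coeLM ℝ).comp (fderiv ℝ (fderiv ℝ (invStereo T)) (f w)).toLinearMap) hconf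
  have hnormal : fderiv ℝ (invStereo T) (f w) (Δ f w) =
      (c - Complex.normSq (dirDeriv 1 f w) * c') • invStereo T (f w) := by
    rw [InnerProductSpace.laplacian_eq_iteratedFDeriv_complexPlane] at hc'
    simp only [iteratedFDeriv_two_apply, Matrix.cons_val_zero, Matrix.cons_val_one] at hc'
    simp only [LinearMap.comp_apply, ContinuousLinearMap.coe_coe, ContinuousLinearMap.coeLM_apply]
      at htrace
    rw [laplacian_comp (contDiffAt_invStereo T (f w)) hf, htrace, hc', smul_smul] at hΔ
    rw [sub_smul, ← hΔ, add_sub_cancel_left]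
  have hzero : ‖fderiv ℝ (invStereo T) (f w) (Δ f w)‖ ^ 2 = 0 := by
    rw [← real_inner_self_eq_norm_sq]
    nth_rw 2 [hnormal]
    have htangent := inner_dirDeriv_invStereo_self T (f w) (Δ f w)
    rw [dirDeriv] at htangent
    rw [real_inner_smul_right, htangent, mul_zero]
  rw [norm_fderiv_invStereo_apply] at hzero
  simpa [(stereoFactor_pos _).ne'] using hzero

end InvStereoComp

/-- A map of the sphere read in the stereographic charts `invStereo B` of its domain and
`stereoProj T` of its target. -/
def stereoCoord (h : E3 → E3) (B T : Frame) : ℂ → ℂ := fun w => stereoProj T (stereoRep h B w)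

/-- The parameters which `stereoRep h B` does not send to the pole of the chart `stereoProj T`. -/
def stereoDomain (h : E3 → E3) (B T : Frame) : Set ℂ := {w | stereoRep h B w ≠ -T 2}

variable {h : E3 → E3} (B T : Frame) {w : ℂ}

lemma isOpen_stereoDomain (hh : ContDiff ℝ (⊤ : ℕ∞) h) : IsOpen (stereoDomain h B T) :=
  isOpen_ne.preimage (contDiff_stereoRep B hh).continuous

section Harmonic

variable {B T} (hh : IsHarmonicSphereMap h) (hw : w ∈ stereoDomain h B T)

include hh hw

lemma invStereo_stereoCoord : invStereo T (stereoCoord h B T w) = stereoRep h B w :=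
  invStereo_stereoProj T (mem_S2_iff.2 (norm_stereoRep B w hh)) hw

lemma contDiffAt_stereoCoord : ContDiffAt ℝ (⊤ : ℕ∞) (stereoCoord h B T) w :=
  (contDiffAt_stereoProj (one_add_inner_apply_two_ne_zero
    (mem_S2_iff.2 (norm_stereoRep B w hh)) hw)).comp w (contDiff_stereoRep B hh.1.1).contDiffAt

lemma differentiableAt_stereoCoord : DifferentiableAt ℝ (stereoCoord h B T) w :=
  (contDiffAt_stereoCoord hh hw).differentiableAt (by simp)

lemma invStereo_stereoCoord_eventuallyEq :
    (fun z => invStereo T (stereoCoord h B T z)) =ᶠ[nhds w] stereoRep h B := by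
  filter_upwards [(isOpen_stereoDomain B T hh.1.1).mem_nhds hw] with z hz
    using invStereo_stereoCoord hh hz

lemma norm_stereoCoord_le : ‖stereoCoord h B T w‖ ≤ 2 * ‖stereoRep h B w + T 2‖⁻¹ := by
  have hsq := norm_invStereo_add_apply_two_sq T (stereoCoord h B T w)
  rw [invStereo_stereoCoord hh hw, stereoFactor] at hsq
  have hpos : 0 < ‖stereoRep h B w + T 2‖ :=
    norm_pos_iff.2 fun h0 => hw (eq_neg_of_add_eq_zero_left h0)
  rw [← div_eq_mul_inv, le_div_iff₀ hpos]
  refine abs_le_of_sq_le_sq' ?_ two_pos.le |>.2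
  rw [mul_pow, hsq]
  field_simp
  nlinarith [sq_nonneg ‖stereoCoord h B T w‖]

lemma norm_dirDeriv_stereoRep_le (v : ℂ) :
    ‖dirDeriv v (stereoRep h B) w‖ ≤ 2 * ‖dirDeriv v (stereoCoord h B T) w‖ := by
  rw [dirDeriv, ← (invStereo_stereoCoord_eventuallyEq hh hw).fderiv_eq, ← dirDeriv,
    dirDeriv_comp ((contDiff_invStereo T).differentiable (by simp) _)
      (differentiableAt_stereoCoord hh hw), norm_fderiv_invStereo_apply]
  gcongr
  exact stereoFactor_le_two _

lemma hopfDifferential_stereoCoord : hopfDifferential (stereoCoord h B T) w = 0 := by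
  have hcomp := hopfDifferential_invStereo_comp (T := T) (differentiableAt_stereoCoord hh hw)
  have hrep := hopfDifferential_stereoRep B w hh
  simp only [hopfDifferential, dirDeriv,
    (invStereo_stereoCoord_eventuallyEq hh hw).fderiv_eq] at hcomp hrep ⊢
  rw [hrep, eq_comm, mul_eq_zero] at hcomp
  exact hcomp.resolve_left (by exact_mod_cast (pow_pos (stereoFactor_pos _) 2).ne')

lemma laplacian_stereoCoord : Δ (stereoCoord h B T) w = 0 := by
  refine laplacian_eq_zero_of_laplacian_invStereo_comp (T := T)
    (c := -(stereoFactor w ^ 2 * enDensity h (invStereo B w)))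
    ((contDiffAt_stereoCoord hh hw).of_le (WithTop.coe_le_coe.2 le_top))
    (hopfDifferential_stereoCoord hh hw) ?_
  have hharm := eq_neg_of_add_eq_zero_left (hh.2 _ (invStereo_mem_S2 B w))
  rw [(InnerProductSpace.laplacian_congr_nhds
      (invStereo_stereoCoord_eventuallyEq hh hw)).self_of_nhds,
    invStereo_stereoCoord hh hw, laplacian_stereoRep B w hh.1.1, hharm, smul_neg, smul_smul,
    neg_smul]
  rfl

end Harmonic

lemma exists_dbar_eq_zero (hh : IsHarmonicSphereMap h) (h0 : 0 ∈ stereoDomain h B T) :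
    ∃ g : ℂ → ℂ, (∀ w ∈ stereoDomain h B T, ContDiffAt ℝ (⊤ : ℕ∞) g w) ∧
      (∀ w ∈ connectedComponentIn (stereoDomain h B T) 0, dbar g w = 0) ∧
      (∀ w ∈ stereoDomain h B T, ‖g w‖ ≤ 2 * ‖stereoRep h B w + T 2‖⁻¹) ∧
      ‖dirDeriv 1 (stereoRep h B) 0‖ ≤ 2 * ‖dirDeriv 1 g 0‖ := by
  have hsub := connectedComponentIn_subset (stereoDomain h B T) 0
  rcases dbar_eq_zero_or_dbar_conj_eq_zero (isOpen_stereoDomain B T hh.1.1).connectedComponentIn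
    isPreconnected_connectedComponentIn
    (fun w hw => (contDiffAt_stereoCoord hh (hsub hw)).of_le (WithTop.coe_le_coe.2 le_top))
    (fun w hw => hopfDifferential_stereoCoord hh (hsub hw))
    (fun w hw => laplacian_stereoCoord hh (hsub hw)) with hhol | hanti
  · exact ⟨stereoCoord h B T, fun w hw => contDiffAt_stereoCoord hh hw, hhol,
      fun w hw => norm_stereoCoord_le hh hw, norm_dirDeriv_stereoRep_le hh h0 1⟩
  · refine ⟨fun w => conj (stereoCoord h B T w),
      fun w hw => contDiffAt_conj (contDiffAt_stereoCoord hh hw), hanti, fun w hw => ?_, ?_⟩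
    · rw [Complex.norm_conj]
      exact norm_stereoCoord_le hh hw
    · rw [dirDeriv_conj (differentiableAt_stereoCoord hh h0), Complex.norm_conj]
      exact norm_dirDeriv_stereoRep_le hh h0 1

end StereoCoord

/-! ### A Cauchy-Pompeiu inequality -/

section DbarCalculus

open ComplexConjugate

variable {f g : ℂ → ℂ} {w : ℂ}

lemma continuous_dbar (hf : ContDiff ℝ 1 f) : Continuous (dbar f) := by
  have hfderiv : Continuous (fderiv ℝ f) := hf.continuous_fderiv one_ne_zero
  exact (hfderiv.clm_apply continuous_const).add
    (continuous_const.mul (hfderiv.clm_apply continuous_const))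

lemma dbar_eq_of_eventuallyEq (hfg : f =ᶠ[nhds w] g) : dbar f w = dbar g w := by
  simp only [dbar, dirDeriv, hfg.fderiv_eq]

lemma dbar_const (c : ℂ) : dbar (fun _ => c) w = 0 := by simp [dbar, dirDeriv]

lemma dbar_mul (hf : DifferentiableAt ℝ f w) (hg : DifferentiableAt ℝ g w) :
    dbar (fun z => f z * g z) w = dbar f w * g w + f w * dbar g w := by
  simp only [dbar, dirDeriv, fderiv_fun_mul hf hg, add_apply, smul_apply, smul_eq_mul]
  ring

lemma differentiableAt_complex_iff_dbar_eq_zero (hf : DifferentiableAt ℝ f w) :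
    DifferentiableAt ℂ f w ↔ dbar f w = 0 := by
  rw [differentiableAt_complex_iff_differentiableAt_real, and_iff_right hf, dbar, smul_eq_mul]
  change dirDeriv Complex.I f w = Complex.I * dirDeriv 1 f w ↔ _
  constructor <;> intro h
  · linear_combination Complex.I * h + dirDeriv 1 f w * Complex.I_sq
  · linear_combination (-Complex.I) * h + dirDeriv Complex.I f w * Complex.I_sq

lemma dbar_comp {φ : ℂ → ℂ} {φ' : ℂ} (hf : DifferentiableAt ℝ f (φ w)) (hφ : HasDerivAt φ φ' w) :
    dbar (fun z => f (φ z)) w = conj φ' * dbar f (φ w) := by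
  have hderiv : ∀ v, dirDeriv v (fun z => f (φ z)) w = fderiv ℝ f (φ w) (φ' * v) := fun v => by
    rw [dirDeriv_comp hf hφ.complexToReal_fderiv.differentiableAt, dirDeriv,
      hφ.complexToReal_fderiv.fderiv]
    simp
  have happly : ∀ a, fderiv ℝ f (φ w) a =
      a.re * dirDeriv 1 f (φ w) + a.im * dirDeriv Complex.I f (φ w) := fun a => by
    conv_lhs => rw [show a = a.re • (1 : ℂ) + a.im • Complex.I by simp]
    rw [map_add, map_smul, map_smul]
    simp [dirDeriv]
  have hconj : conj φ' = φ'.re - φ'.im * Complex.I := by rw [Complex.ext_iff]; simp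
  simp only [dbar, hderiv, happly, hconj, mul_one, Complex.mul_re, Complex.I_re, mul_zero,
    Complex.I_im, zero_sub, Complex.ofReal_neg, neg_mul, Complex.mul_im, add_zero]
  linear_combination (φ'.im * dirDeriv Complex.I f (φ w)) * Complex.I_sq

end DbarCalculus

/-- The coefficient of `dζ` in the pullback of the form `f(w) dw / w²` by `w = exp ζ`. -/
def logPullback (f : ℂ → ℂ) (ζ : ℂ) : ℂ := f (Complex.exp ζ) * Complex.exp (-ζ)

section LogPullback

variable {f : ℂ → ℂ}

lemma contDiff_logPullback {n : WithTop ℕ∞} (hf : ContDiff ℝ n f) :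
    ContDiff ℝ n (logPullback f) := by
  have hexp : ContDiff ℝ n Complex.exp := (Complex.contDiff_exp (𝕜 := ℂ)).restrict_scalars ℝ
  exact (hf.comp hexp).mul (hexp.comp contDiff_neg)

lemma periodic_logPullback : Function.Periodic (logPullback f) (2 * π * Complex.I) := fun ζ => by
  rw [logPullback, logPullback, Complex.exp_periodic ζ, Complex.exp_neg, Complex.exp_periodic ζ,
    Complex.exp_neg]

lemma norm_dbar_logPullback (hf : Differentiable ℝ f) (ζ : ℂ) :
    ‖dbar (logPullback f) ζ‖ = ‖dbar f (Complex.exp ζ)‖ := by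
  have hexp := Complex.hasDerivAt_exp ζ
  have hexp_neg : DifferentiableAt ℂ (fun ζ => Complex.exp (-ζ)) ζ := by fun_prop
  have hexp_neg' := hexp_neg.restrictScalars ℝ
  have hcomp : DifferentiableAt ℝ (fun ζ => f (Complex.exp ζ)) ζ :=
    (hf _).comp ζ hexp.complexToReal_fderiv.differentiableAt
  unfold logPullback
  rw [dbar_mul hcomp hexp_neg',
    (differentiableAt_complex_iff_dbar_eq_zero hexp_neg').1 hexp_neg, dbar_comp (hf _) hexp,
    mul_zero, add_zero, norm_mul, norm_mul, Complex.norm_conj, mul_right_comm, ← norm_mul,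
    ← Complex.exp_add, add_neg_cancel, Complex.exp_zero, norm_one, one_mul]

lemma exp_log_add_mul_I {r : ℝ} (hr : 0 < r) (y : ℝ) :
    Complex.exp (Real.log r + y * Complex.I) = circleMap 0 r y := by
  rw [Complex.exp_add, ← Complex.ofReal_exp, Real.exp_log hr, circleMap, zero_add]

lemma integral_logPullback_eq {r δ : ℝ} (hf : ∀ w ∈ ball (0 : ℂ) r, DifferentiableAt ℂ f w)
    (hδ : 0 < δ) (hδr : δ < r) :
    ∫ y in (0 : ℝ)..2 * π, logPullback f (Real.log δ + y * Complex.I) =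
      2 * π * deriv f 0 := by
  have hcauchy := Complex.two_pi_I_inv_smul_circleIntegral_sub_sq_inv_smul_of_differentiable
    isOpen_ball (closedBall_subset_ball hδr) (fun w hw => (hf w hw).differentiableWithinAt)
    (mem_ball_self hδ : (0 : ℂ) ∈ ball 0 δ)
  have hintegrand : ∀ y : ℝ, deriv (circleMap 0 δ) y •
      ((circleMap 0 δ y - 0) ^ 2)⁻¹ • f (circleMap 0 δ y) =
        Complex.I * logPullback f (Real.log δ + y * Complex.I) := fun y => by
    have hne : circleMap 0 δ y ≠ 0 := circleMap_ne_center hδ.ne'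
    rw [logPullback, Complex.exp_neg, exp_log_add_mul_I hδ, deriv_circleMap, sub_zero,
      smul_eq_mul, smul_eq_mul]
    field_simp
  simp only [circleIntegral, hintegrand] at hcauchy
  rw [intervalIntegral.integral_const_mul, smul_eq_mul] at hcauchy
  generalize ∫ y in (0 : ℝ)..2 * π, logPullback f (Real.log δ + y * Complex.I) = J at hcauchy ⊢
  rw [← hcauchy]
  have hπ : (π : ℂ) ≠ 0 := by exact_mod_cast pi_ne_zero
  field_simp

lemma norm_integral_logPullback_le {M r : ℝ} (hM : ∀ w, ‖f w‖ ≤ M) (hr : 0 < r) :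
    ‖∫ y in (0 : ℝ)..2 * π, logPullback f (Real.log r + y * Complex.I)‖ ≤ M / r * (2 * π) := by
  have hbound : ∀ y : ℝ, ‖logPullback f (Real.log r + y * Complex.I)‖ ≤ M / r := fun y => by
    rw [logPullback, norm_mul, Complex.exp_neg, exp_log_add_mul_I hr, norm_inv,
      norm_circleMap_zero, abs_of_pos hr, ← div_eq_mul_inv]
    gcongr
    exact hM _
  simpa [abs_of_pos pi_pos] using
    intervalIntegral.norm_integral_le_of_norm_le_const (a := 0) (b := 2 * π) fun y _ => hbound y

end LogPullback

lemma integral_sub_integral_eq_of_periodic {G : ℂ → ℂ} (hG : ContDiff ℝ 1 G)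
    (hper : Function.Periodic G (2 * π * Complex.I)) (a b : ℝ) :
    (∫ y in (0 : ℝ)..2 * π, G (b + y * Complex.I)) - ∫ y in (0 : ℝ)..2 * π, G (a + y * Complex.I) =
      ∫ x in a..b, ∫ y in (0 : ℝ)..2 * π, dbar G (x + y * Complex.I) := by
  have hdbar : ∀ ζ, Complex.I • fderiv ℝ G ζ 1 - fderiv ℝ G ζ Complex.I =
      Complex.I * dbar G ζ := fun ζ => by
    rw [smul_eq_mul, dbar, dirDeriv, dirDeriv]
    linear_combination -(fderiv ℝ G ζ Complex.I) * Complex.I_sq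
  have hstokes := Complex.integral_boundary_rect_of_differentiableOn_real G (a : ℂ)
    (b + (2 * π : ℝ) * Complex.I) (hG.differentiable one_ne_zero).differentiableOn
    (by simp only [hdbar]
        exact (continuous_const.mul (continuous_dbar hG)).continuousOn.integrableOn_compact
          (isCompact_uIcc.reProdIm isCompact_uIcc))
  have hper' : ∀ x : ℝ, G (x + 2 * π * Complex.I) = G x := fun x => hper x
  simp only [Complex.ofReal_im, Complex.ofReal_zero, zero_mul, add_zero, Complex.ofReal_re,
    Complex.ofReal_mul, Complex.ofReal_ofNat, Complex.add_re, Complex.mul_re, Complex.re_ofNat,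
    Complex.im_ofNat, mul_zero, sub_zero, Complex.I_re, Complex.mul_im, Complex.I_im, mul_one,
    sub_self, Complex.add_im, zero_add, hper', hdbar,
    intervalIntegral.integral_const_mul] at hstokes
  rw [← smul_sub, smul_eq_mul] at hstokes
  exact mul_left_cancel₀ Complex.I_ne_zero hstokes

lemma abs_det_smul_one (a : ℂ) : |(a • (1 : ℂ →L[ℝ] ℂ)).det| = ‖a‖ ^ 2 := by
  rw [← Complex.normSq_eq_norm_sq, ← abs_of_nonneg (Complex.normSq_nonneg a),
    ← Algebra.norm_complex_apply, Algebra.norm_apply]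
  rfl

lemma injOn_exp_strip : InjOn Complex.exp {ζ | ζ.im ∈ Ioc 0 (2 * π)} := by
  intro ζ hζ ξ hξ h
  have hshift : ∀ x : ℂ, (x - π * Complex.I).im = x.im - π := fun x => by simp
  refine sub_left_injective (Complex.exp_inj_of_neg_pi_lt_of_le_pi (x := ζ - π * Complex.I)
    (y := ξ - π * Complex.I) ?_ ?_ ?_ ?_ (by simp only [Complex.exp_sub, h])) <;>
  · rw [hshift]
    linarith [hζ.1, hζ.2, hξ.1, hξ.2]

lemma lintegral_lintegral_exp_le (a b : ℝ) {f : ℂ → ENNReal} (hf : Measurable f) :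
    ∫⁻ x in Ioc a b, ∫⁻ y in Ioc (0 : ℝ) (2 * π),
      ENNReal.ofReal (‖Complex.exp (x + y * Complex.I)‖ ^ 2) * f (Complex.exp (x + y * Complex.I)) ≤
      ∫⁻ w, f w := by
  set g : ℂ → ENNReal := fun ζ => ENNReal.ofReal (‖Complex.exp ζ‖ ^ 2) * f (Complex.exp ζ) with hg
  have hg_meas : Measurable g := by fun_prop
  have hrect : MeasurableSet (Ioc a b ×ˢ Ioc (0 : ℝ) (2 * π)) :=
    measurableSet_Ioc.prod measurableSet_Ioc
  set e := Complex.measurableEquivRealProd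
  have hge : Measurable fun q => g (e.symm q) := hg_meas.comp e.symm.measurable
  have hinj : InjOn Complex.exp (e ⁻¹' (Ioc a b ×ˢ Ioc (0 : ℝ) (2 * π))) :=
    injOn_exp_strip.mono fun ζ hζ => hζ.2
  have he : ∀ x y : ℝ, e.symm (x, y) = x + y * Complex.I := fun x y => by
    apply Complex.ext <;> simp [e]
  calc ∫⁻ x in Ioc a b, ∫⁻ y in Ioc (0 : ℝ) (2 * π), g (x + y * Complex.I)
      = ∫⁻ q in Ioc a b ×ˢ Ioc (0 : ℝ) (2 * π), g (e.symm q) := by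
        rw [Measure.volume_eq_prod, ← Measure.prod_restrict,
          lintegral_prod _ hge.aemeasurable]
        simp only [he]
    _ = ∫⁻ ζ in e ⁻¹' (Ioc a b ×ˢ Ioc (0 : ℝ) (2 * π)), g ζ := by
        rw [← Complex.volume_preserving_equiv_real_prod.setLIntegral_comp_preimage hrect hge]
        simp only [e, MeasurableEquiv.symm_apply_apply]
    _ = ∫⁻ w in Complex.exp '' (e ⁻¹' (Ioc a b ×ˢ Ioc (0 : ℝ) (2 * π))), f w := by
        rw [lintegral_image_eq_lintegral_abs_det_fderiv_mul volume (e.measurable hrect)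
          (fun ζ _ => (Complex.hasDerivAt_exp ζ).complexToReal_fderiv.hasFDerivWithinAt) hinj f]
        simp only [abs_det_smul_one, hg]
    _ ≤ ∫⁻ w, f w := setLIntegral_le_lintegral _ _

lemma enorm_integral_integral_dbar_logPullback_le {f : ℂ → ℂ} (hf : ContDiff ℝ 1 f) {a b : ℝ}
    (hab : a ≤ b) :
    ‖∫ x in a..b, ∫ y in (0 : ℝ)..2 * π, dbar (logPullback f) (x + y * Complex.I)‖ₑ ≤
      ∫⁻ w, ENNReal.ofReal (‖dbar f w‖ / ‖w‖ ^ 2) := by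
  have hmeas : Measurable fun w => ENNReal.ofReal (‖dbar f w‖ / ‖w‖ ^ 2) := by
    have := (continuous_dbar hf).measurable
    fun_prop
  refine le_trans ?_ (lintegral_lintegral_exp_le a b hmeas)
  rw [intervalIntegral.integral_of_le hab]
  refine (enorm_integral_le_lintegral_enorm _).trans (lintegral_mono fun x => ?_)
  rw [intervalIntegral.integral_of_le two_pi_pos.le]
  refine (enorm_integral_le_lintegral_enorm _).trans (lintegral_mono fun y => ?_)
  have hne : ‖Complex.exp (x + y * Complex.I)‖ ^ 2 ≠ 0 := by simp
  rw [← ofReal_norm, norm_dbar_logPullback (hf.differentiable one_ne_zero),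
    ← ENNReal.ofReal_mul (sq_nonneg _), mul_div_cancel₀ _ hne]

/-- Stokes' theorem for the form `f(w) dw / w²` on an annulus, written in logarithmic coordinates;
the inner circle contributes the derivative at `0`, the outer one vanishes in the limit. -/
lemma two_pi_mul_norm_dirDeriv_le_lintegral_dbar {f : ℂ → ℂ} (hf : ContDiff ℝ 1 f) {M r : ℝ}
    (hM : ∀ w, ‖f w‖ ≤ M) (hr : 0 < r) (hhol : ∀ w ∈ ball (0 : ℂ) r, dbar f w = 0) :
    ENNReal.ofReal (2 * π * ‖dirDeriv 1 f 0‖) ≤ ∫⁻ w, ENNReal.ofReal (‖dbar f w‖ / ‖w‖ ^ 2) := by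
  set A := ∫⁻ w, ENNReal.ofReal (‖dbar f w‖ / ‖w‖ ^ 2)
  have hdiff : ∀ w ∈ ball (0 : ℂ) r, DifferentiableAt ℂ f w := fun w hw =>
    (differentiableAt_complex_iff_dbar_eq_zero (hf.differentiable one_ne_zero w)).2 (hhol w hw)
  have hderiv : dirDeriv 1 f 0 = deriv f 0 := by
    rw [dirDeriv, (hdiff 0 (mem_ball_self hr)).fderiv_restrictScalars ℝ]
    exact fderiv_apply_one_eq_deriv
  have hannulus : ∀ T, r ≤ T →
      ENNReal.ofReal (2 * π * ‖dirDeriv 1 f 0‖) ≤ ENNReal.ofReal (M / T * (2 * π)) + A := by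
    intro T hT
    have hT0 : 0 < T := hr.trans_le hT
    have hlog : Real.log (r / 2) ≤ Real.log T :=
      Real.log_le_log (half_pos hr) ((half_le_self hr.le).trans hT)
    have hstokes := integral_sub_integral_eq_of_periodic (contDiff_logPullback hf)
      periodic_logPullback (Real.log (r / 2)) (Real.log T)
    rw [integral_logPullback_eq hdiff (half_pos hr) (half_lt_self hr), sub_eq_iff_eq_add,
      ← sub_eq_iff_eq_add'] at hstokes
    calc ENNReal.ofReal (2 * π * ‖dirDeriv 1 f 0‖) = ‖2 * π * deriv f 0‖ₑ := by
          rw [← ofReal_norm, hderiv]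
          simp [abs_of_pos pi_pos]
      _ ≤ _ := by
          rw [← hstokes]
          refine enorm_sub_le.trans (add_le_add ?_
            (enorm_integral_integral_dbar_logPullback_le hf hlog))
          rw [← ofReal_norm]
          exact ENNReal.ofReal_le_ofReal (norm_integral_logPullback_le hM hT0)
  have hlim : Tendsto (fun T : ℝ => ENNReal.ofReal (M / T * (2 * π)) + A) atTop
      (nhds (ENNReal.ofReal (0 * (2 * π)) + A)) :=
    (ENNReal.tendsto_ofReal
      ((tendsto_const_nhds.div_atTop tendsto_id).mul_const _)).add tendsto_const_nhds
  simpa using ge_of_tendsto hlim (eventually_atTop.2 ⟨r, hannulus⟩)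

/-! ### The pointwise energy estimate -/

section Gluing

variable {α β : Type*} [TopologicalSpace α] [Zero β] {U : Set α} {x w : α} {f : α → β}

lemma indicator_connectedComponentIn_eventuallyEq_of_mem [LocallyConnectedSpace α]
    (hU : IsOpen U) (hw : w ∈ connectedComponentIn U x) :
    (connectedComponentIn U x).indicator f =ᶠ[nhds w] f :=
  (eqOn_indicator).eventuallyEq_of_mem (hU.connectedComponentIn.mem_nhds hw)

lemma indicator_connectedComponentIn_eventuallyEq_zero (hx : x ∈ U) (hf : tsupport f ⊆ U)
    (hw : w ∉ connectedComponentIn U x) :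
    (connectedComponentIn U x).indicator f =ᶠ[nhds w] 0 := by
  by_cases hwU : w ∈ U
  · have hcl : w ∉ closure (connectedComponentIn U x) := fun hcl =>
      hw (mem_connectedComponentIn_of_mem_closure hx hwU hcl)
    filter_upwards [isClosed_closure.isOpen_compl.mem_nhds hcl] with z hz
      using indicator_of_notMem (fun hz' => hz (subset_closure hz')) f
  · filter_upwards [notMem_tsupport_iff_eventuallyEq.1 fun hwf => hwU (hf hwf)] with z hz
    rw [indicator_apply_eq_zero.2 fun _ => hz, Pi.zero_apply]

end Gluing

lemma contDiff_indicator_connectedComponentIn {E F : Type*} [NormedAddCommGroup E]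
    [NormedSpace ℝ E] [NormedAddCommGroup F] [NormedSpace ℝ F] {n : WithTop ℕ∞} {U : Set E}
    {x : E} {f : E → F} (hU : IsOpen U) (hx : x ∈ U) (hfU : tsupport f ⊆ U)
    (hf : ∀ w ∈ U, ContDiffAt ℝ n f w) : ContDiff ℝ n ((connectedComponentIn U x).indicator f) := by
  refine contDiff_iff_contDiffAt.2 fun w => ?_
  by_cases hw : w ∈ connectedComponentIn U x
  · exact (hf w (connectedComponentIn_subset U x hw)).congr_of_eventuallyEq
      (indicator_connectedComponentIn_eventuallyEq_of_mem hU hw)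
  · exact contDiffAt_const.congr_of_eventuallyEq
      (indicator_connectedComponentIn_eventuallyEq_zero hx hfU hw)

lemma two_pi_mul_norm_dirDeriv_le_lintegral_dbar_cutoff {U : Set ℂ} {X g : ℂ → ℂ}
    {a : ℂ → ℝ} {M : ℝ} (hU : IsOpen U) (h0 : 0 ∈ U) (hX : ContDiff ℝ 1 X)
    (hX1 : X =ᶠ[nhds 0] fun _ => 1) (hXU : tsupport X ⊆ U) (hg : ∀ w ∈ U, ContDiffAt ℝ 1 g w)
    (hhol : ∀ w ∈ connectedComponentIn U 0, dbar g w = 0) (ha : ∀ w, 0 ≤ a w)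
    (hga : ∀ w ∈ U, ‖g w‖ ≤ a w) (hM : ∀ w, ‖X w‖ * a w ≤ M) :
    ENNReal.ofReal (2 * π * ‖dirDeriv 1 g 0‖) ≤
      ∫⁻ w, ENNReal.ofReal (‖dbar X w‖ * a w / ‖w‖ ^ 2) := by
  set V := connectedComponentIn U 0
  have hVU : V ⊆ U := connectedComponentIn_subset U 0
  have h0V : 0 ∈ V := mem_connectedComponentIn h0
  set F := V.indicator fun w => X w * g w with hF
  have hF_mem : ∀ w ∈ V, F =ᶠ[nhds w] fun w => X w * g w := fun w hw =>
    indicator_connectedComponentIn_eventuallyEq_of_mem hU hw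
  have hsupp : tsupport (fun w => X w * g w) ⊆ U := (tsupport_mul_subset_left).trans hXU
  have hF_smooth : ContDiff ℝ 1 F := contDiff_indicator_connectedComponentIn hU h0 hsupp
    fun w hw => hX.contDiffAt.mul (hg w hw)
  have hF_bdd : ∀ w, ‖F w‖ ≤ M := fun w => by
    by_cases hw : w ∈ V
    · rw [hF, indicator_of_mem hw, norm_mul]
      exact (mul_le_mul_of_nonneg_left (hga w (hVU hw)) (norm_nonneg _)).trans (hM w)
    · rw [hF, indicator_of_notMem hw, norm_zero]
      exact (mul_nonneg (norm_nonneg _) (ha w)).trans (hM w)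
  have hF_dbar : ∀ w, ‖dbar F w‖ ≤ ‖dbar X w‖ * a w := fun w => by
    by_cases hw : w ∈ V
    · rw [dbar_eq_of_eventuallyEq (hF_mem w hw), dbar_mul (hX.differentiable one_ne_zero w)
        ((hg w (hVU hw)).differentiableAt one_ne_zero), hhol w hw, mul_zero, add_zero, norm_mul]
      exact mul_le_mul_of_nonneg_left (hga w (hVU hw)) (norm_nonneg _)
    · rw [dbar_eq_of_eventuallyEq (indicator_connectedComponentIn_eventuallyEq_zero h0 hsupp hw)]
      exact (norm_le_zero_iff.2 (dbar_const 0)).trans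
        (mul_nonneg (norm_nonneg _) (ha w))
  have hF_hol : ∀ᶠ w in nhds 0, dbar F w = 0 := by
    filter_upwards [hX1.eventuallyEq_nhds] with w hw
    have hle := hF_dbar w
    rwa [dbar_eq_of_eventuallyEq hw, dbar_const, norm_zero, zero_mul, norm_le_zero_iff] at hle
  obtain ⟨r, hr, hball⟩ := Metric.eventually_nhds_iff_ball.1 hF_hol
  have hFg : F =ᶠ[nhds 0] g := by
    filter_upwards [hF_mem 0 h0V, hX1] with w hw hw1
    rw [hw, hw1, one_mul]
  rw [dirDeriv, ← hFg.fderiv_eq, ← dirDeriv]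
  refine (two_pi_mul_norm_dirDeriv_le_lintegral_dbar hF_smooth hF_bdd hr hball).trans
    (lintegral_mono fun w => ENNReal.ofReal_le_ofReal ?_)
  gcongr
  exact hF_dbar w

/-- A real function on the sphere read in the chart `invStereo B`, with complex values so that
`dbar` applies to it. -/
def stereoPullback (χ : E3 → ℝ) (B : Frame) (w : ℂ) : ℂ := (χ (invStereo B w) : ℝ)

section PointwiseEstimate

variable {h : E3 → E3} {χ : E3 → ℝ} {B : Frame} {K : Set E3}

lemma contDiff_stereoPullback (hχ : ContDiff ℝ (⊤ : ℕ∞) χ) :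
    ContDiff ℝ (⊤ : ℕ∞) (stereoPullback χ B) :=
  Complex.ofRealCLM.contDiff.comp (hχ.comp (contDiff_invStereo B))

lemma norm_stereoPullback (w : ℂ) : ‖stereoPullback χ B w‖ = |χ (invStereo B w)| := by
  rw [stereoPullback, Complex.norm_real, Real.norm_eq_abs]

lemma tsupport_stereoPullback_subset (hK : IsClosed K) (hχK : ∀ y ∈ S2, y ∉ K → χ y = 0) :
    tsupport (stereoPullback χ B) ⊆ invStereo B ⁻¹' K := by
  refine closure_minimal (fun w hw => ?_) (hK.preimage (contDiff_invStereo B).continuous)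
  by_contra hwK
  exact hw (by rw [stereoPullback, hχK _ (invStereo_mem_S2 B w) hwK, Complex.ofReal_zero])

lemma stereoPullback_eventuallyEq_one (hχ1 : ∀ᶠ y in nhds (B 2), χ y = 1) :
    stereoPullback χ B =ᶠ[nhds 0] fun _ => 1 := by
  have htendsto : Tendsto (invStereo B) (nhds 0) (nhds (B 2)) := by
    rw [← invStereo_zero B]
    exact (contDiff_invStereo B).continuous.continuousAt
  filter_upwards [htendsto.eventually hχ1] with w hw
  rw [stereoPullback, hw, Complex.ofReal_one]

lemma exists_abs_mul_inv_norm_sub_le (hh : Continuous h) (hχ : Continuous χ) (hK : IsCompact K)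
    (hχK : ∀ y ∈ S2, y ∉ K → χ y = 0) {p : E3} (hpK : p ∉ h '' K) :
    ∃ M, ∀ y ∈ S2, |χ y| * ‖h y - p‖⁻¹ ≤ M := by
  have hne : ∀ y ∈ K, ‖h y - p‖ ≠ 0 := fun y hy h0 =>
    hpK ⟨y, hy, sub_eq_zero.1 (norm_eq_zero.1 h0)⟩
  obtain ⟨M, hM⟩ := hK.exists_bound_of_continuousOn (f := fun y => |χ y| * ‖h y - p‖⁻¹)
    (hχ.abs.continuousOn.mul ((hh.sub continuous_const).norm.continuousOn.inv₀ hne))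
  refine ⟨max M 0, fun y hy => ?_⟩
  by_cases hyK : y ∈ K
  · exact (le_abs_self _).trans ((hM y hyK).trans (le_max_left M 0))
  · rw [hχK y hy hyK, abs_zero, zero_mul]
    exact le_max_right M 0

lemma norm_dirDeriv_stereoRep_le_lintegral (hh : IsHarmonicSphereMap h)
    (hχ : ContDiff ℝ (⊤ : ℕ∞) χ) (hK : IsCompact K) (hχK : ∀ y ∈ S2, y ∉ K → χ y = 0)
    (hχ1 : ∀ᶠ y in nhds (B 2), χ y = 1) {p : E3} (hp : p ∈ S2) (hpK : p ∉ h '' K) :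
    ENNReal.ofReal ‖dirDeriv 1 (stereoRep h B) 0‖ ≤
      ∫⁻ w, ENNReal.ofReal (‖dbar (stereoPullback χ B) w‖ / ‖w‖ ^ 2) *
        ENNReal.ofReal ‖stereoRep h B w - p‖⁻¹ := by
  obtain ⟨T, hT⟩ := Frame.exists_apply_two_eq (mem_S2_iff.2 ((norm_neg p).trans (mem_S2_iff.1 hp)))
  set X := stereoPullback χ B
  have hX : ContDiff ℝ 1 X := (contDiff_stereoPullback hχ).of_le (by simp)
  have hX1 : X =ᶠ[nhds 0] fun _ => 1 := stereoPullback_eventuallyEq_one hχ1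
  have hXU : tsupport X ⊆ stereoDomain h B T :=
    (tsupport_stereoPullback_subset hK.isClosed hχK).trans fun w hw hwp =>
      hpK ⟨_, hw, by rwa [hT, neg_neg] at hwp⟩
  have h0 : 0 ∈ stereoDomain h B T := hXU (subset_tsupport X (by simp [hX1.self_of_nhds]))
  obtain ⟨g, hg, hhol, hg_le, hderiv⟩ := exists_dbar_eq_zero B T hh h0
  simp only [hT, ← sub_eq_add_neg] at hg_le
  obtain ⟨M, hM⟩ := exists_abs_mul_inv_norm_sub_le hh.1.1.continuous hχ.continuous hK hχK hpK
  have hbdd : ∀ w, ‖X w‖ * (2 * ‖stereoRep h B w - p‖⁻¹) ≤ 2 * M := fun w => by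
    rw [mul_left_comm, norm_stereoPullback]
    exact mul_le_mul_of_nonneg_left (hM _ (invStereo_mem_S2 B w)) two_pos.le
  have hmain := two_pi_mul_norm_dirDeriv_le_lintegral_dbar_cutoff
    (isOpen_stereoDomain B T hh.1.1) h0 hX hX1 hXU (fun w hw => (hg w hw).of_le (by simp)) hhol
    (fun w => by positivity) hg_le hbdd
  have htwo : ∀ x, (2 : ENNReal) * ENNReal.ofReal x = ENNReal.ofReal (2 * x) := fun x => by
    rw [ENNReal.ofReal_mul two_pos.le, ENNReal.ofReal_ofNat]
  refine (ENNReal.mul_le_mul_iff_right two_ne_zero ENNReal.ofNat_ne_top).1 ?_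
  calc (2 : ENNReal) * ENNReal.ofReal ‖dirDeriv 1 (stereoRep h B) 0‖
      ≤ ENNReal.ofReal (2 * π * ‖dirDeriv 1 g 0‖) := by
        rw [htwo]
        refine ENNReal.ofReal_le_ofReal ?_
        nlinarith [pi_gt_three, norm_nonneg (dirDeriv 1 g 0)]
    _ ≤ ∫⁻ w, ENNReal.ofReal (‖dbar X w‖ * (2 * ‖stereoRep h B w - p‖⁻¹) / ‖w‖ ^ 2) := hmain
    _ = 2 * ∫⁻ w, ENNReal.ofReal (‖dbar X w‖ / ‖w‖ ^ 2) *
          ENNReal.ofReal ‖stereoRep h B w - p‖⁻¹ := by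
        rw [← lintegral_const_mul' _ _ ENNReal.ofNat_ne_top]
        refine lintegral_congr fun w => ?_
        rw [← ENNReal.ofReal_mul (by positivity), htwo]
        ring_nf

lemma mul_measure_le_mul_lintegral_of_le_lintegral_inv_norm_sub {α : Type*} [MeasurableSpace α]
    {μ : Measure α} [SFinite μ] {φ : α → ENNReal} (hφ : Measurable φ) {u : α → E3}
    (hu : Measurable u) (huS : ∀ a, u a ∈ S2) {A : Set E3} (hA : MeasurableSet A) {c : ENNReal}
    (hc : ∀ p ∈ A, c ≤ ∫⁻ a, φ a * ENNReal.ofReal ‖u a - p‖⁻¹ ∂μ) :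
    c * sphVol A ≤ (∫⁻ a, φ a ∂μ) * ENNReal.ofReal 512 := by
  calc c * sphVol A = ∫⁻ _ in A, c ∂sphVol := (setLIntegral_const A c).symm
    _ ≤ ∫⁻ p in A, (∫⁻ a, φ a * ENNReal.ofReal ‖u a - p‖⁻¹ ∂μ) ∂sphVol := setLIntegral_mono' hA hc
    _ ≤ ∫⁻ p, (∫⁻ a, φ a * ENNReal.ofReal ‖u a - p‖⁻¹ ∂μ) ∂sphVol := setLIntegral_le_lintegral _ _
    _ = ∫⁻ a, φ a * (∫⁻ p, ENNReal.ofReal ‖u a - p‖⁻¹ ∂sphVol) ∂μ := by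
        rw [lintegral_lintegral_swap (by unfold Function.uncurry; fun_prop)]
        exact lintegral_congr fun a => lintegral_const_mul _ (by fun_prop)
    _ ≤ ∫⁻ a, φ a * ENNReal.ofReal 512 ∂μ := lintegral_mono fun a =>
        mul_le_mul_right (lintegral_inv_norm_sub_sphVol_le (huS a)) _
    _ = _ := lintegral_mul_const _ hφ

lemma inv_two_le_sphVol_sdiff {A : Set E3} (hA : MeasurableSet A)
    (hvol : (μH[2] : Measure E3) A ≤ (μH[2] : Measure E3) S2 / 2) :
    2⁻¹ ≤ sphVol (S2 \ A) := by
  rw [sphVol, Measure.restrict_apply (measurableSet_S2.diff hA), inter_eq_left.2 sdiff_subset]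
  calc (2⁻¹ : ENNReal) ≤ (μH[2] : Measure E3) S2 / 2 := by
        rw [ENNReal.div_eq_inv_mul]
        exact le_mul_of_one_le_right' one_le_hausdorffMeasure_S2
    _ = (μH[2] : Measure E3) S2 - (μH[2] : Measure E3) S2 / 2 :=
        (ENNReal.sub_half hausdorffMeasure_S2_ne_top).symm
    _ ≤ (μH[2] : Measure E3) S2 - (μH[2] : Measure E3) A := tsub_le_tsub_left hvol _
    _ ≤ _ := le_measure_sdiff

lemma sqrt_enDensity_le_lintegral_dbar (hh : IsHarmonicSphereMap h)
    (hχ : ContDiff ℝ (⊤ : ℕ∞) χ) (hK : IsCompact K) (hχK : ∀ y ∈ S2, y ∉ K → χ y = 0)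
    (hχ1 : ∀ᶠ y in nhds (B 2), χ y = 1)
    (hvol : (μH[2] : Measure E3) (h '' K) ≤ (μH[2] : Measure E3) S2 / 2) :
    ENNReal.ofReal √(enDensity h (B 2)) ≤
      1024 * ∫⁻ w, ENNReal.ofReal (‖dbar (stereoPullback χ B) w‖ / ‖w‖ ^ 2) := by
  have hhK : IsCompact (h '' K) := hK.image_of_continuousOn hh.1.1.continuous.continuousOn
  have hmeas : Measurable fun w => ENNReal.ofReal (‖dbar (stereoPullback χ B) w‖ / ‖w‖ ^ 2) := by
    have hdbar := (continuous_dbar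
      ((contDiff_stereoPullback (B := B) hχ).of_le (by simp))).measurable
    fun_prop
  have havg := mul_measure_le_mul_lintegral_of_le_lintegral_inv_norm_sub hmeas
    (contDiff_stereoRep B hh.1.1).continuous.measurable
    (fun w => mem_S2_iff.2 (norm_stereoRep B w hh))
    (measurableSet_S2.diff hhK.measurableSet)
    (fun p hp => norm_dirDeriv_stereoRep_le_lintegral hh hχ hK hχK hχ1 hp.1 hp.2)
  have hsqrt : √(enDensity h (B 2)) ≤ ‖dirDeriv 1 (stereoRep h B) 0‖ := by
    have henergy := two_mul_norm_dirDeriv_stereoRep_sq B 0 hh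
    rw [invStereo_zero, stereoFactor_zero] at henergy
    rw [Real.sqrt_le_left (norm_nonneg _)]
    linarith [enDensity_nonneg h (B 2)]
  calc ENNReal.ofReal √(enDensity h (B 2))
      ≤ 2 * (ENNReal.ofReal ‖dirDeriv 1 (stereoRep h B) 0‖ * 2⁻¹) := by
        rw [mul_comm, mul_assoc, ENNReal.inv_mul_cancel (by simp) (by simp), mul_one]
        exact ENNReal.ofReal_le_ofReal hsqrt
    _ ≤ 2 * ((∫⁻ w, ENNReal.ofReal (‖dbar (stereoPullback χ B) w‖ / ‖w‖ ^ 2)) *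
          ENNReal.ofReal 512) := by
        refine mul_le_mul_right (le_trans (mul_le_mul_right ?_ _) havg) 2
        exact inv_two_le_sphVol_sdiff hhK.measurableSet hvol
    _ = _ := by
        rw [mul_left_comm, mul_comm, ENNReal.ofReal_ofNat]
        norm_num

end PointwiseEstimate

/-! ### The weighted energy of a cutoff -/

lemma volume_le_hausdorffMeasure_two (s : Set ℂ) : volume s ≤ (μH[2] : Measure ℂ) s := by
  have himage := Complex.lipschitz_equivRealProd.hausdorffMeasure_image_le zero_le_two s
  rw [hausdorffMeasure_prod_real, ENNReal.coe_one, ENNReal.one_rpow, one_mul] at himage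
  rw [Equiv.image_eq_preimage_symm] at himage
  exact (Complex.volume_preserving_equiv_real_prod.symm.measure_preimage_equiv s).symm.trans_le
    himage

section Area

variable (B : Frame)

lemma volume_le_mul_hausdorffMeasure_image_invStereo {c : ℝ} (hc : 0 < c) {s : Set ℂ}
    (hs : ∀ w ∈ s, c ≤ stereoFactor w) :
    volume s ≤ ENNReal.ofReal (c⁻¹ ^ 2) * μH[2] (invStereo B '' s) := by
  have hanti : AntilipschitzWith c⁻¹.toNNReal (s.domRestrict (invStereo B)) := by
    refine AntilipschitzWith.of_le_mul_dist fun w v => ?_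
    rw [Real.coe_toNNReal _ (by positivity), le_inv_mul_iff₀ hc, Subtype.dist_eq, dist_eq_norm,
      dist_eq_norm, domRestrict_apply, domRestrict_apply]
    refine abs_le_of_sq_le_sq' ?_ (norm_nonneg _) |>.2
    rw [norm_invStereo_sub_sq, mul_pow, sq c]
    have := hs w w.2
    have := hs v v.2
    have := (stereoFactor_pos (w : ℂ)).le
    gcongr
  have hmeas := hanti.le_hausdorffMeasure_image zero_le_two univ
  rw [← isometry_subtype_coe.hausdorffMeasure_image (Or.inl zero_le_two), image_univ, image_univ,
    Subtype.range_coe, range_domRestrict, ENNReal.rpow_two] at hmeas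
  rw [ENNReal.ofReal_pow (by positivity)]
  exact (volume_le_hausdorffMeasure_two s).trans hmeas

lemma injective_invStereo : Function.Injective (invStereo B) := fun w v hwv => by
  have hsq := norm_invStereo_sub_sq B w v
  have := stereoFactor_pos w
  have := stereoFactor_pos v
  rw [hwv, sub_self, norm_zero, sq, zero_mul, eq_comm] at hsq
  simpa [this.ne', (stereoFactor_pos w).ne', sub_eq_zero] using hsq

lemma lintegral_stereoFactor_sq_le_of_forall_mem_Ioc {c : ℝ} (hc : 0 < c) {s : Set ℂ}
    (hs : MeasurableSet s) (hsc : ∀ w ∈ s, stereoFactor w ∈ Ioc c (2 * c)) :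
    ∫⁻ w in s, ENNReal.ofReal (stereoFactor w ^ 2) ≤ 4 * μH[2] (invStereo B '' s) :=
  calc ∫⁻ w in s, ENNReal.ofReal (stereoFactor w ^ 2)
    _ ≤ ∫⁻ _ in s, ENNReal.ofReal ((2 * c) ^ 2) :=
        setLIntegral_mono' hs fun w hw => ENNReal.ofReal_le_ofReal
          (pow_le_pow_left₀ (stereoFactor_pos w).le (hsc w hw).2 2)
    _ ≤ ENNReal.ofReal ((2 * c) ^ 2) *
          (ENNReal.ofReal (c⁻¹ ^ 2) * μH[2] (invStereo B '' s)) := by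
        rw [setLIntegral_const]
        gcongr
        exact volume_le_mul_hausdorffMeasure_image_invStereo B hc fun w hw => (hsc w hw).1.le
    _ = 4 * μH[2] (invStereo B '' s) := by
        rw [← mul_assoc, ← ENNReal.ofReal_mul (by positivity),
          show (4 : ENNReal) = ENNReal.ofReal 4 by norm_num]
        congr 2
        field_simp
        norm_num

lemma lintegral_stereoFactor_sq_le_hausdorffMeasure_image {A : Set ℂ} (hA : MeasurableSet A) :
    ∫⁻ w in A, ENNReal.ofReal (stereoFactor w ^ 2) ≤ 4 * μH[2] (invStereo B '' A) := by
  set f : ℕ → ℝ := fun n => 2 * (1 / 2) ^ n with hf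
  have hfanti : Antitone f := fun m n hmn =>
    mul_le_mul_of_nonneg_left (pow_le_pow_of_le_one (by norm_num) (by norm_num) hmn) zero_le_two
  set T : ℕ → Set ℂ := fun n => A ∩ stereoFactor ⁻¹' Ioc (f (n + 1)) (f n)
  have hTmeas : ∀ n, MeasurableSet (T n) := fun n =>
    hA.inter (continuous_stereoFactor.measurable measurableSet_Ioc)
  have hTdisj : Pairwise (Function.onFun Disjoint T) := fun m n hmn =>
    ((hfanti.pairwise_disjoint_on_Ioc_succ hmn).preimage stereoFactor).mono inter_subset_right
      inter_subset_right
  have hcover : A ⊆ ⋃ n, T n := fun w hw => by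
    obtain ⟨n, hlow, hupp⟩ := exists_nat_pow_near_of_lt_one (x := stereoFactor w / 2)
      (y := (1 / 2 : ℝ)) (half_pos (stereoFactor_pos w))
      ((div_le_one two_pos).2 (stereoFactor_le_two w)) (by norm_num) (by norm_num)
    exact mem_iUnion.2 ⟨n, hw, (lt_div_iff₀' two_pos).1 hlow, (div_le_iff₀' two_pos).1 hupp⟩
  have hshell : ∀ n, ∫⁻ w in T n, ENNReal.ofReal (stereoFactor w ^ 2) ≤
      4 * μH[2] (invStereo B '' T n) := fun n =>
    lintegral_stereoFactor_sq_le_of_forall_mem_Ioc B (c := f (n + 1)) (by positivity) (hTmeas n)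
      fun w hw => ⟨hw.2.1, hw.2.2.trans_eq (by simp only [hf, pow_succ]; ring)⟩
  calc ∫⁻ w in A, ENNReal.ofReal (stereoFactor w ^ 2)
    _ ≤ ∑' n, ∫⁻ w in T n, ENNReal.ofReal (stereoFactor w ^ 2) :=
        (lintegral_mono_set hcover).trans (lintegral_iUnion_le _ _)
    _ ≤ 4 * ∑' n, μH[2] (invStereo B '' T n) :=
        (ENNReal.tsum_le_tsum hshell).trans_eq ENNReal.tsum_mul_left
    _ ≤ 4 * μH[2] (invStereo B '' A) := by
        gcongr
        refine (tsum_meas_le_meas_iUnion_of_disjoint _ (fun n => ?_) fun m n hmn => ?_).trans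
          (measure_mono (iUnion_subset fun n => image_mono inter_subset_left))
        · exact (hTmeas n).image_of_continuousOn_injOn
            (contDiff_invStereo B).continuous.continuousOn (injective_invStereo B).injOn
        · exact (disjoint_image_iff (injective_invStereo B)).2 (hTdisj hmn)

lemma lintegral_stereoFactor_sq_cap_le {z : E3} (hz : z ∈ S2) {r : ℝ} (hr : 0 ≤ r) :
    ∫⁻ w in {w | ‖invStereo B w - z‖ ≤ r}, ENNReal.ofReal (stereoFactor w ^ 2) ≤
      ENNReal.ofReal (256 * r ^ 2) := by
  have hcont : Continuous fun w => ‖invStereo B w - z‖ :=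
    ((contDiff_invStereo B).continuous.sub continuous_const).norm
  have himage : invStereo B '' {w | ‖invStereo B w - z‖ ≤ r} ⊆ S2 ∩ closedBall z r := by
    rintro _ ⟨w, hw, rfl⟩
    exact ⟨invStereo_mem_S2 B w, mem_closedBall_iff_norm.2 hw⟩
  calc ∫⁻ w in {w | ‖invStereo B w - z‖ ≤ r}, ENNReal.ofReal (stereoFactor w ^ 2)
    _ ≤ 4 * μH[2] (invStereo B '' {w | ‖invStereo B w - z‖ ≤ r}) :=
        lintegral_stereoFactor_sq_le_hausdorffMeasure_image B
          (measurableSet_le hcont.measurable measurable_const)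
    _ ≤ 4 * ENNReal.ofReal (64 * r ^ 2) := by
        gcongr
        exact (measure_mono himage).trans (hausdorffMeasure_S2_inter_closedBall_le hz hr)
    _ = ENNReal.ofReal (256 * r ^ 2) := by
        rw [show (4 : ENNReal) = ENNReal.ofReal 4 by norm_num, ← ENNReal.ofReal_mul (by norm_num)]
        congr 1; ring

lemma lintegral_mul_stereoFactor_div_norm_sq_le {q : E3 → ℝ} {z : E3} (hz : z ∈ S2) {A D G : ℝ}
    (hA : 0 ≤ A) (hD : 0 < D) (hG : 0 ≤ G) (hq : ∀ y ∈ S2, q y ≤ G)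
    (hsupp : ∀ y ∈ S2, q y ≠ 0 → ‖y - z‖ ≤ A ∧ D ≤ ‖y - B 2‖) :
    ∫⁻ w, ENNReal.ofReal (q (invStereo B w) * stereoFactor w / ‖w‖ ^ 2) ≤
      ENNReal.ofReal (512 * (G * A ^ 2 / D ^ 2)) := by
  set cap : Set ℂ := {w | ‖invStereo B w - z‖ ≤ A}
  have hcap : MeasurableSet cap := measurableSet_le
    ((contDiff_invStereo B).continuous.sub continuous_const).norm.measurable measurable_const
  have hpoint : ∀ w, ENNReal.ofReal (q (invStereo B w) * stereoFactor w / ‖w‖ ^ 2) ≤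
      cap.indicator (fun w => ENNReal.ofReal (2 * G / D ^ 2) *
        ENNReal.ofReal (stereoFactor w ^ 2)) w := fun w => by
    by_cases h0 : q (invStereo B w) = 0
    · simp [h0]
    obtain ⟨hzw, hDw⟩ := hsupp _ (invStereo_mem_S2 B w) h0
    rw [indicator_of_mem (show w ∈ cap from hzw), ← ENNReal.ofReal_mul (by positivity)]
    refine ENNReal.ofReal_le_ofReal ?_
    have hfac := stereoFactor_pos w
    have hDsq : D ^ 2 ≤ 2 * stereoFactor w * ‖w‖ ^ 2 := by
      rw [← norm_invStereo_sub_apply_two_sq]; gcongr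
    have hw : 0 < ‖w‖ ^ 2 := pos_of_mul_pos_right ((pow_pos hD 2).trans_le hDsq) (by positivity)
    rw [div_le_iff₀ hw]
    calc q (invStereo B w) * stereoFactor w
      _ ≤ G * stereoFactor w := by gcongr; exact hq _ (invStereo_mem_S2 B w)
      _ ≤ G * stereoFactor w * (2 * stereoFactor w * ‖w‖ ^ 2 / D ^ 2) :=
          le_mul_of_one_le_right (by positivity) ((one_le_div (by positivity)).2 hDsq)
      _ = 2 * G / D ^ 2 * stereoFactor w ^ 2 * ‖w‖ ^ 2 := by ring
  calc ∫⁻ w, ENNReal.ofReal (q (invStereo B w) * stereoFactor w / ‖w‖ ^ 2)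
    _ ≤ ENNReal.ofReal (2 * G / D ^ 2) * ∫⁻ w in cap, ENNReal.ofReal (stereoFactor w ^ 2) := by
        rw [← lintegral_const_mul' _ _ ENNReal.ofReal_ne_top, ← lintegral_indicator hcap]
        exact lintegral_mono hpoint
    _ ≤ ENNReal.ofReal (2 * G / D ^ 2) * ENNReal.ofReal (256 * A ^ 2) := by
        gcongr; exact lintegral_stereoFactor_sq_cap_le B hz hA
    _ = ENNReal.ofReal (512 * (G * A ^ 2 / D ^ 2)) := by
        rw [← ENNReal.ofReal_mul (by positivity)]; congr 1; ring

lemma norm_dbar_stereoPullback_le {χ : E3 → ℝ} (w : ℂ) (hχ : DifferentiableAt ℝ χ (invStereo B w)) :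
    ‖dbar (stereoPullback χ B) w‖ ≤ 2 * (‖fderiv ℝ χ (invStereo B w)‖ * stereoFactor w) := by
  have hfderiv : HasFDerivAt (stereoPullback χ B) (Complex.ofRealCLM.comp
      ((fderiv ℝ χ (invStereo B w)).comp (fderiv ℝ (invStereo B) w))) w :=
    Complex.ofRealCLM.hasFDerivAt.comp w (hχ.hasFDerivAt.comp w
      ((contDiff_invStereo B).differentiable (by simp) w).hasFDerivAt)
  have hdir : ∀ v : ℂ, ‖v‖ = 1 → ‖dirDeriv v (stereoPullback χ B) w‖ ≤
      ‖fderiv ℝ χ (invStereo B w)‖ * stereoFactor w := fun v hv => by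
    rw [dirDeriv, hfderiv.fderiv, ContinuousLinearMap.comp_apply, Complex.ofRealCLM_apply,
      Complex.norm_real, ContinuousLinearMap.comp_apply]
    refine (ContinuousLinearMap.le_opNorm _ _).trans_eq ?_
    rw [norm_fderiv_invStereo_apply, hv, mul_one]
  rw [dbar]
  refine (norm_add_le _ _).trans ?_
  rw [norm_mul, Complex.norm_I, one_mul]
  linarith [hdir 1 norm_one, hdir Complex.I Complex.norm_I]

end Area

section ProductOfCutoffs

lemma norm_fderiv_finsetProd_le {E ι : Type*} [NormedAddCommGroup E] [NormedSpace ℝ E]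
    {s : Finset ι} {χ : ι → E → ℝ} {y : E} (hχ : ∀ i ∈ s, DifferentiableAt ℝ (χ i) y)
    (h01 : ∀ i ∈ s, χ i y ∈ Icc 0 1) :
    ‖fderiv ℝ (fun y => ∏ i ∈ s, χ i y) y‖ ≤ ∑ i ∈ s, ‖fderiv ℝ (χ i) y‖ := by
  classical
  rw [HasFDerivAt.fderiv (HasFDerivAt.finsetProd fun i hi => (hχ i hi).hasFDerivAt)]
  refine (norm_sum_le _ _).trans (Finset.sum_le_sum fun i _ => ?_)
  have herase : ∀ j ∈ s.erase i, χ j y ∈ Icc 0 1 := fun j hj => h01 j (Finset.mem_of_mem_erase hj)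
  rw [norm_smul, Real.norm_of_nonneg (Finset.prod_nonneg fun j hj => (herase j hj).1)]
  exact mul_le_of_le_one_left (norm_nonneg _)
    (Finset.prod_le_one (fun j hj => (herase j hj).1) fun j hj => (herase j hj).2)

variable {ι : Type*} [Fintype ι] {h : E3 → E3} {χ : ι → E3 → ℝ} {z : ι → E3} {A D G : ι → ℝ}

lemma lintegral_dbar_stereoPullback_prod_le (B : Frame) (hχ : ∀ i, ContDiff ℝ (⊤ : ℕ∞) (χ i))
    (h01 : ∀ i y, χ i y ∈ Icc 0 1) (hz : ∀ i, z i ∈ S2) (hA : ∀ i, 0 ≤ A i) (hD : ∀ i, 0 < D i)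
    (hG : ∀ i, 0 ≤ G i) (hbound : ∀ i, ∀ y ∈ S2, ‖fderiv ℝ (χ i) y‖ ≤ G i)
    (hsupp : ∀ i, ∀ y ∈ S2, fderiv ℝ (χ i) y ≠ 0 → ‖y - z i‖ ≤ A i ∧ D i ≤ ‖y - B 2‖) :
    ∫⁻ w, ENNReal.ofReal (‖dbar (stereoPullback (fun y => ∏ i, χ i y) B) w‖ / ‖w‖ ^ 2) ≤
      ENNReal.ofReal (1024 * ∑ i, G i * A i ^ 2 / D i ^ 2) := by
  set q : ι → E3 → ℝ := fun i y => ‖fderiv ℝ (χ i) y‖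
  have hdiff : ∀ i, Differentiable ℝ (χ i) := fun i => (hχ i).differentiable (by simp)
  have htwo : ∀ x : ℝ, (2 : ENNReal) * ENNReal.ofReal x = ENNReal.ofReal (2 * x) := fun x => by
    rw [ENNReal.ofReal_mul zero_le_two, ENNReal.ofReal_ofNat]
  have hpoint : ∀ w, ENNReal.ofReal
      (‖dbar (stereoPullback (fun y => ∏ i, χ i y) B) w‖ / ‖w‖ ^ 2) ≤
      2 * ∑ i, ENNReal.ofReal (q i (invStereo B w) * stereoFactor w / ‖w‖ ^ 2) := fun w => by
    have hfac := (stereoFactor_pos w).le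
    rw [← ENNReal.ofReal_sum_of_nonneg fun i _ => by positivity, htwo]
    refine ENNReal.ofReal_le_ofReal ?_
    rw [← Finset.sum_div, ← Finset.sum_mul, ← mul_div_assoc]
    gcongr
    refine (norm_dbar_stereoPullback_le B w
      ((contDiff_prod fun i _ => hχ i).differentiable (by simp) _)).trans ?_
    gcongr
    exact norm_fderiv_finsetProd_le (fun i _ => hdiff i _) fun i _ => h01 i _
  have hmeas : ∀ i, Measurable fun w =>
      ENNReal.ofReal (q i (invStereo B w) * stereoFactor w / ‖w‖ ^ 2) := fun i =>
    (((((hχ i).continuous_fderiv (by simp)).comp (contDiff_invStereo B).continuous).norm.mul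
      continuous_stereoFactor).measurable.div (measurable_norm.pow_const 2)).ennreal_ofReal
  calc ∫⁻ w, ENNReal.ofReal (‖dbar (stereoPullback (fun y => ∏ i, χ i y) B) w‖ / ‖w‖ ^ 2)
    _ ≤ 2 * ∑ i, ∫⁻ w, ENNReal.ofReal (q i (invStereo B w) * stereoFactor w / ‖w‖ ^ 2) := by
        rw [← lintegral_finsetSum _ fun i _ => hmeas i, ← lintegral_const_mul' _ _ (by simp)]
        exact lintegral_mono hpoint
    _ ≤ 2 * ∑ i, ENNReal.ofReal (512 * (G i * A i ^ 2 / D i ^ 2)) := by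
        gcongr with i _
        exact lintegral_mul_stereoFactor_div_norm_sq_le B (hz i) (hA i) (hD i) (hG i) (hbound i)
          fun y hy hne => hsupp i y hy (norm_ne_zero_iff.1 hne)
    _ = ENNReal.ofReal (1024 * ∑ i, G i * A i ^ 2 / D i ^ 2) := by
        have hterm : ∀ i ∈ Finset.univ, 0 ≤ 512 * (G i * A i ^ 2 / D i ^ 2) := fun i _ => by
          have := hG i
          positivity
        rw [← ENNReal.ofReal_sum_of_nonneg hterm, htwo, ← Finset.mul_sum]
        congr 1; ring

theorem sqrt_enDensity_le_sum (hh : IsHarmonicSphereMap h) {x : E3} (hx : x ∈ S2)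
    (hχ : ∀ i, ContDiff ℝ (⊤ : ℕ∞) (χ i)) (h01 : ∀ i y, χ i y ∈ Icc 0 1) {K : Set E3}
    (hK : IsCompact K) (hχK : ∀ y ∈ S2, y ∉ K → ∃ i, χ i y = 0)
    (hχ1 : ∀ i, ∀ᶠ y in nhds x, χ i y = 1)
    (hvol : (μH[2] : Measure E3) (h '' K) ≤ (μH[2] : Measure E3) S2 / 2)
    (hz : ∀ i, z i ∈ S2) (hA : ∀ i, 0 ≤ A i) (hD : ∀ i, 0 < D i) (hG : ∀ i, 0 ≤ G i)
    (hbound : ∀ i, ∀ y ∈ S2, ‖fderiv ℝ (χ i) y‖ ≤ G i)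
    (hsupp : ∀ i, ∀ y ∈ S2, fderiv ℝ (χ i) y ≠ 0 → ‖y - z i‖ ≤ A i ∧ D i ≤ ‖y - x‖) :
    √(enDensity h x) ≤ 2 ^ 20 * ∑ i, G i * A i ^ 2 / D i ^ 2 := by
  obtain ⟨B, rfl⟩ := Frame.exists_apply_two_eq hx
  have hsum : 0 ≤ ∑ i, G i * A i ^ 2 / D i ^ 2 := Finset.sum_nonneg fun i _ => by
    have := hG i
    positivity
  rw [← ENNReal.ofReal_le_ofReal_iff (by positivity)]
  calc ENNReal.ofReal √(enDensity h (B 2))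
    _ ≤ 1024 * ∫⁻ w, ENNReal.ofReal
          (‖dbar (stereoPullback (fun y => ∏ i, χ i y) B) w‖ / ‖w‖ ^ 2) := by
        refine sqrt_enDensity_le_lintegral_dbar hh (contDiff_prod fun i _ => hχ i) hK
          (fun y hy hyK => ?_) ?_ hvol
        · obtain ⟨i, hi⟩ := hχK y hy hyK
          exact Finset.prod_eq_zero (Finset.mem_univ i) hi
        · filter_upwards [eventually_all.2 hχ1] with y hy
          exact Finset.prod_eq_one fun i _ => hy i
    _ ≤ 1024 * ENNReal.ofReal (1024 * ∑ i, G i * A i ^ 2 / D i ^ 2) := by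
        gcongr
        exact lintegral_dbar_stereoPullback_prod_le B hχ h01 hz hA hD hG hbound hsupp
    _ = ENNReal.ofReal (2 ^ 20 * ∑ i, G i * A i ^ 2 / D i ^ 2) := by
        rw [show (1024 : ENNReal) = ENNReal.ofReal 1024 by norm_num,
          ← ENNReal.ofReal_mul (by norm_num)]
        congr 1; ring

end ProductOfCutoffs

/-! ### The conformal factor of a dilation -/

section Mobius

lemma exists_ne_zero_inner_eq_zero {E : Type*} [NormedAddCommGroup E] [InnerProductSpace ℝ E]
    (hE : 2 < Module.finrank ℝ E) (x y : E) : ∃ v : E, v ≠ 0 ∧ ⟪x, v⟫ = 0 ∧ ⟪y, v⟫ = 0 := by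
  have : FiniteDimensional ℝ E := Module.finite_of_finrank_pos (by lia)
  have hker : ((innerₛₗ ℝ x).prod (innerₛₗ ℝ y)).ker ≠ ⊥ :=
    LinearMap.ker_ne_bot_of_finrank_lt (by simpa using hE)
  obtain ⟨v, hv, hv0⟩ := Submodule.exists_mem_ne_zero_of_ne_bot hker
  exact ⟨v, hv0, congrArg Prod.fst (LinearMap.mem_ker.1 hv),
    congrArg Prod.snd (LinearMap.mem_ker.1 hv)⟩

variable {x z v : E3}

lemma fderiv_homExt_apply_of_inner_eq_zero {u : E3 → E3} (hu : DifferentiableAt ℝ u x)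
    (hx : x ∈ S2) (hv : ⟪x, v⟫ = 0) : fderiv ℝ (homExt u) x v = fderiv ℝ u x v := by
  have hx1 := mem_S2_iff.1 hx
  set proj : E3 → E3 := fun y => ‖y‖⁻¹ • y
  have hproj : DifferentiableAt ℝ proj x :=
    ((differentiableAt_id.norm ℝ (ne_zero_of_mem_S2 hx)).inv (by simp [hx1])).smul
      differentiableAt_id
  have hprojx : proj x = x := by simp [proj, hx1]
  have hline : HasDerivAt (fun s : ℝ => x + s • v) v 0 := by
    simpa using ((hasDerivAt_id (0 : ℝ)).smul_const v).const_add x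
  have hinv : HasDerivAt (fun s : ℝ => ‖x + s • v‖⁻¹) 0 0 := by
    simpa [hx1, hv] using (hline.norm_sq.sqrt (by simp [hx1])).fun_inv (by simp [hx1])
  have hprojv : fderiv ℝ proj x v = v :=
    HasLineDerivAt.unique (hproj.hasFDerivAt.hasLineDerivAt v) (by
      have hsmul := hinv.fun_smul hline
      simp only [zero_smul, add_zero, hx1, inv_one, one_smul] at hsmul
      exact hsmul)
  have hchain := fderiv_comp (g := u) x (by rwa [hprojx]) hproj
  rw [hprojx] at hchain
  exact (congrArg (· v) hchain).trans (congrArg (fderiv ℝ u x) hprojv)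

lemma differentiableAt_mobius {μ : ℝ} (hD : (1 + ⟪x, z⟫) + μ ^ 2 * (1 - ⟪x, z⟫) ≠ 0) :
    DifferentiableAt ℝ (mobius z μ) x := by
  have hinner : DifferentiableAt ℝ (fun y => ⟪y, z⟫) x :=
    differentiableAt_id.inner ℝ (differentiableAt_const z)
  unfold mobius
  exact (((hinner.const_add 1).add ((hinner.const_sub 1).const_mul _)).inv hD).smul
    ((((hinner.const_add 1).sub ((hinner.const_sub 1).const_mul _)).smul_const z).add
      ((differentiableAt_fun_id.fun_sub (hinner.smul_const z)).fun_const_smul _))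

lemma fderiv_mobius_apply_of_inner_eq_zero {μ : ℝ}
    (hD : (1 + ⟪x, z⟫) + μ ^ 2 * (1 - ⟪x, z⟫) ≠ 0) (hv : ⟪z, v⟫ = 0) :
    fderiv ℝ (mobius z μ) x v =
      (2 * μ / ((1 + ⟪x, z⟫) + μ ^ 2 * (1 - ⟪x, z⟫))) • v := by
  have hinner : ∀ s : ℝ, ⟪x + s • v, z⟫ = ⟪x, z⟫ := fun s => by
    rw [inner_add_left, real_inner_smul_left, real_inner_comm z v, hv, mul_zero, add_zero]
  have hline : HasDerivAt (fun s : ℝ => x + s • v) v 0 := by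
    simpa using ((hasDerivAt_id (0 : ℝ)).smul_const v).const_add x
  refine HasLineDerivAt.unique
    ((differentiableAt_mobius hD).hasFDerivAt.hasLineDerivAt v) ?_
  simp only [HasLineDerivAt, mobius, hinner]
  rw [div_eq_inv_mul, mul_smul]
  exact (((hline.sub_const (⟪x, z⟫ • z)).fun_const_smul (2 * μ)).const_add _).fun_const_smul
    ((1 + ⟪x, z⟫) + μ ^ 2 * (1 - ⟪x, z⟫))⁻¹

lemma sq_le_enDensity_mobius (hx : x ∈ S2) {μ : ℝ}
    (hD : (1 + ⟪x, z⟫) + μ ^ 2 * (1 - ⟪x, z⟫) ≠ 0) :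
    (2 * μ / ((1 + ⟪x, z⟫) + μ ^ 2 * (1 - ⟪x, z⟫))) ^ 2 ≤ enDensity (mobius z μ) x := by
  obtain ⟨v, hv, hxv, hzv⟩ := exists_ne_zero_inner_eq_zero (E := E3) (by simp) x z
  have hle := sq_norm_fderiv_homExt_apply_le (mobius z μ) x v
  rw [fderiv_homExt_apply_of_inner_eq_zero (differentiableAt_mobius hD) hx hxv,
    fderiv_mobius_apply_of_inner_eq_zero hD hzv, norm_smul, mul_pow, Real.norm_eq_abs,
    sq_abs] at hle
  exact le_of_mul_le_mul_right hle (by positivity)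

lemma rhoSq_nonneg (z : E3) (R : ℝ) (x : E3) : 0 ≤ rhoSq z R x := by
  unfold rhoSq confSq
  split_ifs
  · exact mul_nonneg (by norm_num) (enDensity_nonneg _ _)
  · exact zero_le_one

lemma mul_norm_add_sq_add_norm_sub_sq_pos (hx : x ∈ S2) (z : E3) {τ : ℝ} (hτ : 0 < τ) :
    0 < τ ^ 2 * ‖x + z‖ ^ 2 + ‖x - z‖ ^ 2 := by
  rcases eq_or_ne x z with rfl | hne
  · have : x + x ≠ 0 := by simpa [← two_smul ℝ x] using ne_zero_of_mem_S2 hx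
    positivity
  · have := sub_ne_zero.2 hne
    positivity

lemma norm_add_sq_le_four_of_mem_S2 (hx : x ∈ S2) (hz : z ∈ S2) : ‖x + z‖ ^ 2 ≤ 4 := by
  linarith [norm_sub_sq_of_mem_S2 hx hz, norm_add_sq_of_mem_S2 hx hz, sq_nonneg ‖x - z‖]

lemma sq_le_two_mul_rhoSq (hx : x ∈ S2) (hz : z ∈ S2) {R : ℝ} (hR : 0 < R) (hR' : R < π / 2) :
    (4 * tan (R / 2) / (tan (R / 2) ^ 2 * ‖x + z‖ ^ 2 + ‖x - z‖ ^ 2)) ^ 2 ≤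
      2 * rhoSq z R x := by
  have hτ : 0 < tan (R / 2) := tan_pos_of_pos_of_lt_pi_div_two (by linarith) (by linarith)
  have hpos := mul_norm_add_sq_add_norm_sub_sq_pos hx z hτ
  have hD : (1 + ⟪x, z⟫) + (tan (R / 2))⁻¹ ^ 2 * (1 - ⟪x, z⟫) =
      (tan (R / 2) ^ 2 * ‖x + z‖ ^ 2 + ‖x - z‖ ^ 2) / (2 * tan (R / 2) ^ 2) := by
    rw [norm_sub_sq_of_mem_S2 hx hz, norm_add_sq_of_mem_S2 hx hz]
    field_simp
  have hle := sq_le_enDensity_mobius (z := z) (μ := (tan (R / 2))⁻¹) hx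
    (by rw [hD]; positivity)
  rw [rhoSq, if_pos hR', confSq, ← mul_assoc, mul_one_div_cancel two_ne_zero, one_mul]
  refine le_of_eq_of_le ?_ hle
  rw [hD]
  congr 1
  field_simp
  norm_num

end Mobius

/-! ### Geodesic balls -/

section GeodesicBall

variable {x y z : E3} {R : ℝ}

lemma norm_sub_eq_two_mul_sin_gdist (hx : x ∈ S2) (hy : y ∈ S2) :
    ‖x - y‖ = 2 * sin (gdist x y / 2) := by
  have hsin : 0 ≤ sin (gdist x y / 2) := sin_nonneg_of_nonneg_of_le_pi
    (div_nonneg (arccos_nonneg _) two_pos.le)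
    ((half_le_self (arccos_nonneg _)).trans (arccos_le_pi _))
  have hcos : cos (gdist x y) = ⟪x, y⟫ := by
    apply cos_arccos <;>
      nlinarith [norm_sub_sq_of_mem_S2 hx hy, norm_add_sq_of_mem_S2 hx hy, sq_nonneg ‖x - y‖,
        sq_nonneg ‖x + y‖]
  rw [← sq_eq_sq₀ (norm_nonneg _) (by positivity), norm_sub_sq_of_mem_S2 hx hy, ← hcos, mul_pow,
    sin_sq_eq_half_sub, mul_div_cancel₀ _ two_ne_zero]
  ring

lemma norm_sub_le_gdist (hx : x ∈ S2) (hy : y ∈ S2) : ‖x - y‖ ≤ gdist x y := by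
  have := sin_le (x := gdist x y / 2) (div_nonneg (arccos_nonneg _) two_pos.le)
  linarith [norm_sub_eq_two_mul_sin_gdist hx hy]

lemma gdist_le_two_mul_norm_sub (hx : x ∈ S2) (hy : y ∈ S2) : gdist x y ≤ 2 * ‖x - y‖ := by
  have h0 : 0 ≤ gdist x y := arccos_nonneg _
  have hπ : gdist x y ≤ π := arccos_le_pi _
  have hjordan := mul_le_sin (x := gdist x y / 2) (by linarith) (by linarith)
  have htwo : 1 / 2 ≤ 2 / π := by
    rw [div_le_div_iff₀ two_pos pi_pos]
    linarith [pi_le_four]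
  rw [norm_sub_eq_two_mul_sin_gdist hx hy]
  nlinarith

lemma norm_sub_lt_of_mem_gBall (hz : z ∈ S2) (hR : R ≤ π) (hy : y ∈ gBall z R) :
    ‖y - z‖ < 2 * sin (R / 2) := by
  have h0 : 0 ≤ gdist z y := arccos_nonneg _
  rw [norm_sub_rev, norm_sub_eq_two_mul_sin_gdist hz hy.1]
  gcongr
  exact sin_lt_sin_of_lt_of_le_pi_div_two (by linarith [pi_pos]) (by linarith)
    (by linarith [hy.2])

lemma le_pi_div_four_of_notMem_gBall (hx : x ∈ S2) (h : x ∉ gBall z (4 * R)) : R ≤ π / 4 := by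
  have hdist : 4 * R ≤ gdist z x := not_lt.1 fun hlt => h ⟨hx, hlt⟩
  have hπ : gdist z x ≤ π := arccos_le_pi _
  linarith

lemma four_mul_sin_le_norm_sub_of_notMem_gBall (hx : x ∈ S2) (hz : z ∈ S2) (hR : 0 < R)
    (h : x ∉ gBall z (4 * R)) : 4 * sin (R / 2) ≤ ‖x - z‖ := by
  have hR4 := le_pi_div_four_of_notMem_gBall hx h
  have hdist : 4 * R ≤ gdist z x := not_lt.1 fun hlt => h ⟨hx, hlt⟩
  have hπ : gdist z x ≤ π := arccos_le_pi _
  have hsin : 0 ≤ sin (R / 2) := sin_nonneg_of_nonneg_of_le_pi (by linarith) (by linarith)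
  have hmono : sin (2 * R) ≤ sin (gdist z x / 2) :=
    sin_le_sin_of_le_of_le_pi_div_two (by linarith) (by linarith) (by linarith)
  have hcosR : √2 / 2 ≤ cos R := by
    rw [← cos_pi_div_four]
    exact cos_le_cos_of_nonneg_of_le_pi hR.le (by linarith [pi_pos]) hR4
  have hcos : √2 / 2 ≤ cos (R / 2) := hcosR.trans
    (cos_le_cos_of_nonneg_of_le_pi (by linarith) (by linarith [pi_pos]) (by linarith))
  have hhalf : 1 / 2 ≤ cos (R / 2) * cos R := calc
    (1 : ℝ) / 2 = √2 / 2 * (√2 / 2) := by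
      rw [div_mul_div_comm, mul_self_sqrt two_pos.le]
      norm_num
    _ ≤ _ := by gcongr; exact (by positivity : (0 : ℝ) ≤ √2 / 2).trans hcos
  have hdouble : sin (2 * R) = 4 * sin (R / 2) * (cos (R / 2) * cos R) := by
    rw [sin_two_mul, show sin R = sin (2 * (R / 2)) by ring_nf, sin_two_mul]
    ring
  rw [norm_sub_rev, norm_sub_eq_two_mul_sin_gdist hz hx]
  nlinarith

lemma sq_le_two_mul_rhoSq_of_notMem_gBall (hx : x ∈ S2) (hz : z ∈ S2) (hR : 0 < R)
    (h : x ∉ gBall z (4 * R)) :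
    (2 * sin (R / 2) / ‖x - z‖ ^ 2) ^ 2 ≤ 2 * rhoSq z R x := by
  have hR4 := le_pi_div_four_of_notMem_gBall hx h
  have hfar := four_mul_sin_le_norm_sub_of_notMem_gBall hx hz hR h
  have hs : 0 < sin (R / 2) := sin_pos_of_pos_of_lt_pi (by linarith) (by linarith [pi_pos])
  have hcos : 1 / 2 ≤ cos (R / 2) := by
    rw [← cos_pi_div_three]
    exact cos_le_cos_of_nonneg_of_le_pi (by linarith) (by linarith [pi_pos])
      (by linarith [pi_pos])
  have hτ_ge : sin (R / 2) ≤ tan (R / 2) := by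
    rw [tan_eq_sin_div_cos, le_div_iff₀ (by linarith)]
    nlinarith [cos_le_one (R / 2)]
  have hτ_le : tan (R / 2) ≤ 2 * sin (R / 2) := by
    rw [tan_eq_sin_div_cos, div_le_iff₀ (by linarith)]
    nlinarith
  refine le_trans ?_ (sq_le_two_mul_rhoSq hx hz hR (by linarith [pi_pos]))
  have hxz : 0 < ‖x - z‖ := by linarith
  have hden : tan (R / 2) ^ 2 * ‖x + z‖ ^ 2 + ‖x - z‖ ^ 2 ≤ 2 * ‖x - z‖ ^ 2 := by
    have hadd := norm_add_sq_le_four_of_mem_S2 hx hz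
    calc _ ≤ (2 * sin (R / 2)) ^ 2 * 4 + ‖x - z‖ ^ 2 := by gcongr; linarith
      _ = (4 * sin (R / 2)) ^ 2 + ‖x - z‖ ^ 2 := by ring
      _ ≤ ‖x - z‖ ^ 2 + ‖x - z‖ ^ 2 := by gcongr
      _ = _ := by ring
  calc _ = (4 * sin (R / 2) / (2 * ‖x - z‖ ^ 2)) ^ 2 := by field_simp; norm_num
    _ ≤ _ := by gcongr; linarith

lemma tan_half_mem_Icc (hR : 0 < R) (hR' : R < π / 2) : tan (R / 2) ∈ Icc (R / 2) R := by
  have hcos : 1 / 2 ≤ cos (R / 2) := by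
    rw [← cos_pi_div_three]
    exact cos_le_cos_of_nonneg_of_le_pi (by linarith) (by linarith [pi_pos])
      (by linarith [pi_pos])
  refine ⟨le_tan (by linarith) (by linarith), ?_⟩
  rw [tan_eq_sin_div_cos, div_le_iff₀ (by linarith)]
  nlinarith [sin_le (x := R / 2) (by linarith)]

lemma inv_sq_le_rhoSq_of_mem_gBall (hz : z ∈ S2) {d : ℝ} (hR : 0 < R)
    (h : x ∈ gBall z (d⁻¹ * R)) : R⁻¹ ^ 2 ≤ (4 + d⁻¹ ^ 2) ^ 2 * rhoSq z R x := by
  have hx : x ∈ S2 := h.1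
  have hone : 1 ≤ 4 + d⁻¹ ^ 2 := by nlinarith [sq_nonneg d⁻¹]
  rcases le_or_gt (π / 2) R with hR2 | hR2
  · rw [rhoSq, if_neg hR2.not_gt, mul_one]
    gcongr
    exact (inv_le_one_of_one_le₀ (by linarith [pi_gt_three])).trans hone
  have hnorm : ‖x - z‖ ≤ d⁻¹ * R := by
    rw [norm_sub_rev]
    exact (norm_sub_le_gdist hz hx).trans h.2.le
  obtain ⟨hτ_ge, hτ_le⟩ := tan_half_mem_Icc hR hR2
  have hτ : 0 < tan (R / 2) := by linarith
  have hpos := mul_norm_add_sq_add_norm_sub_sq_pos hx z hτ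
  have hden : tan (R / 2) ^ 2 * ‖x + z‖ ^ 2 + ‖x - z‖ ^ 2 ≤ (4 + d⁻¹ ^ 2) * R ^ 2 := by
    have hadd := norm_add_sq_le_four_of_mem_S2 hx hz
    calc _ ≤ R ^ 2 * 4 + (d⁻¹ * R) ^ 2 := by gcongr
      _ = _ := by ring
  calc R⁻¹ ^ 2 ≤ 2 * R⁻¹ ^ 2 := by linarith [sq_nonneg R⁻¹]
    _ = ((4 + d⁻¹ ^ 2) * (4 * (R / 2) / ((4 + d⁻¹ ^ 2) * R ^ 2))) ^ 2 / 2 := by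
      field_simp
      norm_num
    _ ≤ ((4 + d⁻¹ ^ 2) * (4 * tan (R / 2) /
          (tan (R / 2) ^ 2 * ‖x + z‖ ^ 2 + ‖x - z‖ ^ 2))) ^ 2 / 2 := by gcongr
    _ ≤ (4 + d⁻¹ ^ 2) ^ 2 * rhoSq z R x := by
      rw [mul_pow]
      nlinarith [sq_le_two_mul_rhoSq hx hz hR hR2]

end GeodesicBall

/-! ### Radial cutoff functions -/

section Cutoff

lemma deriv_smoothTransition_eq_zero {t : ℝ} (ht : t ∉ Icc 0 1) :
    deriv Real.smoothTransition t = 0 := by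
  rcases lt_or_ge t 0 with h0 | h0
  · have : Real.smoothTransition =ᶠ[nhds t] fun _ => 0 := by
      filter_upwards [Iio_mem_nhds h0] with s hs using Real.smoothTransition.zero_of_nonpos hs.le
    rw [this.deriv_eq, deriv_const]
  · have : Real.smoothTransition =ᶠ[nhds t] fun _ => 1 := by
      filter_upwards [Ioi_mem_nhds (not_le.1 fun h1 => ht ⟨h0, h1⟩)] with s hs
        using Real.smoothTransition.one_of_one_le (le_of_lt hs)
    rw [this.deriv_eq, deriv_const]

lemma exists_abs_deriv_smoothTransition_le :
    ∃ K : ℝ, 0 < K ∧ ∀ t, |deriv Real.smoothTransition t| ≤ K := by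
  have hcont : Continuous (deriv Real.smoothTransition) :=
    (Real.smoothTransition.contDiff (n := 1)).continuous_deriv (by simp)
  obtain ⟨K, hK⟩ := hcont.bounded_above_of_compact_support
    (.intro isCompact_Icc fun _ => deriv_smoothTransition_eq_zero)
  exact ⟨max K 1, by positivity, fun t => (hK t).trans (le_max_left _ _)⟩

variable {E : Type*} [NormedAddCommGroup E] {y z : E} {a : ℝ}

/-- The smooth radial function that vanishes on the closed ball of radius `a` about `z` and equals
`1` at distance at least `3 a / 2` from `z`. -/
def cutoff (z : E) (a : ℝ) (y : E) : ℝ := Real.smoothTransition (‖y - z‖ ^ 2 / a ^ 2 - 1)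

lemma cutoff_mem_Icc (z : E) (a : ℝ) (y : E) : cutoff z a y ∈ Icc 0 1 :=
  ⟨Real.smoothTransition.nonneg _, Real.smoothTransition.le_one _⟩

lemma cutoff_eq_zero (ha : 0 < a) (hy : ‖y - z‖ ≤ a) : cutoff z a y = 0 := by
  apply Real.smoothTransition.zero_of_nonpos
  rw [sub_nonpos, div_le_one (by positivity)]
  gcongr

lemma cutoff_eq_one (ha : 0 < a) (hy : 3 / 2 * a ≤ ‖y - z‖) : cutoff z a y = 1 := by
  apply Real.smoothTransition.one_of_one_le
  have hsq : (3 / 2 * a) ^ 2 ≤ ‖y - z‖ ^ 2 := by gcongr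
  rw [le_sub_iff_add_le, le_div_iff₀ (by positivity)]
  nlinarith

lemma cutoff_eventuallyEq_zero (ha : 0 < a) (hy : ‖y - z‖ < a) :
    cutoff z a =ᶠ[nhds y] fun _ => 0 := by
  filter_upwards [(continuous_id.sub continuous_const).norm.continuousAt.eventually_lt
    continuousAt_const hy] with w hw using cutoff_eq_zero ha hw.le

lemma cutoff_eventuallyEq_one (ha : 0 < a) (hy : 3 / 2 * a < ‖y - z‖) :
    cutoff z a =ᶠ[nhds y] fun _ => 1 := by
  filter_upwards [continuousAt_const.eventually_lt
    (continuous_id.sub continuous_const).norm.continuousAt hy] with w hw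
    using cutoff_eq_one ha hw.le

variable [InnerProductSpace ℝ E]

lemma contDiff_cutoff (z : E) (a : ℝ) : ContDiff ℝ (⊤ : ℕ∞) (cutoff z a) :=
  Real.smoothTransition.contDiff.comp
    ((((contDiff_id.sub contDiff_const).norm_sq ℝ).div_const _).sub contDiff_const)

lemma norm_sub_mem_Icc_of_fderiv_cutoff_ne_zero (ha : 0 < a) (hy : fderiv ℝ (cutoff z a) y ≠ 0) :
    ‖y - z‖ ∈ Icc a (3 / 2 * a) := by
  constructor
  · by_contra! hlt
    exact hy (by rw [(cutoff_eventuallyEq_zero ha hlt).fderiv_eq, fderiv_fun_const]; rfl)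
  · by_contra! hlt
    exact hy (by rw [(cutoff_eventuallyEq_one ha hlt).fderiv_eq, fderiv_fun_const]; rfl)

lemma norm_fderiv_cutoff (z : E) (a : ℝ) (y : E) : ‖fderiv ℝ (cutoff z a) y‖ =
    |deriv Real.smoothTransition (‖y - z‖ ^ 2 / a ^ 2 - 1)| * (2 * ‖y - z‖ / a ^ 2) := by
  have hinner : HasFDerivAt (fun w : E => ‖w - z‖ ^ 2 / a ^ 2 - 1)
      ((a ^ 2)⁻¹ • 2 • innerSL ℝ (y - z)) y := by
    simpa [div_eq_inv_mul] using
      ((((hasFDerivAt_id y).sub_const z).norm_sq).const_mul (a ^ 2)⁻¹).sub_const 1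
  have houter : HasDerivAt Real.smoothTransition _ (‖y - z‖ ^ 2 / a ^ 2 - 1) :=
    (Real.smoothTransition.contDiff (n := 1)).differentiable (by simp) _ |>.hasDerivAt
  have hcomp : HasFDerivAt (cutoff z a) _ y := houter.comp_hasFDerivAt y hinner
  rw [hcomp.fderiv, norm_smul, norm_smul, ← Nat.cast_smul_eq_nsmul ℝ, norm_smul,
    innerSL_apply_norm, norm_inv, Real.norm_eq_abs, Real.norm_of_nonneg (sq_nonneg a),
    Real.norm_natCast, Nat.cast_ofNat]
  ring

lemma exists_norm_fderiv_cutoff_le :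
    ∃ K : ℝ, 0 < K ∧ ∀ (z y : E) (a : ℝ), 0 < a → ‖fderiv ℝ (cutoff z a) y‖ ≤ K / a := by
  obtain ⟨K, hK, hbound⟩ := exists_abs_deriv_smoothTransition_le
  refine ⟨3 * K, by positivity, fun z y a ha => ?_⟩
  rcases eq_or_ne (fderiv ℝ (cutoff z a) y) 0 with h0 | h0
  · rw [h0, norm_zero]
    positivity
  calc _ ≤ K * (2 * (3 / 2 * a) / a ^ 2) := by
        rw [norm_fderiv_cutoff]
        gcongr
        exacts [hbound _, (norm_sub_mem_Icc_of_fderiv_cutoff_ne_zero ha h0).2]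
    _ = 3 * K / a := by field_simp

end Cutoff

/-! ### Localized cutoffs on the sphere -/

/-- The set `Z` is cut off from the point `x` at cost `q`: some smooth `χ` vanishes on `Z`, equals
`1` near `x`, and its gradient, of size at most `G`, lives at distance at most `A` from a centre `z`
and at least `D` from `x`, where `(G A² / D²)² ≤ q`. The number `G A² / D²` is the weight with which
`χ` enters `sqrt_enDensity_le_sum`. -/
def IsCutOffFrom (x : E3) (Z : Set E3) (q : ℝ) : Prop :=
  ∃ (χ : E3 → ℝ) (z : E3) (A D G : ℝ), ContDiff ℝ (⊤ : ℕ∞) χ ∧ (∀ y, χ y ∈ Icc 0 1) ∧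
    (∀ y ∈ Z, χ y = 0) ∧ (∀ᶠ y in nhds x, χ y = 1) ∧ z ∈ S2 ∧ 0 ≤ A ∧ 0 < D ∧ 0 ≤ G ∧
    (∀ y ∈ S2, ‖fderiv ℝ χ y‖ ≤ G) ∧
    (∀ y ∈ S2, fderiv ℝ χ y ≠ 0 → ‖y - z‖ ≤ A ∧ D ≤ ‖y - x‖) ∧ (G * A ^ 2 / D ^ 2) ^ 2 ≤ q

lemma enDensity_le_of_isCutOffFrom {ι : Type*} [Fintype ι] {h : E3 → E3}
    (hh : IsHarmonicSphereMap h) {x : E3} (hx : x ∈ S2) {Z : ι → Set E3} {q : ι → ℝ}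
    (hcut : ∀ i, IsCutOffFrom x (Z i) (q i)) {K : Set E3} (hK : IsCompact K)
    (hZK : ∀ y ∈ S2, y ∉ K → ∃ i, y ∈ Z i)
    (hvol : (μH[2] : Measure E3) (h '' K) ≤ (μH[2] : Measure E3) S2 / 2) :
    enDensity h x ≤ (2 ^ 20) ^ 2 * (Fintype.card ι * ∑ i, q i) := by
  choose χ z A D G hχ h01 hχ0 hχ1 hz hA hD hG hbound hsupp hq using hcut
  have hsqrt := sqrt_enDensity_le_sum hh hx hχ h01 hK
    (fun y hy hyK => (hZK y hy hyK).imp fun i hi => hχ0 i y hi) hχ1 hvol hz hA hD hG hbound hsupp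
  calc enDensity h x = √(enDensity h x) ^ 2 := (sq_sqrt (enDensity_nonneg h x)).symm
    _ ≤ (2 ^ 20 * ∑ i, G i * A i ^ 2 / D i ^ 2) ^ 2 := by gcongr
    _ = (2 ^ 20) ^ 2 * (∑ i, G i * A i ^ 2 / D i ^ 2) ^ 2 := mul_pow _ _ _
    _ ≤ (2 ^ 20) ^ 2 * (Fintype.card ι * ∑ i, (G i * A i ^ 2 / D i ^ 2) ^ 2) := by
        gcongr
        exact sq_sum_le_card_mul_sum_sq
    _ ≤ (2 ^ 20) ^ 2 * (Fintype.card ι * ∑ i, q i) := by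
        gcongr with i
        exact hq i

lemma exists_isCutOffFrom_gBall : ∃ C : ℝ, 0 < C ∧ ∀ (x z : E3) (R : ℝ), x ∈ S2 → z ∈ S2 → 0 < R →
    x ∉ gBall z (4 * R) → IsCutOffFrom x (gBall z R) (C * rhoSq z R x) := by
  obtain ⟨K, hK, hbound⟩ := exists_norm_fderiv_cutoff_le (E := E3)
  refine ⟨2 * (36 * K) ^ 2, by positivity, fun x z R hx hz hR hxz => ?_⟩
  have hR4 := le_pi_div_four_of_notMem_gBall hx hxz
  have hfar := four_mul_sin_le_norm_sub_of_notMem_gBall hx hz hR hxz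
  have hrho := sq_le_two_mul_rhoSq_of_notMem_gBall hx hz hR hxz
  have hball : ∀ y ∈ gBall z R, ‖y - z‖ < 2 * sin (R / 2) := fun y hy =>
    norm_sub_lt_of_mem_gBall hz (by linarith [pi_pos]) hy
  have ha : 0 < 2 * sin (R / 2) :=
    mul_pos two_pos (sin_pos_of_pos_of_lt_pi (by linarith) (by linarith [pi_pos]))
  set a := 2 * sin (R / 2)
  have hdist : 0 < ‖x - z‖ := by linarith
  refine ⟨cutoff z a, z, 3 / 2 * a, ‖x - z‖ / 4, K / a, contDiff_cutoff z a, cutoff_mem_Icc z a,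
    fun y hy => cutoff_eq_zero ha (hball y hy).le, cutoff_eventuallyEq_one ha (by linarith), hz,
    by positivity, by positivity, by positivity, fun y _ => hbound z y a ha, fun y _ hy => ?_, ?_⟩
  · have hyz := norm_sub_mem_Icc_of_fderiv_cutoff_ne_zero ha hy
    have htri := norm_sub_le_norm_sub_add_norm_sub x y z
    rw [norm_sub_rev x y] at htri
    exact ⟨hyz.2, by linarith [hyz.2]⟩
  · calc (K / a * (3 / 2 * a) ^ 2 / (‖x - z‖ / 4) ^ 2) ^ 2
      _ = (36 * K) ^ 2 * (a / ‖x - z‖ ^ 2) ^ 2 := by field_simp; norm_num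
      _ ≤ (36 * K) ^ 2 * (2 * rhoSq z R x) := by gcongr
      _ = _ := by ring

lemma exists_isCutOffFrom_far {d : ℝ} (hd : 0 < d) : ∃ C : ℝ, 0 < C ∧ ∀ (x z : E3) (R : ℝ),
    z ∈ S2 → 0 < R → x ∈ gBall z (d⁻¹ * R) →
    IsCutOffFrom x (closedBall x (d * R / 4))ᶜ (C * rhoSq z R x) := by
  obtain ⟨K, hK, hbound⟩ := exists_norm_fderiv_cutoff_le (E := E3)
  refine ⟨(18 * K / d) ^ 2 * (4 + d⁻¹ ^ 2) ^ 2, by positivity, fun x z R hz hR hxz => ?_⟩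
  set a := d * R / 8 with ha_def
  have ha : 0 < a := by positivity
  refine ⟨fun y => 1 - cutoff x a y, x, 3 / 2 * a, a, K / a,
    contDiff_const.sub (contDiff_cutoff x a), fun y => ?_, fun y hy => ?_, ?_, hxz.1,
    by positivity, ha, by positivity, fun y _ => ?_, fun y _ hy => ?_, ?_⟩
  · exact ⟨sub_nonneg.2 (cutoff_mem_Icc x a y).2, sub_le_self _ (cutoff_mem_Icc x a y).1⟩
  · rw [mem_compl_iff, mem_closedBall_iff_norm, not_le] at hy
    simp only [cutoff_eq_one ha (by linarith : 3 / 2 * a ≤ ‖y - x‖), sub_self]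
  · filter_upwards [cutoff_eventuallyEq_zero (z := x) ha (by simpa using ha)] with y hy
    rw [hy, sub_zero]
  · rw [fderiv_const_sub, norm_neg]
    exact hbound x y a ha
  · rw [fderiv_const_sub, neg_ne_zero] at hy
    exact (norm_sub_mem_Icc_of_fderiv_cutoff_ne_zero ha hy).symm
  · calc (K / a * (3 / 2 * a) ^ 2 / a ^ 2) ^ 2
      _ = (18 * K / d) ^ 2 * R⁻¹ ^ 2 := by rw [ha_def]; field_simp; norm_num
      _ ≤ (18 * K / d) ^ 2 * ((4 + d⁻¹ ^ 2) ^ 2 * rhoSq z R x) := by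
        gcongr
        exact inv_sq_le_rhoSq_of_mem_gBall hz hR hxz
      _ = _ := by ring

/-! ### The two regions of the sphere -/

lemma isOpen_setOf_gdist_lt (z : E3) (R : ℝ) : IsOpen {y | gdist z y < R} :=
  isOpen_lt (continuous_arccos.comp (continuous_const.inner continuous_id)) continuous_const

lemma measurableSet_gBall (z : E3) (R : ℝ) : MeasurableSet (gBall z R) :=
  measurableSet_S2.inter (isOpen_setOf_gdist_lt z R).measurableSet

lemma isCompact_sdiff_iUnion_gBall {ι : Type*} {L : Set E3} (hL : IsCompact L) (hLS : L ⊆ S2)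
    (z : ι → E3) (R : ι → ℝ) : IsCompact (L \ ⋃ i, gBall (z i) (R i)) := by
  have heq : L \ ⋃ i, gBall (z i) (R i) = L \ ⋃ i, {y | gdist (z i) y < R i} := by
    ext y
    exact and_congr_right fun hy => not_congr <| by
      simp only [mem_iUnion]
      exact exists_congr fun i => and_iff_right (hLS hy)
  rw [heq]
  exact hL.diff (isOpen_iUnion fun i => isOpen_setOf_gdist_lt _ _)

lemma hausdorffMeasure_image_le_half {h : E3 → E3} (hh : IsHarmonicSphereMap h) {K : Set E3}
    (hK : MeasurableSet K) (hKS : K ⊆ S2)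
    (hE : energyOn h K ≤ ((μH[2] : Measure E3) S2).toReal / 4) :
    (μH[2] : Measure E3) (h '' K) ≤ (μH[2] : Measure E3) S2 / 2 := by
  refine (hausdorffMeasure_image_le_of_energyOn_le hh.1.1 hK hKS hE).trans_eq ?_
  rw [show 2 * (((μH[2] : Measure E3) S2).toReal / 4) =
      ((μH[2] : Measure E3) S2 / 2).toReal by rw [ENNReal.toReal_div, ENNReal.toReal_ofNat]; ring]
  exact ENNReal.ofReal_toReal (ENNReal.div_ne_top hausdorffMeasure_S2_ne_top two_ne_zero)

lemma exists_enDensity_le_of_notMem_gBall : ∃ C : ℝ, 0 < C ∧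
    ∀ {ι : Type*} [Fintype ι] {h : E3 → E3} {z : ι → E3} {R : ι → ℝ} {x : E3},
      IsHarmonicSphereMap h → (∀ i, z i ∈ S2 ∧ 0 < R i) →
      energyOn h (S2 \ ⋃ i, gBall (z i) (R i)) ≤ ((μH[2] : Measure E3) S2).toReal / 4 →
      x ∈ S2 \ ⋃ i, gBall (z i) (4 * R i) →
      enDensity h x ≤ C * (Fintype.card ι * ∑ i, rhoSq (z i) (R i) x) := by
  obtain ⟨C, hC, hcut⟩ := exists_isCutOffFrom_gBall
  refine ⟨(2 ^ 20) ^ 2 * C, by positivity, fun {ι _ h z R x} hh hz hE ⟨hx, hxR⟩ => ?_⟩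
  have hK := isCompact_sdiff_iUnion_gBall isCompact_S2 subset_rfl z R
  calc enDensity h x ≤ (2 ^ 20) ^ 2 * (Fintype.card ι * ∑ i, C * rhoSq (z i) (R i) x) :=
        enDensity_le_of_isCutOffFrom hh hx
          (fun i => hcut x (z i) (R i) hx (hz i).1 (hz i).2 fun hi => hxR (mem_iUnion_of_mem i hi))
          hK (fun y hy hyK => mem_iUnion.1 (not_not.1 fun hy' => hyK ⟨hy, hy'⟩))
          (hausdorffMeasure_image_le_half hh hK.measurableSet sdiff_subset hE)
    _ = _ := by rw [← Finset.mul_sum]; ring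

lemma inter_closedBall_subset_gBall {x : E3} (hx : x ∈ S2) {r : ℝ} (hr : 0 < r) :
    S2 ∩ closedBall x (r / 4) ⊆ gBall x r := by
  rintro y ⟨hy, hyx⟩
  rw [mem_closedBall', dist_eq_norm] at hyx
  exact ⟨hy, by linarith [gdist_le_two_mul_norm_sub hx hy]⟩

lemma exists_enDensity_le_of_mem_gBall {d : ℝ} (hd : 0 < d) : ∃ C : ℝ, 0 < C ∧
    ∀ {ι : Type*} [Fintype ι] {h : E3 → E3} {z₀ : E3} {R₀ : ℝ} {z : ι → E3} {R : ι → ℝ} {x : E3},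
      IsHarmonicSphereMap h → z₀ ∈ S2 → 0 < R₀ → (∀ i, z i ∈ S2 ∧ 0 < R i) →
      energyOn h (gBall x (d * R₀) \ ⋃ i, gBall (z i) (R i)) ≤
        ((μH[2] : Measure E3) S2).toReal / 4 →
      x ∈ gBall z₀ (d⁻¹ * R₀) → x ∉ ⋃ i, gBall (z i) (4 * R i) →
      enDensity h x ≤ C * ((Fintype.card ι + 1) * (rhoSq z₀ R₀ x + ∑ i, rhoSq (z i) (R i) x)) := by
  obtain ⟨C, hC, hcut⟩ := exists_isCutOffFrom_gBall
  obtain ⟨C₀, hC₀, hcut₀⟩ := exists_isCutOffFrom_far hd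
  refine ⟨(2 ^ 20) ^ 2 * (C₀ + C), by positivity,
    fun {ι _ h z₀ R₀ z R x} hh hz₀ hR₀ hz hE hx₀ hxR => ?_⟩
  have hx : x ∈ S2 := hx₀.1
  have hK := isCompact_sdiff_iUnion_gBall (isCompact_S2.inter_right
    (isClosed_closedBall (x := x) (ε := d * R₀ / 4))) inter_subset_left z R
  have hvol := (measure_mono (image_mono (sdiff_subset_sdiff_left
      (inter_closedBall_subset_gBall hx (mul_pos hd hR₀))))).trans <|
    hausdorffMeasure_image_le_half hh
      ((measurableSet_gBall _ _).diff (.iUnion fun i => measurableSet_gBall _ _))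
      (fun y hy => hy.1.1) hE
  have hrho : 0 ≤ ∑ i, rhoSq (z i) (R i) x := Finset.sum_nonneg fun i _ => rhoSq_nonneg _ _ _
  have hrho₀ := rhoSq_nonneg z₀ R₀ x
  calc enDensity h x
    _ ≤ (2 ^ 20) ^ 2 * (Fintype.card (Option ι) * ∑ o : Option ι,
          o.elim (C₀ * rhoSq z₀ R₀ x) fun i => C * rhoSq (z i) (R i) x) := by
      refine enDensity_le_of_isCutOffFrom hh hx
        (Z := fun o => o.elim (closedBall x (d * R₀ / 4))ᶜ fun i => gBall (z i) (R i))
        (Option.rec (hcut₀ x z₀ R₀ hz₀ hR₀ hx₀) fun i =>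
          hcut x (z i) (R i) hx (hz i).1 (hz i).2 fun hi => hxR (mem_iUnion_of_mem i hi))
        hK (fun y hy hyK => ?_) hvol
      by_cases hyx : y ∈ closedBall x (d * R₀ / 4)
      · obtain ⟨i, hi⟩ := mem_iUnion.1 (not_not.1 fun hy' => hyK ⟨⟨hy, hyx⟩, hy'⟩)
        exact ⟨some i, hi⟩
      · exact ⟨none, hyx⟩
    _ = (2 ^ 20) ^ 2 * ((Fintype.card ι + 1) *
          (C₀ * rhoSq z₀ R₀ x + C * ∑ i, rhoSq (z i) (R i) x)) := by
      rw [Fintype.card_option, Fintype.sum_option, Finset.mul_sum, Nat.cast_succ]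
      rfl
    _ ≤ (2 ^ 20) ^ 2 * ((Fintype.card ι + 1) *
          ((C₀ + C) * rhoSq z₀ R₀ x + (C₀ + C) * ∑ i, rhoSq (z i) (R i) x)) := by
      gcongr <;> linarith
    _ = _ := by ring

theorem statement5_general :
    ∃ ε₁ : ℝ, 0 < ε₁ ∧ ∀ d : ℝ, 0 < d → ∃ C : ℝ, 0 < C ∧
      ∀ h : E3 → E3, IsHarmonicSphereMap h →
      ∀ {ι₁ ι₂ : Type*} [Fintype ι₁] [Fintype ι₂] (z₁ : ι₁ → E3) (R₁ : ι₁ → ℝ)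
        (z₂ : ι₂ → E3) (R₂ : ι₂ → ℝ),
        (∀ i, z₁ i ∈ S2 ∧ 0 < R₁ i) → (∀ i, z₂ i ∈ S2 ∧ 0 < R₂ i) →
        energyOn h (S2 \ ((⋃ i, gBall (z₁ i) (R₁ i)) ∪ ⋃ i, gBall (z₂ i) (R₂ i))) ≤ 2 * ε₁ →
        (∀ x ∈ ⋃ i, gBall (z₁ i) (4 * R₁ i), ∃ j,
          x ∈ gBall (z₁ j) (d⁻¹ * R₁ j) ∧
          energyOn h (gBall x (d * R₁ j) \ ⋃ i, gBall (z₂ i) (R₂ i)) ≤ 2 * ε₁) →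
        ∀ x ∈ S2 \ ⋃ i, gBall (z₂ i) (4 * R₂ i),
          enDensity h x ≤ C * ((Fintype.card ι₁ + Fintype.card ι₂) *
            ((∑ i, rhoSq (z₁ i) (R₁ i) x) + ∑ i, rhoSq (z₂ i) (R₂ i) x)) := by
  have hσ : 0 < ((μH[2] : Measure E3) S2).toReal := ENNReal.toReal_pos
    (zero_lt_one.trans_le one_le_hausdorffMeasure_S2).ne' hausdorffMeasure_S2_ne_top
  refine ⟨((μH[2] : Measure E3) S2).toReal / 8, by positivity, fun d hd => ?_⟩
  rw [show 2 * (((μH[2] : Measure E3) S2).toReal / 8) = ((μH[2] : Measure E3) S2).toReal / 4 by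
    ring]
  obtain ⟨C₁, hC₁, houter⟩ := exists_enDensity_le_of_notMem_gBall
  obtain ⟨C₂, hC₂, hinner⟩ := exists_enDensity_le_of_mem_gBall hd
  refine ⟨C₁ + C₂, by positivity,
    fun h hh {ι₁ ι₂ _ _ z₁ R₁ z₂ R₂} hz₁ hz₂ ha hc x ⟨hx, hx₂⟩ => ?_⟩
  have hρ₁ : ∀ i, 0 ≤ rhoSq (z₁ i) (R₁ i) x := fun i => rhoSq_nonneg _ _ _
  have hρ₂ : 0 ≤ ∑ i, rhoSq (z₂ i) (R₂ i) x := Finset.sum_nonneg fun i _ => rhoSq_nonneg _ _ _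
  have hsum : 0 ≤ ∑ i, rhoSq (z₁ i) (R₁ i) x := Finset.sum_nonneg fun i _ => hρ₁ i
  have hC₁₂ : C₁ ≤ C₁ + C₂ := by linarith
  have hC₂₁ : C₂ ≤ C₁ + C₂ := by linarith
  by_cases hx₁ : x ∈ ⋃ i, gBall (z₁ i) (4 * R₁ i)
  · obtain ⟨j, hj, hE⟩ := hc x hx₁
    have hcard : (1 : ℝ) ≤ Fintype.card ι₁ := by
      exact_mod_cast Fintype.card_pos_iff.2 ⟨j⟩
    have hle : rhoSq (z₁ j) (R₁ j) x ≤ ∑ i, rhoSq (z₁ i) (R₁ i) x :=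
      Finset.single_le_sum (f := fun i => rhoSq (z₁ i) (R₁ i) x) (fun i _ => hρ₁ i)
        (Finset.mem_univ j)
    have hj₀ := add_nonneg (hρ₁ j) hρ₂
    refine (hinner hh (hz₁ j).1 (hz₁ j).2 hz₂ hE hj hx₂).trans ?_
    rw [add_comm (Fintype.card ι₁ : ℝ)]
    gcongr
  · have hmain := houter (z := Sum.elim z₁ z₂) (R := Sum.elim R₁ R₂) (x := x) hh
      (Sum.rec hz₁ hz₂) (by simpa only [iUnion_sum, Sum.elim_inl, Sum.elim_inr] using ha)
      ⟨hx, by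
        rw [iUnion_sum]
        exact not_or.2 ⟨hx₁, hx₂⟩⟩
    simp only [Fintype.card_sum, Fintype.sum_sum_type, Nat.cast_add, Sum.elim_inl,
      Sum.elim_inr] at hmain
    refine hmain.trans ?_
    gcongr

/-- Lemma 2.3 / `lemma:rational`: pointwise control of the energy density
of a rational map whose energy is captured by two collections of balls. -/
theorem statement5 (k : ℕ) (hk : 1 ≤ k) :
    ∃ ε₁ : ℝ, 0 < ε₁ ∧
      ∀ d : ℝ, 0 < d →
        ∃ C : ℝ, 0 < C ∧
          ∀ h : E3 → E3, IsHarmonicSphereMap h → |sphDeg h| ≤ k →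
          ∀ (n₁ n₂ : ℕ) (z₁ : Fin n₁ → E3) (R₁ : Fin n₁ → ℝ)
            (z₂ : Fin n₂ → E3) (R₂ : Fin n₂ → ℝ),
            1 ≤ n₁ → n₁ + n₂ ≤ k →
            (∀ i, z₁ i ∈ S2 ∧ 0 < R₁ i) → (∀ i, z₂ i ∈ S2 ∧ 0 < R₂ i) →
            -- (a) most of the energy is contained in the union of the balls
            energyOn h (S2 \ ((⋃ i, gBall (z₁ i) (R₁ i)) ∪ ⋃ i, gBall (z₂ i) (R₂ i)))
                ≤ 2 * ε₁ →
            -- (b) small energy on the annuli around the second collection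
            (∀ i, energyOn h (gBall (z₂ i) (2 * R₂ i) \ gBall (z₂ i) (R₂ i)) ≤ 2 * ε₁) →
            -- (c) local smallness of the energy near the first collection
            (∀ x ∈ ⋃ i, gBall (z₁ i) (4 * R₁ i), ∃ j : Fin n₁,
                x ∈ gBall (z₁ j) (d⁻¹ * R₁ j) ∧
                energyOn h (gBall x (d * R₁ j) \ ⋃ i, gBall (z₂ i) (R₂ i)) ≤ 2 * ε₁) →
            -- conclusion: pointwise bound on the energy density
            ∀ x ∈ S2 \ ⋃ i, gBall (z₂ i) (4 * R₂ i),
              enDensity h x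
                ≤ C * ((∑ i, rhoSq (z₁ i) (R₁ i) x) + ∑ i, rhoSq (z₂ i) (R₂ i) x) := by
  obtain ⟨ε₁, hε₁, hmain⟩ := statement5_general
  refine ⟨ε₁, hε₁, fun d hd => ?_⟩
  obtain ⟨C, hC, hbound⟩ := hmain d hd
  refine ⟨C * k, by positivity, fun h hh _ n₁ n₂ z₁ R₁ z₂ R₂ _ hn hz₁ hz₂ ha _ hc x hx => ?_⟩
  have hcard : (n₁ + n₂ : ℝ) ≤ k := by exact_mod_cast hn
  have hρ₁ : 0 ≤ ∑ i, rhoSq (z₁ i) (R₁ i) x := Finset.sum_nonneg fun i _ => rhoSq_nonneg _ _ _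
  have hρ₂ : 0 ≤ ∑ i, rhoSq (z₂ i) (R₂ i) x := Finset.sum_nonneg fun i _ => rhoSq_nonneg _ _ _
  refine (hbound h hh z₁ R₁ z₂ R₂ hz₁ hz₂ ha hc x hx).trans ?_
  rw [Fintype.card_fin, Fintype.card_fin, mul_assoc]
  gcongr
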